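/- arXiv:1509.04900 — 10 statements merged into one kernel-verified Lean document; each statement's English description precedes it below -/
import Mathlib

section
/- Let β ∈ (1,2) be the largest positive root of x⁴ − 2x³ + x − 1 = 0 (β ≈ 1.8668). Then dim_H(U_β) = log G / log β, where G = (1+√5)/2 is the golden mean. -/
/-- The value `Σ_{n≥1} a_n β^{-n}` of a digit sequence (indexed from 0, so `a i = a_{i+1}`). -/
noncomputable def betaVal (β : ℝ) (a : ℕ → ℕ) : ℝ := ∑' n : ℕ, (a n : ℝ) / β ^ (n + 1)

/-- `Ũ_β`: the set of 0-1 sequences that are the unique β-expansion of their value. -/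
def UTilde (β : ℝ) : Set (ℕ → ℕ) :=
  {a | (∀ n, a n ≤ 1) ∧
    ∀ b : ℕ → ℕ, (∀ n, b n ≤ 1) → betaVal β b = betaVal β a → b = a}

/-- The word `w` occurs in the sequence `x` starting at position `n`. -/
def OccursAt (w : List ℕ) (x : ℕ → ℕ) (n : ℕ) : Prop :=
  ∀ i : Fin w.length, x (n + i.1) = w.get i

/-- `Y` is a subshift of finite type inside the ambient full shift `{0,1}^ℕ`: there is a
finite set `F` of forbidden words such that `Y` consists exactly of the 0-1 sequences in
which no word of `F` occurs. -/
def IsSFT01 (Y : Set (ℕ → ℕ)) : Prop :=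
  ∃ F : Set (List ℕ), F.Finite ∧
    Y = {x | (∀ n, x n ≤ 1) ∧ ∀ w ∈ F, ∀ n, ¬ OccursAt w x n}

/-- Strict lexicographic order on sequences. -/
def LexLt (a b : ℕ → ℕ) : Prop :=
  ∃ n, (∀ k < n, a k = b k) ∧ a n < b n

/-- `η` is the quasi-greedy expansion of `1` in base `β`: the lexicographically largest
0-1 sequence with infinitely many digits `1` whose value is `1`. -/
def QuasiGreedy (β : ℝ) (η : ℕ → ℕ) : Prop :=
  (∀ n, η n ≤ 1) ∧ (∀ N, ∃ n ≥ N, η n = 1) ∧ betaVal β η = 1 ∧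
    ∀ ζ : ℕ → ℕ, (∀ n, ζ n ≤ 1) → (∀ N, ∃ n ≥ N, ζ n = 1) →
      betaVal β ζ = 1 → ζ ≠ η → LexLt ζ η

/-- The univoque set `U_β`: points of `[0, 1/(β-1)]` with a unique β-expansion. -/
def Uset (β : ℝ) : Set ℝ :=
  {x | x ∈ Set.Icc 0 (1 / (β - 1)) ∧
    ∃! a : ℕ → ℕ, (∀ n, a n ≤ 1) ∧ betaVal β a = x}


namespace Stmt7

def Dig (a : ℕ → ℕ) : Prop := ∀ n, a n ≤ 1

def tl (a : ℕ → ℕ) (k : ℕ) : ℕ → ℕ := fun n => a (n + k)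

def cmp (a : ℕ → ℕ) : ℕ → ℕ := fun n => 1 - a n

def Good (a : ℕ → ℕ) : Prop := Dig a ∧ ∀ n, ¬ (a n = a (n + 1) ∧ a (n + 1) = a (n + 2))

lemma Dig.tl {a : ℕ → ℕ} (h : Dig a) (k : ℕ) : Dig (tl a k) := fun n => h (n + k)

lemma Dig.cmp (a : ℕ → ℕ) : Dig (cmp a) := fun _ => Nat.sub_le _ _

lemma Dig.zero_or {a : ℕ → ℕ} (h : Dig a) (k : ℕ) : a k = 0 ∨ a k = 1 := by
  have := h k; omega

lemma Good.tl {a : ℕ → ℕ} (h : Good a) (k : ℕ) : Good (tl a k) := by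
  refine ⟨h.1.tl k, fun n hn => h.2 (n + k) ?_⟩
  have e1 : n + k + 1 = n + 1 + k := by omega
  have e2 : n + k + 2 = n + 2 + k := by omega
  rw [e1, e2]
  exact hn

lemma Good.cmp {a : ℕ → ℕ} (h : Good a) : Good (cmp a) := by
  refine ⟨Dig.cmp a, fun n hn => h.2 n ?_⟩
  have h0 := h.1 n
  have h1 := h.1 (n + 1)
  have h2 := h.1 (n + 2)
  simp only [Stmt7.cmp] at hn
  omega

lemma geom_sum {β : ℝ} (hβ : 1 < β) :
    HasSum (fun n : ℕ => (1 : ℝ) / β ^ (n + 1)) (1 / (β - 1)) := by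
  have h0 : (0 : ℝ) < β := by linarith
  have h := (hasSum_geometric_of_lt_one (r := β⁻¹) (by positivity)
    (inv_lt_one_of_one_lt₀ hβ)).mul_left β⁻¹
  have e1 : (fun n : ℕ => (1 : ℝ) / β ^ (n + 1)) = fun n => β⁻¹ * β⁻¹ ^ n := by
    funext n
    rw [pow_succ, inv_pow]
    field_simp
  have e2 : 1 / (β - 1) = β⁻¹ * (1 - β⁻¹)⁻¹ := by
    have h2 : β - 1 ≠ 0 := by linarith
    have h3 : 1 - β⁻¹ = (β - 1) / β := by field_simp
    rw [h3]
    field_simp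
  rw [e1, e2]
  exact h

lemma summ {β : ℝ} (hβ : 1 < β) {a : ℕ → ℕ} (ha : Dig a) :
    Summable (fun n : ℕ => (a n : ℝ) / β ^ (n + 1)) := by
  have h0 : (0 : ℝ) < β := by linarith
  refine Summable.of_nonneg_of_le (fun n => by positivity) (fun n => ?_) (geom_sum hβ).summable
  have : (a n : ℝ) ≤ 1 := by exact_mod_cast ha n
  gcongr

lemma val_nonneg {β : ℝ} (hβ : 1 < β) (a : ℕ → ℕ) : 0 ≤ betaVal β a := by
  have h0 : (0 : ℝ) < β := by linarith
  exact tsum_nonneg (fun n => by positivity)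

lemma val_le {β : ℝ} (hβ : 1 < β) {a : ℕ → ℕ} (ha : Dig a) : betaVal β a ≤ 1 / (β - 1) := by
  have h0 : (0 : ℝ) < β := by linarith
  rw [← (geom_sum hβ).tsum_eq]
  refine (summ hβ ha).tsum_le_tsum (fun n => ?_) (geom_sum hβ).summable
  have : (a n : ℝ) ≤ 1 := by exact_mod_cast ha n
  gcongr

lemma val_cmp {β : ℝ} (hβ : 1 < β) {a : ℕ → ℕ} (ha : Dig a) :
    betaVal β (cmp a) = 1 / (β - 1) - betaVal β a := by
  rw [← (geom_sum hβ).tsum_eq, betaVal, betaVal,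
    ← (geom_sum hβ).summable.tsum_sub (summ hβ ha)]
  congr 1
  funext n
  simp only [cmp]
  rw [Nat.cast_sub (ha n)]
  push_cast
  ring

lemma val_succ {β : ℝ} (hβ : 1 < β) {a : ℕ → ℕ} (ha : Dig a) :
    betaVal β a = (a 0 + betaVal β (tl a 1)) / β := by
  have h0 : (0 : ℝ) < β := by linarith
  rw [betaVal, (summ hβ ha).tsum_eq_zero_add, add_div, betaVal, ← tsum_div_const]
  congr 1
  · simp
  · congr 1
    funext n
    simp only [tl]
    rw [pow_succ β (n + 1)]
    field_simp

lemma tl_tl (a : ℕ → ℕ) (j k : ℕ) : tl (tl a j) k = tl a (j + k) := by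
  funext n
  simp only [tl]
  congr 1
  omega

lemma val_tl {β : ℝ} (hβ : 1 < β) {a : ℕ → ℕ} (ha : Dig a) (k : ℕ) :
    betaVal β (tl a k) = (a k + betaVal β (tl a (k + 1))) / β := by
  rw [val_succ hβ (ha.tl k), tl_tl]
  simp [tl]

lemma val_split {β : ℝ} (hβ : 1 < β) {a : ℕ → ℕ} (ha : Dig a) (N : ℕ) :
    betaVal β a = (∑ i ∈ Finset.range N, (a i : ℝ) / β ^ (i + 1)) + betaVal β (tl a N) / β ^ N := by
  have h0 : (0 : ℝ) < β := by linarith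
  induction N with
  | zero =>
    have : tl a 0 = a := rfl
    simp [this]
  | succ N ih =>
    rw [ih, Finset.sum_range_succ, val_tl hβ ha N, pow_succ]
    field_simp
    ring

lemma val_diff {β : ℝ} (hβ : 1 < β) {a b : ℕ → ℕ} (ha : Dig a) (hb : Dig b) (N : ℕ)
    (h : ∀ i < N, a i = b i) :
    betaVal β a - betaVal β b = (betaVal β (tl a N) - betaVal β (tl b N)) / β ^ N := by
  rw [val_split hβ ha N, val_split hβ hb N]
  have : ∑ i ∈ Finset.range N, (a i : ℝ) / β ^ (i + 1)
      = ∑ i ∈ Finset.range N, (b i : ℝ) / β ^ (i + 1) :=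
    Finset.sum_congr rfl (fun i hi => by rw [h i (Finset.mem_range.1 hi)])
  rw [this]
  ring

/-! ### greedy expansions -/

noncomputable def gr (β y : ℝ) : ℕ → ℝ
  | 0 => y
  | n + 1 => if 1 ≤ β * gr β y n then β * gr β y n - 1 else β * gr β y n

noncomputable def gd (β y : ℝ) (n : ℕ) : ℕ := if 1 ≤ β * gr β y n then 1 else 0

lemma gd_dig (β y : ℝ) : Dig (gd β y) := fun n => by
  unfold gd; split_ifs <;> simp

lemma gr_succ (β y : ℝ) (n : ℕ) : gr β y (n + 1) = β * gr β y n - gd β y n := by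
  rw [gr, gd]; split_ifs <;> simp

lemma gr_mem {β y : ℝ} (h1 : 1 < β) (h2 : β < 2) (hy : y ∈ Set.Icc 0 (1 / (β - 1))) (n : ℕ) :
    gr β y n ∈ Set.Icc 0 (1 / (β - 1)) := by
  have hb : 0 < β - 1 := by linarith
  induction n with
  | zero => exact hy
  | succ n ih =>
    obtain ⟨i1, i2⟩ := ih
    rw [le_div_iff₀ hb] at i2
    rw [gr]
    split_ifs with h
    · refine ⟨by linarith, ?_⟩
      rw [le_div_iff₀ hb]
      nlinarith
    · push Not at h
      refine ⟨by positivity, ?_⟩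
      rw [le_div_iff₀ hb]
      nlinarith

lemma gr_partial {β y : ℝ} (h1 : 1 < β) (N : ℕ) :
    (∑ i ∈ Finset.range N, (gd β y i : ℝ) / β ^ (i + 1)) = y - gr β y N / β ^ N := by
  have h0 : (0 : ℝ) < β := by linarith
  induction N with
  | zero => simp [gr]
  | succ N ih =>
    rw [Finset.sum_range_succ, ih, gr_succ, pow_succ]
    field_simp
    ring

lemma gd_val {β y : ℝ} (h1 : 1 < β) (h2 : β < 2) (hy : y ∈ Set.Icc 0 (1 / (β - 1))) :
    betaVal β (gd β y) = y := by
  have h0 : (0 : ℝ) < β := by linarith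
  have hb : 0 < β - 1 := by linarith
  refine tendsto_nhds_unique (summ h1 (gd_dig β y)).hasSum.tendsto_sum_nat ?_
  simp_rw [gr_partial h1]
  have : Filter.Tendsto (fun N => gr β y N / β ^ N) Filter.atTop (nhds 0) := by
    have hz : Filter.Tendsto (fun N : ℕ => (1 / (β - 1)) * (β⁻¹) ^ N) Filter.atTop (nhds 0) := by
      have := (tendsto_pow_atTop_nhds_zero_of_lt_one (r := β⁻¹) (by positivity)
        (inv_lt_one_of_one_lt₀ h1)).const_mul (1 / (β - 1))
      simpa using this
    refine squeeze_zero (fun N => ?_) (fun N => ?_) hz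
    · have := (gr_mem h1 h2 hy N).1
      positivity
    · have := (gr_mem h1 h2 hy N).2
      rw [inv_pow, ← div_eq_mul_inv]
      gcongr
  simpa using this.const_sub y

/-! ### the specific base -/

lemma key {β : ℝ} (h1 : 1 < β) (hroot : β ^ 4 - 2 * β ^ 3 + β - 1 = 0) :
    (β ^ 2 + β + 1 / (β - 1)) / β ^ 3 = 1 := by
  have h0 : (0 : ℝ) < β := by linarith
  have hb : β - 1 ≠ 0 := by linarith
  field_simp
  linarith

lemma val_three {β : ℝ} (hβ : 1 < β) {a : ℕ → ℕ} (ha : Dig a) :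
    betaVal β a = (a 0 * β ^ 2 + a 1 * β + a 2 + betaVal β (tl a 3)) / β ^ 3 := by
  have h0 : (0 : ℝ) < β := by linarith
  rw [val_succ hβ ha, val_tl hβ ha 1, val_tl hβ ha 2]
  field_simp
  norm_num
  ring

lemma good_lt {β : ℝ} (h1 : 1 < β) (h2 : β < 2) (hroot : β ^ 4 - 2 * β ^ 3 + β - 1 = 0)
    {a : ℕ → ℕ} (ha : Good a) : betaVal β a < 1 := by
  have h0 : (0 : ℝ) < β := by linarith
  have hb : 0 < β - 1 := by linarith
  have step : ∀ a, Good a → (a 0 : ℝ) * β ^ 2 + a 1 * β + a 2 ≤ β ^ 2 + β := by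
    intro a ha
    have h3 := ha.2 0
    have hs : 0 < β ^ 2 - β := by nlinarith
    rcases ha.1.zero_or 0 with e0 | e0 <;> rcases ha.1.zero_or 1 with e1 | e1 <;>
      rcases ha.1.zero_or 2 with e2 | e2 <;> simp [e0, e1, e2] at h3 ⊢ <;> nlinarith
  have le1 : ∀ a, Good a → betaVal β a ≤ 1 := by
    intro a ha
    rw [val_three h1 ha.1, ← key h1 hroot]
    have := step a ha
    have := val_le h1 (ha.1.tl 3)
    gcongr
  rw [val_three h1 ha.1, ← key h1 hroot]
  have s1 := step a ha
  have s2 := le1 _ (ha.tl 3)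
  have s3 : 1 < 1 / (β - 1) := by rw [lt_div_iff₀ hb]; linarith
  have s4 : (a 0 : ℝ) * β ^ 2 + a 1 * β + a 2 + betaVal β (tl a 3) < β ^ 2 + β + 1 / (β - 1) := by
    linarith
  gcongr

lemma good_gt {β : ℝ} (h1 : 1 < β) (h2 : β < 2) (hroot : β ^ 4 - 2 * β ^ 3 + β - 1 = 0)
    {a : ℕ → ℕ} (ha : Good a) : 1 / (β - 1) - 1 < betaVal β a := by
  have := good_lt h1 h2 hroot ha.cmp
  rw [val_cmp h1 ha.1] at this
  linarith

lemma exists_first {a b : ℕ → ℕ} (h : a ≠ b) : ∃ N, (∀ i < N, a i = b i) ∧ a N ≠ b N := by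
  classical
  have h' : ∃ N, a N ≠ b N := by
    by_contra hc; push Not at hc; exact h (funext hc)
  exact ⟨Nat.find h', fun i hi => by simpa using Nat.find_min h' hi, Nat.find_spec h'⟩

lemma good_mem {β : ℝ} (h1 : 1 < β) (h2 : β < 2) (hroot : β ^ 4 - 2 * β ^ 3 + β - 1 = 0)
    {a : ℕ → ℕ} (ha : Good a) : betaVal β a ∈ Uset β := by
  have h0 : (0 : ℝ) < β := by linarith
  refine ⟨⟨val_nonneg h1 a, val_le h1 ha.1⟩, a, ⟨ha.1, rfl⟩, ?_⟩
  rintro b ⟨hb, hv⟩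
  by_contra hne
  obtain ⟨N, hN, hd⟩ := exists_first hne
  have hdiff := val_diff h1 hb ha.1 N hN
  rw [hv, sub_self, eq_comm, div_eq_zero_iff, or_iff_left (by positivity), sub_eq_zero,
    val_tl h1 hb, val_tl h1 ha.1, div_left_inj' h0.ne'] at hdiff
  have g1 := good_lt h1 h2 hroot (ha.tl (N + 1))
  have g2 := good_gt h1 h2 hroot (ha.tl (N + 1))
  have g3 := val_nonneg h1 (tl b (N + 1))
  have g4 := val_le h1 (Dig.tl hb (N + 1))
  rcases Dig.zero_or hb N with e | e <;> rcases ha.1.zero_or N with e' | e' <;>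
    simp [e, e'] at hdiff hd <;> linarith

/-! ### univoque sequences -/

lemma uniq_lt {β : ℝ} (h1 : 1 < β) (h2 : β < 2) {a : ℕ → ℕ} (ha : Dig a)
    (hu : ∀ b, Dig b → betaVal β b = betaVal β a → b = a) (n : ℕ) (hn : a n = 0) :
    betaVal β (tl a (n + 1)) < 1 := by
  by_contra hc
  push Not at hc
  have hy : betaVal β (tl a (n + 1)) - 1 ∈ Set.Icc 0 (1 / (β - 1)) :=
    ⟨by linarith, by have := val_le h1 (ha.tl (n + 1)); linarith⟩
  set y := betaVal β (tl a (n + 1)) - 1 with hydef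
  let b : ℕ → ℕ := fun i => if i < n then a i else if i = n then 1 else gd β y (i - (n + 1))
  have hbn : b n = 1 := by simp [b]
  have hb : Dig b := by
    intro i
    simp only [b]
    split_ifs
    · exact ha i
    · exact le_rfl
    · exact gd_dig _ _ _
  have htl : tl b (n + 1) = gd β y := by
    funext i
    have e1 : ¬ (i + (n + 1) < n) := by omega
    have e2 : ¬ (i + (n + 1) = n) := by omega
    simp [tl, b, e1, e2]
  have hval : betaVal β b = betaVal β a := by
    have := val_diff h1 hb ha n (fun i hi => by simp [b, hi])
    rw [val_tl h1 hb, val_tl h1 ha, htl, gd_val h1 h2 hy, hbn, hn] at this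
    rw [hydef] at this
    norm_num at this
    linarith
  have := congrFun (hu b hb hval) n
  omega

lemma uniq_cmp {β : ℝ} (h1 : 1 < β) {a : ℕ → ℕ} (ha : Dig a)
    (hu : ∀ b, Dig b → betaVal β b = betaVal β a → b = a) :
    ∀ b, Dig b → betaVal β b = betaVal β (cmp a) → b = cmp a := by
  intro b hb hv
  have := hu (cmp b) (Dig.cmp b) (by rw [val_cmp h1 hb, hv, val_cmp h1 ha]; ring)
  funext n
  have h := congrFun this n
  have := hb n
  have := ha n
  simp only [cmp] at h ⊢
  omega

lemma uniq_forb {β : ℝ} (h1 : 1 < β) (h2 : β < 2) (hroot : β ^ 4 - 2 * β ^ 3 + β - 1 = 0)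
    {a : ℕ → ℕ} (ha : Dig a)
    (hu : ∀ b, Dig b → betaVal β b = betaVal β a → b = a) (n : ℕ) (hn : a n = 0)
    (e1 : a (n + 1) = 1) (e2 : a (n + 2) = 1) (e3 : a (n + 3) = 1) : False := by
  have h0 : (0 : ℝ) < β := by linarith
  have c1 := uniq_lt h1 h2 ha hu n hn
  have c2 := uniq_lt h1 h2 (Dig.cmp a) (uniq_cmp h1 ha hu) (n + 3) (by simp [cmp, e3])
  have e : tl (cmp a) (n + 3 + 1) = cmp (tl a (n + 3 + 1)) := rfl
  rw [e, val_cmp h1 (ha.tl _)] at c2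
  rw [val_tl h1 ha, val_tl h1 ha, val_tl h1 ha, e1, e2, e3] at c1
  rw [← key h1 hroot] at c1
  have hlt : (β ^ 2 + β + 1 / (β - 1)) / β ^ 3 <
      (((1 : ℕ) : ℝ) + (((1 : ℕ) : ℝ) + (((1 : ℕ) : ℝ) + betaVal β (tl a (n + 3 + 1))) / β) / β) / β := by
    have : (((1 : ℕ) : ℝ) + (((1 : ℕ) : ℝ) + (((1 : ℕ) : ℝ) + betaVal β (tl a (n + 3 + 1))) / β) / β) / β
      = (β ^ 2 + β + (1 + betaVal β (tl a (n + 3 + 1)))) / β ^ 3 := by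
      field_simp
      push_cast
      ring
    rw [this]
    gcongr
    linarith
  exact lt_asymm c1 hlt

lemma uniq_forb' {β : ℝ} (h1 : 1 < β) (h2 : β < 2) (hroot : β ^ 4 - 2 * β ^ 3 + β - 1 = 0)
    {a : ℕ → ℕ} (ha : Dig a)
    (hu : ∀ b, Dig b → betaVal β b = betaVal β a → b = a) (n : ℕ) (hn : a n ≠ a (n + 1))
    (e2 : a (n + 1) = a (n + 2)) (e3 : a (n + 2) = a (n + 3)) : False := by
  rcases ha.zero_or n with e | e
  · have := ha.zero_or (n + 1)
    exact uniq_forb h1 h2 hroot ha hu n e (by omega) (by omega) (by omega)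
  · have := ha.zero_or (n + 1)
    refine uniq_forb h1 h2 hroot (Dig.cmp a) (uniq_cmp h1 ha hu) n ?_ ?_ ?_ ?_ <;>
      simp only [cmp] <;> omega

lemma uniq_struct {β : ℝ} (h1 : 1 < β) (h2 : β < 2) (hroot : β ^ 4 - 2 * β ^ 3 + β - 1 = 0)
    {a : ℕ → ℕ} (ha : Dig a)
    (hu : ∀ b, Dig b → betaVal β b = betaVal β a → b = a) :
    (∀ n, a n = a 0) ∨ ∃ k, Good (tl a k) ∧ ∀ i < k, a i = a 0 := by
  by_cases h : a = fun _ => a 0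
  · left
    intro n
    exact congrFun h n
  · right
    obtain ⟨k, hk, hd⟩ := exists_first h
    have hk0 : k ≠ 0 := by rintro rfl; exact hd rfl
    refine ⟨k, ⟨ha.tl k, ?_⟩, hk⟩
    intro n
    induction n with
    | zero =>
      rintro ⟨x1, x2⟩
      obtain ⟨m, rfl⟩ := Nat.exists_eq_succ_of_ne_zero hk0
      have hm := hk m (by omega)
      simp only [tl] at x1 x2
      have q : ∀ j, j + m.succ = m + (j + 1) := fun j => by omega
      rw [q, q] at x1
      rw [q, q] at x2
      exact uniq_forb' h1 h2 hroot ha hu m (by rw [hm]; exact fun hh => hd hh.symm) x1 x2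
    | succ n ih =>
      rintro ⟨x1, x2⟩
      have q1 : n + 1 + k = n + k + 1 := by omega
      have q2 : n + 2 + k = n + k + 2 := by omega
      have q3 : n + 1 + 2 + k = n + k + 3 := by omega
      simp only [tl, q1, q2, q3] at x1 x2 ih
      exact uniq_forb' h1 h2 hroot ha hu (n + k) (fun hh => ih ⟨hh, x1⟩) x1 x2

/-! ### upper bound -/

lemma cover_aux {β : ℝ} (h1 : 1 < β) (n : ℕ) (d : ℕ) (hd : d ≤ 1) :
    ∃ S : Finset ℝ, S.card ≤ Nat.fib (n + 1) ∧ ∀ a, Good a → a 0 = d →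
      ∃ p ∈ S, p ≤ betaVal β a ∧ betaVal β a ≤ p + 1 / (β - 1) / β ^ n := by
  have h0 : (0 : ℝ) < β := by linarith
  induction n using Nat.strong_induction_on generalizing d with
  | _ n ih =>
  match n, ih with
  | 0, _ =>
    refine ⟨{0}, by simp, fun a ha _ => ⟨0, by simp, val_nonneg h1 a, ?_⟩⟩
    simpa using val_le h1 ha.1
  | 1, _ =>
    refine ⟨{(d : ℝ) / β}, by simp, fun a ha had => ⟨(d : ℝ) / β, by simp, ?_, ?_⟩⟩
    · rw [val_succ h1 ha.1, had]
      have := val_nonneg h1 (tl a 1)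
      gcongr
      linarith
    · rw [val_succ h1 ha.1, had, add_div, pow_one]
      have := val_le h1 (ha.1.tl 1)
      gcongr
  | n + 2, ih =>
    obtain ⟨S1, c1, k1⟩ := ih (n + 1) (by omega) (1 - d) (by omega)
    obtain ⟨S0, c0, k0⟩ := ih n (by omega) (1 - d) (by omega)
    classical
    refine ⟨S1.image (fun p => ((d : ℝ) + p) / β) ∪
      S0.image (fun p => ((d : ℝ) + (d + p) / β) / β), ?_, ?_⟩
    · refine (Finset.card_union_le _ _).trans ?_
      have e1 := (Finset.card_image_le (s := S1) (f := fun p => ((d : ℝ) + p) / β))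
      have e0 := (Finset.card_image_le (s := S0) (f := fun p => ((d : ℝ) + (d + p) / β) / β))
      have hf : Nat.fib (n + 2 + 1) = Nat.fib (n + 1) + Nat.fib (n + 1 + 1) := Nat.fib_add_two
      omega
    · intro a ha had
      have d1 := ha.1 1
      have d2 := ha.1 2
      have g := ha.2 0
      by_cases hc : a 1 = d
      · have ha2 : a 2 = 1 - d := by
          simp only [zero_add] at g
          omega
        obtain ⟨p, hp, l, u⟩ := k0 (tl a 2) (ha.tl 2) (by simpa [tl] using ha2)
        refine ⟨_, Finset.mem_union_right _ (Finset.mem_image_of_mem _ hp), ?_, ?_⟩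
        · rw [val_succ h1 ha.1, val_tl h1 ha.1 1, had, hc]
          gcongr
        · rw [val_succ h1 ha.1, val_tl h1 ha.1 1, had, hc]
          have : ((d : ℝ) + (d + p) / β) / β + 1 / (β - 1) / β ^ (n + 2)
              = (d + (d + (p + 1 / (β - 1) / β ^ n)) / β) / β := by
            rw [pow_add]
            generalize 1 / (β - 1) = c
            field_simp
            ring
          rw [this]
          gcongr
      · have ha2 : a 1 = 1 - d := by omega
        obtain ⟨p, hp, l, u⟩ := k1 (tl a 1) (ha.tl 1) (by simpa [tl] using ha2)
        refine ⟨_, Finset.mem_union_left _ (Finset.mem_image_of_mem _ hp), ?_, ?_⟩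
        · rw [val_succ h1 ha.1, had]
          gcongr
        · rw [val_succ h1 ha.1, had]
          have : ((d : ℝ) + p) / β + 1 / (β - 1) / β ^ (n + 2)
              = (d + (p + 1 / (β - 1) / β ^ (n + 1))) / β := by
            rw [pow_succ β (n + 1)]
            generalize 1 / (β - 1) = c
            field_simp
            ring
          rw [this]
          gcongr

lemma fib_le (n : ℕ) : (Nat.fib (n + 1) : ℝ) ≤ Real.goldenRatio ^ n := by
  have h := Real.goldenRatio_mul_fib_succ_add_fib n
  have hp := Real.goldenRatio_pos
  have h2 : (0 : ℝ) ≤ Nat.fib n := by positivity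
  have h3 : Real.goldenRatio * Nat.fib (n + 1) ≤ Real.goldenRatio * Real.goldenRatio ^ n := by
    rw [← pow_succ']; linarith
  exact le_of_mul_le_mul_left h3 hp

lemma cover {β : ℝ} (h1 : 1 < β) (n : ℕ) :
    ∃ S : Finset ℝ, (S.card : ℝ) ≤ 2 * Real.goldenRatio ^ n ∧ ∀ a, Good a →
      ∃ p ∈ S, p ≤ betaVal β a ∧ betaVal β a ≤ p + 1 / (β - 1) / β ^ n := by
  classical
  obtain ⟨S0, c0, k0⟩ := cover_aux h1 n 0 (by omega)
  obtain ⟨S1, c1, k1⟩ := cover_aux h1 n 1 (by omega)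
  refine ⟨S0 ∪ S1, ?_, fun a ha => ?_⟩
  · have hc : (S0 ∪ S1).card ≤ 2 * Nat.fib (n + 1) := by
      have := Finset.card_union_le S0 S1
      omega
    have hc' : ((S0 ∪ S1).card : ℝ) ≤ 2 * Nat.fib (n + 1) := by exact_mod_cast hc
    have := fib_le n
    linarith
  · rcases ha.1.zero_or 0 with e | e
    · obtain ⟨p, hp, h⟩ := k0 a ha e
      exact ⟨p, Finset.mem_union_left _ hp, h⟩
    · obtain ⟨p, hp, h⟩ := k1 a ha e
      exact ⟨p, Finset.mem_union_right _ hp, h⟩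

lemma pow_rpow {β s : ℝ} (h1 : 1 < β) (hs : β ^ s = Real.goldenRatio) (n : ℕ) :
    (β ^ n) ^ s = Real.goldenRatio ^ n := by
  rw [← hs, Real.rpow_pow_comm (by linarith)]

open MeasureTheory Measure in
lemma dim_good {β s : ℝ} (h1 : 1 < β) (hs0 : 0 < s) (hs : β ^ s = Real.goldenRatio) :
    dimH (betaVal β '' {a | Good a}) ≤ ENNReal.ofReal s := by
  have h0 : (0 : ℝ) < β := by linarith
  have hb : 0 < β - 1 := by linarith
  have hG := Real.goldenRatio_pos
  choose S hS hc using fun n => cover h1 n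
  have hm : μH[s] (betaVal β '' {a | Good a}) ≤ ENNReal.ofReal (2 * (1 / (β - 1)) ^ s) := by
    refine (hausdorffMeasure_le_liminf_sum (ι := fun n => {p // p ∈ S n}) s _ (l := Filter.atTop)
      (fun n : ℕ => ENNReal.ofReal (1 / (β - 1) / β ^ n)) ?_
      (fun n p => Set.Icc p.1 (p.1 + 1 / (β - 1) / β ^ n)) ?_ ?_).trans ?_
    · rw [← ENNReal.ofReal_zero]
      refine ENNReal.tendsto_ofReal ?_
      have := (tendsto_pow_atTop_nhds_zero_of_lt_one (r := β⁻¹) (by positivity)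
        (inv_lt_one_of_one_lt₀ h1)).const_mul (1 / (β - 1))
      simpa [div_eq_mul_inv] using this
    · refine Filter.Eventually.of_forall (fun n p => ?_)
      rw [Real.ediam_Icc, add_sub_cancel_left]
    · refine Filter.Eventually.of_forall (fun n => ?_)
      rintro _ ⟨a, ha, rfl⟩
      obtain ⟨p, hp, l, u⟩ := hc n a ha
      exact Set.mem_iUnion.2 ⟨⟨p, hp⟩, l, u⟩
    · refine (Filter.liminf_le_liminf (v := fun _ => ENNReal.ofReal (2 * (1 / (β - 1)) ^ s))
        (Filter.Eventually.of_forall (fun n => ?_))).trans (by simp)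
      simp only [Real.ediam_Icc, add_sub_cancel_left]
      rw [Finset.sum_const, nsmul_eq_mul, ENNReal.ofReal_rpow_of_nonneg (by positivity) hs0.le,
        ← ENNReal.ofReal_natCast, ← ENNReal.ofReal_mul (by positivity)]
      apply ENNReal.ofReal_le_ofReal
      rw [Real.div_rpow (by positivity) (by positivity), pow_rpow h1 hs]
      have hcard : ((Finset.univ : Finset {p // p ∈ S n}).card : ℝ) ≤ 2 * Real.goldenRatio ^ n := by
        rw [Finset.card_univ, Fintype.card_coe]
        exact hS n
      calc ((Finset.univ : Finset {p // p ∈ S n}).card : ℝ)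
            * ((1 / (β - 1)) ^ s / Real.goldenRatio ^ n)
          ≤ (2 * Real.goldenRatio ^ n) * ((1 / (β - 1)) ^ s / Real.goldenRatio ^ n) := by
            gcongr
        _ = 2 * (1 / (β - 1)) ^ s := by
            generalize (1 / (β - 1)) ^ s = c
            field_simp
  have := dimH_le_of_hausdorffMeasure_ne_top (d := s.toNNReal)
    (s := betaVal β '' {a | Good a}) (by
      rw [Real.coe_toNNReal _ hs0.le]
      exact ne_top_of_le_ne_top ENNReal.ofReal_ne_top hm)
  exact this

lemma upper {β s : ℝ} (h1 : 1 < β) (h2 : β < 2) (hroot : β ^ 4 - 2 * β ^ 3 + β - 1 = 0)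
    (hs0 : 0 < s) (hs : β ^ s = Real.goldenRatio) :
    dimH (Uset β) ≤ ENNReal.ofReal s := by
  have h0 : (0 : ℝ) < β := by linarith
  let c : ℕ × ℕ → ℝ := fun p => ∑ i ∈ Finset.range p.1, (p.2 : ℝ) / β ^ (i + 1)
  let f : ℕ × ℕ → ℝ → ℝ := fun p x => c p + x / β ^ p.1
  have hsub : Uset β ⊆ Set.range (fun d : ℕ => betaVal β (fun _ => d)) ∪
      ⋃ p : ℕ × ℕ, f p '' (betaVal β '' {a | Good a}) := by
    rintro x ⟨-, a, ⟨ha, hax⟩, hu⟩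
    have hu' : ∀ b, Dig b → betaVal β b = betaVal β a → b = a :=
      fun b hb hv => hu b ⟨hb, hv.trans hax⟩
    rcases uniq_struct h1 h2 hroot ha hu' with h | ⟨k, hk, hi⟩
    · left
      refine ⟨a 0, ?_⟩
      rw [← hax]
      show betaVal β (fun _ => a 0) = betaVal β a
      congr 1
      funext n
      exact (h n).symm
    · right
      refine Set.mem_iUnion.2 ⟨(k, a 0), _, ⟨_, hk, rfl⟩, ?_⟩
      rw [← hax, val_split h1 ha k]
      simp only [f, c]
      congr 1
      exact Finset.sum_congr rfl (fun i hi' => by rw [hi i (Finset.mem_range.1 hi')])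
  refine (dimH_mono hsub).trans ?_
  rw [dimH_union, dimH_countable (Set.countable_range _), dimH_iUnion]
  refine max_le (by simp) (iSup_le fun p => ?_)
  refine le_trans ?_ (dim_good h1 hs0 hs)
  refine LipschitzWith.dimH_image_le (K := Real.toNNReal (1 / β ^ p.1)) ?_ _
  refine LipschitzWith.of_dist_le_mul (fun x y => ?_)
  rw [Real.coe_toNNReal _ (by positivity), Real.dist_eq, Real.dist_eq]
  have : f p x - f p y = (1 / β ^ p.1) * (x - y) := by simp only [f]; ring
  rw [this, abs_mul, abs_of_pos (by positivity : 0 < 1 / β ^ p.1)]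

/-! ### lower bound -/

def same (a : ℕ → ℕ) : ℕ → ℕ := fun n => if a n = a (n + 1) then 1 else 0

lemma same_dig (a : ℕ → ℕ) : Dig (same a) := fun n => by
  unfold same; split_ifs <;> simp

def unsame (b : ℕ → ℕ) : ℕ → ℕ
  | 0 => 0
  | n + 1 => if b n = 1 then unsame b n else 1 - unsame b n

lemma unsame_dig (b : ℕ → ℕ) : Dig (unsame b) := fun n => by
  induction n with
  | zero => simp [unsame]
  | succ n ih => rw [unsame]; split_ifs <;> omega

lemma unsame_eq (b : ℕ → ℕ) (n : ℕ) : unsame b n = unsame b (n + 1) ↔ b n = 1 := by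
  have h := unsame_dig b n
  rw [unsame]
  split_ifs with h'
  · simp [h']
  · simp only [h', iff_false]; omega

lemma same_unsame {b : ℕ → ℕ} (hb : Dig b) : same (unsame b) = b := by
  funext n
  rw [same, if_congr (unsame_eq b n) rfl rfl]
  have := hb n
  split_ifs <;> omega

lemma phi_lt_two : Real.goldenRatio < 2 := Real.goldenRatio_lt_two

lemma gd_phi {y : ℝ} (n : ℕ) (h : gd Real.goldenRatio y n = 1)
    (hr : gr Real.goldenRatio y n < 1) : gd Real.goldenRatio y (n + 1) ≠ 1 := by
  have h1 := Real.one_lt_goldenRatio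
  have hsq := Real.goldenRatio_sq
  have hlt : Real.goldenRatio * gr Real.goldenRatio y (n + 1) < 1 := by
    rw [gr_succ, h]
    push_cast
    nlinarith
  rw [gd, if_neg (not_le.2 hlt)]
  omega

lemma gr_phi {y : ℝ} (hy : y < 1) (n : ℕ) : gr Real.goldenRatio y n < 1 := by
  have h1 := Real.one_lt_goldenRatio
  have h2 := phi_lt_two
  induction n with
  | zero => exact hy
  | succ n ih =>
    rw [gr]
    split_ifs with h
    · nlinarith
    · linarith

lemma surj {y : ℝ} (hy : y ∈ Set.Ico (0 : ℝ) 1) :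
    ∃ a, Good a ∧ a 0 = 0 ∧ betaVal Real.goldenRatio (same a) = y := by
  have h1 := Real.one_lt_goldenRatio
  have h2 := phi_lt_two
  refine ⟨unsame (gd Real.goldenRatio y), ⟨unsame_dig _, ?_⟩, rfl, ?_⟩
  · rintro n ⟨e1, e2⟩
    rw [unsame_eq] at e1
    have e2' := (unsame_eq _ (n + 1)).1 e2
    exact gd_phi n e1 (gr_phi hy.2 n) e2'
  · rw [same_unsame (gd_dig _ _)]
    refine gd_val h1 h2 ⟨hy.1, hy.2.le.trans ?_⟩
    rw [le_div_iff₀ (by linarith)]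
    linarith

lemma sep {β : ℝ} (h1 : 1 < β) (h2 : β < 2) (hroot : β ^ 4 - 2 * β ^ 3 + β - 1 = 0)
    {a b : ℕ → ℕ} (ha : Good a) (hb : Good b) (N : ℕ) (h : ∀ i < N, a i = b i) (hN : a N ≠ b N) :
    (1 / (β - 1) - 1) / β / β ^ N ≤ |betaVal β a - betaVal β b| := by
  have h0 : (0 : ℝ) < β := by linarith
  wlog hlt : a N < b N generalizing a b
  · rw [abs_sub_comm]
    exact this hb ha (fun i hi => (h i hi).symm) hN.symm (by omega)
  have := ha.1 N
  have := hb.1 N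
  have ea : a N = 0 := by omega
  have eb : b N = 1 := by omega
  rw [abs_sub_comm, val_diff h1 hb.1 ha.1 N (fun i hi => (h i hi).symm)]
  refine le_trans ?_ (le_abs_self _)
  rw [val_tl h1 ha.1, val_tl h1 hb.1, ea, eb, ← sub_div]
  have g1 := good_lt h1 h2 hroot (ha.tl (N + 1))
  have g2 := good_gt h1 h2 hroot (hb.tl (N + 1))
  push_cast
  gcongr <;> linarith

lemma close {a b : ℕ → ℕ} (N : ℕ) (h : ∀ i < N + 1, a i = b i) :
    |betaVal Real.goldenRatio (same a) - betaVal Real.goldenRatio (same b)| ≤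
      1 / (Real.goldenRatio - 1) / Real.goldenRatio ^ N := by
  have h1 := Real.one_lt_goldenRatio
  have hp := Real.goldenRatio_pos
  rw [val_diff h1 (same_dig a) (same_dig b) N (fun i hi => by
    simp only [same]
    rw [h i (by omega), h (i + 1) (by omega)]), abs_div, abs_of_pos (pow_pos hp N)]
  have a1 := val_nonneg h1 (tl (same a) N)
  have a2 := val_le h1 ((same_dig a).tl N)
  have b1 := val_nonneg h1 (tl (same b) N)
  have b2 := val_le h1 ((same_dig b).tl N)
  gcongr
  rw [abs_le]
  constructor <;> linarith

lemma holder {β s : ℝ} (h1 : 1 < β) (h2 : β < 2) (hroot : β ^ 4 - 2 * β ^ 3 + β - 1 = 0)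
    (hs0 : 0 < s) (hs : β ^ s = Real.goldenRatio) :
    ∃ C : ℝ, 0 ≤ C ∧ ∀ a b, Good a → Good b → a 0 = 0 → b 0 = 0 →
      |betaVal Real.goldenRatio (same a) - betaVal Real.goldenRatio (same b)| ≤
        C * |betaVal β a - betaVal β b| ^ s := by
  have h0 : (0 : ℝ) < β := by linarith
  have g1 := Real.one_lt_goldenRatio
  have gp := Real.goldenRatio_pos
  have hb : 0 < β - 1 := by linarith
  have hk : 0 < 1 / (β - 1) - 1 := by
    have : 1 < 1 / (β - 1) := by rw [lt_div_iff₀ hb]; linarith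
    linarith
  have g2 : 0 < Real.goldenRatio - 1 := by linarith
  obtain ⟨κ, hκ⟩ : ∃ κ, κ = (1 / (β - 1) - 1) / β := ⟨_, rfl⟩
  have hκ0 : 0 < κ := by rw [hκ]; positivity
  refine ⟨1 / (Real.goldenRatio - 1) * Real.goldenRatio / κ ^ s, by positivity, ?_⟩
  intro a b ha hgb a0 b0
  by_cases hab : a = b
  · subst hab
    simp only [sub_self, abs_zero]
    positivity
  obtain ⟨N, hN, hd⟩ := exists_first hab
  obtain ⟨M, rfl⟩ : ∃ M, N = M + 1 :=
    Nat.exists_eq_succ_of_ne_zero (by rintro rfl; exact hd (a0.trans b0.symm))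
  have hsep := sep h1 h2 hroot ha hgb (M + 1) hN hd
  rw [← hκ] at hsep
  refine (close M hN).trans ?_
  have hpow : (κ / β ^ (M + 1)) ^ s ≤ |betaVal β a - betaVal β b| ^ s :=
    Real.rpow_le_rpow (by positivity) hsep hs0.le
  rw [Real.div_rpow hκ0.le (by positivity), pow_rpow h1 hs] at hpow
  have hks : 0 < κ ^ s := Real.rpow_pos_of_pos hκ0 s
  calc 1 / (Real.goldenRatio - 1) / Real.goldenRatio ^ M
      = 1 / (Real.goldenRatio - 1) * Real.goldenRatio / κ ^ s
          * (κ ^ s / Real.goldenRatio ^ (M + 1)) := by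
        rw [pow_succ]
        generalize 1 / (Real.goldenRatio - 1) = c
        field_simp
    _ ≤ _ := by gcongr

lemma lower {β s : ℝ} (h1 : 1 < β) (h2 : β < 2) (hroot : β ^ 4 - 2 * β ^ 3 + β - 1 = 0)
    (hs0 : 0 < s) (hs : β ^ s = Real.goldenRatio) :
    ENNReal.ofReal s ≤ dimH (Uset β) := by
  classical
  obtain ⟨C, hC0, hC⟩ := holder h1 h2 hroot hs0 hs
  let A : Set (ℕ → ℕ) := {a | Good a ∧ a 0 = 0}
  let g : ℝ → (ℕ → ℕ) := Function.invFunOn (betaVal β) A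
  let f : ℝ → ℝ := fun x => betaVal Real.goldenRatio (same (g x))
  have hg : ∀ x ∈ betaVal β '' A, g x ∈ A ∧ betaVal β (g x) = x := fun x hx =>
    ⟨Function.invFunOn_mem hx, Function.invFunOn_eq hx⟩
  have hH : HolderOnWith C.toNNReal s.toNNReal f (betaVal β '' A) := by
    intro x hx y hy
    obtain ⟨⟨p1, p2⟩, p3⟩ := hg x hx
    obtain ⟨⟨q1, q2⟩, q3⟩ := hg y hy
    have := hC _ _ p1 q1 p2 q2
    rw [p3, q3] at this
    rw [edist_dist, edist_dist, Real.dist_eq, Real.dist_eq, Real.coe_toNNReal _ hs0.le,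
      ENNReal.ofReal_rpow_of_nonneg (abs_nonneg _) hs0.le]
    change _ ≤ ENNReal.ofReal C * _
    rw [← ENNReal.ofReal_mul hC0]
    exact ENNReal.ofReal_le_ofReal this
  have hsurj : Set.Ico (0 : ℝ) 1 ⊆ f '' (betaVal β '' A) := by
    intro t ht
    obtain ⟨a, ha, ha0, hat⟩ := surj ht
    have hmem : betaVal β a ∈ betaVal β '' A := ⟨a, ⟨ha, ha0⟩, rfl⟩
    refine ⟨betaVal β a, hmem, ?_⟩
    obtain ⟨⟨p1, p2⟩, p3⟩ := hg _ hmem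
    have := hC _ _ p1 ha p2 ha0
    rw [p3, sub_self, abs_zero, Real.zero_rpow hs0.ne', mul_zero, hat] at this
    have := abs_nonpos_iff.1 this
    simp only [f]
    linarith
  have hdim : (1 : ENNReal) ≤ dimH (betaVal β '' A) / s.toNNReal := by
    refine le_trans ?_ (hH.dimH_image_le (by simpa using hs0))
    refine le_trans (le_of_eq ?_) (dimH_mono hsurj)
    rw [Real.dimH_of_nonempty_interior]
    · simp
    · rw [interior_Ico]
      exact ⟨1 / 2, by norm_num⟩
  rw [ENNReal.le_div_iff_mul_le (by simp [hs0]) (by simp), one_mul] at hdim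
  refine hdim.trans (dimH_mono ?_)
  rintro _ ⟨a, ha, rfl⟩
  exact good_mem h1 h2 hroot ha.1

end Stmt7

/-- if `β ∈ (1,2)` is the largest positive root of `x⁴ - 2x³ + x - 1 = 0`,
then `dim_H (U_β) = log G / log β` where `G` is the golden mean. -/
theorem statement7 (β : ℝ) (hβ : β ∈ Set.Ioo (1 : ℝ) 2)
    (hroot : β ^ 4 - 2 * β ^ 3 + β - 1 = 0)
    (hmax : ∀ y : ℝ, 0 < y → y ^ 4 - 2 * y ^ 3 + y - 1 = 0 → y ≤ β) :
    dimH (Uset β) =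
      ENNReal.ofReal (Real.log ((1 + Real.sqrt 5) / 2) / Real.log β) := by
  obtain ⟨h1, h2⟩ := hβ
  have hb : 0 < Real.log β := Real.log_pos h1
  have hg : 0 < Real.log Real.goldenRatio := Real.log_pos Real.one_lt_goldenRatio
  have hs : β ^ (Real.log Real.goldenRatio / Real.log β) = Real.goldenRatio :=
    Real.rpow_logb (by linarith) h1.ne' Real.goldenRatio_pos
  have hs0 : 0 < Real.log Real.goldenRatio / Real.log β := div_pos hg hb
  exact le_antisymm (Stmt7.upper h1 h2 hroot hs0 hs) (Stmt7.lower h1 h2 hroot hs0 hs)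
end

section
/- Let k ≥ 1 be an integer and let x ∈ [0, λ] ∩ K. Then x has exactly k distinct codings if and only if x + 1 − λ ∈ K and x + 1 − λ has exactly k distinct codings. Equivalently, for y ∈ [1−λ, 1] ∩ K, y has exactly k distinct codings if and only if y − (1 − λ) has exactly k distinct codings. -/
open Filter Topology

/-- `codingApprox f i n = f (i 0) (f (i 1) (⋯ (f (i (n-1)) 0)))`, i.e. the `n`-th
approximation `f_{i_1} ∘ ⋯ ∘ f_{i_n} (0)` of the point coded by `i`. -/
noncomputable def codingApprox (f : Fin 4 → ℝ → ℝ) : (ℕ → Fin 4) → ℕ → ℝ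
  | _, 0 => 0
  | i, n + 1 => f (i 0) (codingApprox f (fun k => i (k + 1)) n)

/-- The set of codings of `x` for the IFS `f`. -/
def codings (f : Fin 4 → ℝ → ℝ) (x : ℝ) : Set (ℕ → Fin 4) :=
  {i | Tendsto (codingApprox f i) atTop (𝓝 x)}

theorem codingApprox_mem (f : Fin 4 → ℝ → ℝ)
    (h : ∀ a, ∀ x ∈ Set.Icc (0:ℝ) 1, f a x ∈ Set.Icc (0:ℝ) 1) (n : ℕ) :
    ∀ i, codingApprox f i n ∈ Set.Icc (0:ℝ) 1 := by
  induction n with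
  | zero => intro i; simp [codingApprox]
  | succ n ih => intro i; exact h _ _ (ih _)

/-- If the point `f a z` lies in only one first-level cell, its codings are those of `z`
prefixed with `a`. -/
theorem encard_codings_cell (lam : ℝ) (hl : 0 < lam) (d : Fin 4 → ℝ) (f : Fin 4 → ℝ → ℝ)
    (hfd : ∀ a x, f a x = lam * x + d a)
    (h : ∀ a, ∀ x ∈ Set.Icc (0:ℝ) 1, f a x ∈ Set.Icc (0:ℝ) 1)
    (a : Fin 4) (z : ℝ)
    (hsep : ∀ b, f a z ∈ Set.Icc (d b) (lam + d b) → b = a) :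
    (codings f (f a z)).encard = (codings f z).encard := by
  have key : codings f (f a z) =
      (fun i : ℕ → Fin 4 => (fun n => Nat.casesOn n a i : ℕ → Fin 4)) '' codings f z := by
    ext i
    constructor
    · intro hi
      have hi1 : Tendsto (fun n => codingApprox f i (n + 1)) atTop (𝓝 (f a z)) :=
        (tendsto_add_atTop_iff_nat 1).2 hi
      have hi2 : Tendsto (fun n => lam * codingApprox f (fun k => i (k + 1)) n + d (i 0)) atTop
          (𝓝 (f a z)) := by
        refine hi1.congr fun n => ?_
        rw [codingApprox, hfd]
      have h0 : i 0 = a := by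
        apply hsep
        refine isClosed_Icc.mem_of_tendsto hi2 (Eventually.of_forall fun n => ?_)
        have := codingApprox_mem f h n (fun k => i (k + 1))
        constructor <;> nlinarith [this.1, this.2]
      refine ⟨fun k => i (k + 1), ?_, ?_⟩
      · have h3 := (hi2.sub_const (d (i 0))).div_const lam
        have e : (f a z - d (i 0)) / lam = z := by
          rw [hfd, h0]; field_simp; ring
        rw [e] at h3
        refine h3.congr fun n => ?_
        field_simp
        ring
      · funext n
        cases n with
        | zero => exact h0.symm
        | succ n => rfl
    · rintro ⟨j, hj, rfl⟩
      refine (tendsto_add_atTop_iff_nat 1).1 ?_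
      have hj' : Tendsto (codingApprox f j) atTop (𝓝 z) := hj
      have h2 := (hj'.const_mul lam).add_const (d a)
      rw [hfd]
      refine h2.congr fun n => ?_
      rw [codingApprox, hfd]
      rfl
  rw [key]
  apply Function.Injective.encard_image
  intro i j hij
  funext n
  exact congrFun hij (n + 1)

/-- for `k ≥ 1` and `x ∈ [0, λ] ∩ K`, `x` has exactly `k` codings iff
`x + 1 - λ ∈ K` and `x + 1 - λ` has exactly `k` codings; equivalently, for
`y ∈ [1 - λ, 1] ∩ K`, `y` has exactly `k` codings iff `y - (1 - λ)` does. -/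
theorem statement8
    (lam : ℝ) (hlam : 0 < lam ∧ lam < (5 - Real.sqrt 21) / 2)
    (f : Fin 4 → ℝ → ℝ)
    (hf : f = ![fun x => lam * x, fun x => lam * x + 2 * lam,
      fun x => lam * x + 3 * lam - lam ^ 2, fun x => lam * x + 1 - lam])
    (K : Set ℝ) (hKne : K.Nonempty) (hKcpt : IsCompact K)
    (hK : K = f 0 '' K ∪ f 1 '' K ∪ f 2 '' K ∪ f 3 '' K)
    (U : ℕ → Set ℝ)
    (hU : ∀ k : ℕ, U k = {x ∈ K | (codings f x).encard = (k : ℕ∞)})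
    (k : ℕ) (hk : 1 ≤ k) :
    (∀ x ∈ Set.Icc 0 lam ∩ K,
      ((codings f x).encard = (k : ℕ∞) ↔
        x + 1 - lam ∈ K ∧ (codings f (x + 1 - lam)).encard = (k : ℕ∞))) ∧
    (∀ y ∈ Set.Icc (1 - lam) 1 ∩ K,
      ((codings f y).encard = (k : ℕ∞) ↔
        (codings f (y - (1 - lam))).encard = (k : ℕ∞))) := by
  obtain ⟨hl, hl2⟩ := hlam
  have hs : Real.sqrt 21 ^ 2 = 21 := Real.sq_sqrt (by norm_num)
  have hs0 : 4 < Real.sqrt 21 := by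
    rw [Real.lt_sqrt] <;> norm_num
  have hq : 0 < lam ^ 2 - 5 * lam + 1 := by nlinarith
  have hl1 : lam < 1 / 2 := by linarith
  obtain ⟨d, hd⟩ : ∃ d : Fin 4 → ℝ, d = ![0, 2 * lam, 3 * lam - lam ^ 2, 1 - lam] := ⟨_, rfl⟩
  have d0 : d 0 = 0 := by rw [hd]; rfl
  have d1 : d 1 = 2 * lam := by rw [hd]; rfl
  have d2 : d 2 = 3 * lam - lam ^ 2 := by rw [hd]; rfl
  have d3 : d 3 = 1 - lam := by rw [hd]; rfl
  have hfd : ∀ a x, f a x = lam * x + d a := by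
    intro a x
    rw [hf, hd]
    fin_cases a <;> simp <;> ring
  have hdb : ∀ a, 0 ≤ d a ∧ d a ≤ 1 - lam := by
    intro a
    fin_cases a
    · simp only [Fin.zero_eta, d0]; constructor <;> linarith
    · simp only [Fin.mk_one, d1]; constructor <;> nlinarith
    · simp only [Fin.reduceFinMk, d2]; constructor <;> nlinarith
    · simp only [Fin.reduceFinMk, d3]; constructor <;> linarith
  have h : ∀ a, ∀ x ∈ Set.Icc (0:ℝ) 1, f a x ∈ Set.Icc (0:ℝ) 1 := by
    intro a x hx
    rw [hfd]
    have := hdb a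
    constructor <;> nlinarith [hx.1, hx.2]
  have E0 : ∀ z ∈ Set.Icc (0:ℝ) 1, (codings f (f 0 z)).encard = (codings f z).encard := by
    intro z hz
    apply encard_codings_cell lam hl d f hfd h
    intro b
    rw [hfd, d0]
    fin_cases b
    · intro _; rfl
    · simp only [Fin.mk_one, d1]; intro hb; exfalso; nlinarith [hb.1, hz.2]
    · simp only [Fin.reduceFinMk, d2]; intro hb; exfalso; nlinarith [hb.1, hz.2]
    · simp only [Fin.reduceFinMk, d3]; intro hb; exfalso; nlinarith [hb.1, hz.2]
  have E3 : ∀ z ∈ Set.Icc (0:ℝ) 1, (codings f (f 3 z)).encard = (codings f z).encard := by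
    intro z hz
    apply encard_codings_cell lam hl d f hfd h
    intro b
    rw [hfd, d3]
    fin_cases b
    · simp only [Fin.zero_eta, d0]; intro hb; exfalso; nlinarith [hb.2, hz.1]
    · simp only [Fin.mk_one, d1]; intro hb; exfalso; nlinarith [hb.2, hz.1]
    · simp only [Fin.reduceFinMk, d2]; intro hb; exfalso; nlinarith [hb.2, hz.1]
    · intro _; rfl
  have hKex : ∀ x ∈ K, ∃ a, ∃ z ∈ K, f a z = x := by
    intro x hx
    rw [hK] at hx
    rcases hx with ((⟨z, hz, e⟩ | ⟨z, hz, e⟩) | ⟨z, hz, e⟩) | ⟨z, hz, e⟩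
    exacts [⟨0, z, hz, e⟩, ⟨1, z, hz, e⟩, ⟨2, z, hz, e⟩, ⟨3, z, hz, e⟩]
  have hK0 : ∀ x ∈ K, 0 ≤ x := by
    obtain ⟨m, hm, hmin⟩ := hKcpt.exists_isLeast hKne
    obtain ⟨a, z, hz, e⟩ := hKex m hm
    have hmz := hmin hz
    rw [hfd] at e
    have : 0 ≤ m := by nlinarith [(hdb a).1]
    intro x hx
    exact this.trans (hmin hx)
  have scale : ∀ x ∈ Set.Icc 0 lam,
      (codings f x).encard = (codings f (x + 1 - lam)).encard := by
    intro x hx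
    have hz : x / lam ∈ Set.Icc (0:ℝ) 1 := ⟨div_nonneg hx.1 hl.le, (div_le_one hl).2 hx.2⟩
    have hx0 : lam * (x / lam) = x := by field_simp
    have e0 : f 0 (x / lam) = x := by rw [hfd, d0, hx0, add_zero]
    have e3 : f 3 (x / lam) = x + 1 - lam := by rw [hfd, d3, hx0]; ring
    rw [← e3, E3 _ hz, ← E0 _ hz, e0]
  constructor
  · rintro x ⟨hx, hxK⟩
    have hmem : x + 1 - lam ∈ K := by
      obtain ⟨a, z, hz, e⟩ := hKex x hxK
      have hz0 := mul_nonneg hl.le (hK0 z hz)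
      have ha : d a = 0 := by
        rw [hfd] at e
        have hxl := hx.2
        fin_cases a
        · exact d0
        · simp only [Fin.mk_one, d1] at e; exfalso; nlinarith
        · simp only [Fin.reduceFinMk, d2] at e; exfalso; nlinarith
        · simp only [Fin.reduceFinMk, d3] at e; exfalso; nlinarith
      rw [hK]
      refine Or.inr ⟨z, hz, ?_⟩
      rw [hfd] at e ⊢
      rw [d3]
      linarith
    rw [scale x hx]
    exact ⟨fun q => ⟨hmem, q⟩, fun q => q.2⟩
  · rintro y ⟨hy, -⟩
    have := scale (y - (1 - lam)) ⟨by linarith [hy.1], by linarith [hy.2]⟩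
    rw [this, show y - (1 - lam) + 1 - lam = y by ring]
end

section
/- The Hausdorff dimensions satisfy dim_H(U_2) = dim_H(U_1 ∩ (U_1 + (1 − λ))), where U_1 + (1 − λ) = {u + 1 − λ : u ∈ U_1}. -/
open Filter Topology

/-- Tail of a coding. -/
def codTail (i : ℕ → Fin 4) : ℕ → Fin 4 := fun k => i (k + 1)

/-- Prepend a digit. -/
def codCons (d : Fin 4) (i : ℕ → Fin 4) : ℕ → Fin 4
  | 0 => d
  | n + 1 => i n

theorem codTail_cons (d : Fin 4) (i : ℕ → Fin 4) : codTail (codCons d i) = i := rfl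

theorem codCons_tail (i : ℕ → Fin 4) : codCons (i 0) (codTail i) = i := by
  funext n
  cases n <;> rfl

theorem cod_ext {i j : ℕ → Fin 4} (h0 : i 0 = j 0) (h : codTail i = codTail j) : i = j := by
  rw [← codCons_tail i, ← codCons_tail j, h0, h]

theorem mem_codings_iff (lam : ℝ) (hl : 0 < lam) (f : Fin 4 → ℝ → ℝ) (c : Fin 4 → ℝ)
    (hf : ∀ d x, f d x = lam * x + c d) (d : Fin 4) (i : ℕ → Fin 4) (hd : i 0 = d) (y : ℝ) :
    i ∈ codings f (f d y) ↔ codTail i ∈ codings f y := by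
  unfold codings
  simp only [Set.mem_setOf_eq]
  rw [← tendsto_add_atTop_iff_nat 1 (f := codingApprox f i)]
  have h : (fun n => codingApprox f i (n + 1))
      = fun n => lam * codingApprox f (codTail i) n + c d := by
    funext n
    rw [← hd, ← hf]
    rfl
  rw [h, hf]
  constructor
  · intro H
    have H2 := (H.sub_const (c d)).const_mul lam⁻¹
    have e : (fun n => lam⁻¹ * (lam * codingApprox f (codTail i) n + c d - c d))
        = codingApprox f (codTail i) := by
      funext n
      field_simp
      ring
    rw [e] at H2
    convert H2 using 2
    field_simp
    ring
  · intro H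
    exact (H.const_mul lam).add_const (c d)

/-- The sets covering `U 2`. -/
def coverSet (f : Fin 4 → ℝ → ℝ) (A : Set ℝ) : ℕ → Set ℝ
  | 0 => f 1 '' A
  | n + 1 => ⋃ d : Fin 4, f d '' coverSet f A n

theorem dimH_coverSet (lam : ℝ) (f : Fin 4 → ℝ → ℝ) (c : Fin 4 → ℝ)
    (hf : ∀ d x, f d x = lam * x + c d) (A : Set ℝ) (n : ℕ) :
    dimH (coverSet f A n) ≤ dimH A := by
  have hL : ∀ d, LipschitzWith (Real.nnabs lam) (f d) := by
    intro d
    refine LipschitzWith.of_dist_le_mul fun x y => ?_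
    rw [hf, hf, Real.dist_eq, Real.dist_eq, Real.coe_nnabs, ← abs_mul]
    apply le_of_eq
    congr 1
    ring
  induction n with
  | zero => exact (hL 1).dimH_image_le A
  | succ n ih =>
    simp only [coverSet]
    rw [dimH_iUnion]
    exact iSup_le fun d => ((hL d).dimH_image_le _).trans ih

/-- `dim_H (U_2) = dim_H (U_1 ∩ (U_1 + (1 - λ)))`. -/
theorem statement9
    (lam : ℝ) (hlam : 0 < lam ∧ lam < (5 - Real.sqrt 21) / 2)
    (f : Fin 4 → ℝ → ℝ)
    (hf : f = ![fun x => lam * x, fun x => lam * x + 2 * lam,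
      fun x => lam * x + 3 * lam - lam ^ 2, fun x => lam * x + 1 - lam])
    (K : Set ℝ) (hKne : K.Nonempty) (hKcpt : IsCompact K)
    (hK : K = f 0 '' K ∪ f 1 '' K ∪ f 2 '' K ∪ f 3 '' K)
    (U : ℕ → Set ℝ)
    (hU : ∀ k : ℕ, U k = {x ∈ K | (codings f x).encard = (k : ℕ∞)})
    :
    dimH (U 2) = dimH (U 1 ∩ (fun u => u + (1 - lam)) '' U 1) := by
  obtain ⟨hl, hl2⟩ := hlam
  have hs : Real.sqrt 21 ^ 2 = 21 := Real.sq_sqrt (by norm_num)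
  have hs0 : 4 < Real.sqrt 21 := by
    rw [Real.lt_sqrt] <;> norm_num
  have hhalf : lam < 1 / 2 := by linarith
  have hgap : 0 < 1 - 5 * lam + lam ^ 2 := by
    nlinarith
  obtain ⟨c, hc⟩ : ∃ c : Fin 4 → ℝ, c = ![0, 2 * lam, 3 * lam - lam ^ 2, 1 - lam] := ⟨_, rfl⟩
  have c0 : c 0 = 0 := by simp [hc]
  have c1 : c 1 = 2 * lam := by simp [hc]
  have c2 : c 2 = 3 * lam - lam ^ 2 := by simp [hc]
  have c3 : c 3 = 1 - lam := by simp [hc]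
  have hfc : ∀ d x, f d x = lam * x + c d := by
    intro d x
    fin_cases d <;> simp [hf, hc] <;> ring
  clear hc hf
  have hcl : ∀ d, 0 ≤ c d ∧ c d ≤ 1 - lam := by
    intro d
    fin_cases d
    · show 0 ≤ c 0 ∧ c 0 ≤ 1 - lam
      rw [c0]; constructor <;> linarith
    · show 0 ≤ c 1 ∧ c 1 ≤ 1 - lam
      rw [c1]; constructor <;> nlinarith
    · show 0 ≤ c 2 ∧ c 2 ≤ 1 - lam
      rw [c2]; constructor <;> nlinarith
    · show 0 ≤ c 3 ∧ c 3 ≤ 1 - lam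
      rw [c3]; constructor <;> linarith
  -- invariance of K
  have hinv : ∀ d, ∀ x ∈ K, f d x ∈ K := by
    intro d x hx
    rw [hK]
    fin_cases d
    · exact Or.inl (Or.inl (Or.inl ⟨x, hx, rfl⟩))
    · exact Or.inl (Or.inl (Or.inr ⟨x, hx, rfl⟩))
    · exact Or.inl (Or.inr ⟨x, hx, rfl⟩)
    · exact Or.inr ⟨x, hx, rfl⟩
  have h0K : (0 : ℝ) ∈ K := by
    obtain ⟨x, hx⟩ := hKne
    have h1 : ∀ n : ℕ, lam ^ n * x ∈ K := by
      intro n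
      induction n with
      | zero => simpa using hx
      | succ n ih =>
        have := hinv 0 _ ih
        rw [hfc, c0] at this
        convert this using 1
        ring
    have h2 : Tendsto (fun n : ℕ => lam ^ n * x) atTop (𝓝 0) := by
      have := (tendsto_pow_atTop_nhds_zero_of_lt_one hl.le (by linarith)).mul_const x
      simpa using this
    exact hKcpt.isClosed.mem_of_tendsto h2 (Eventually.of_forall h1)
  have happK : ∀ n i, codingApprox f i n ∈ K := by
    intro n
    induction n with
    | zero => intro i; exact h0K
    | succ n ih => intro i; exact hinv _ _ (ih _)
  have happ01 : ∀ n i, codingApprox f i n ∈ Set.Icc (0 : ℝ) 1 := by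
    intro n
    induction n with
    | zero => intro i; simp [codingApprox]
    | succ n ih =>
      intro i
      have h1 := ih (fun k => i (k + 1))
      have h2 := hcl (i 0)
      simp only [codingApprox]
      rw [hfc]
      rw [Set.mem_Icc] at h1 ⊢
      constructor <;> nlinarith
  have hcodK : ∀ x i, i ∈ codings f x → x ∈ K := fun x i hi =>
    hKcpt.isClosed.mem_of_tendsto hi (Eventually.of_forall fun n => happK n i)
  have hcod01 : ∀ x i, i ∈ codings f x → x ∈ Set.Icc (0 : ℝ) 1 := fun x i hi =>
    isClosed_Icc.mem_of_tendsto hi (Eventually.of_forall fun n => happ01 n i)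
  have hmem := mem_codings_iff lam hl f c hfc
  have hcons : ∀ d y i, i ∈ codings f y → codCons d i ∈ codings f (f d y) := fun d y i hi =>
    (hmem d _ rfl y).2 hi
  have hsurj : ∀ d x, ∃ y, f d y = x := by
    intro d x
    refine ⟨(x - c d) / lam, ?_⟩
    rw [hfc]
    field_simp
    ring
  -- digits of two codings
  have hrange : ∀ x i, i ∈ codings f x → c (i 0) ≤ x ∧ x ≤ c (i 0) + lam := by
    intro x i hi
    obtain ⟨y, rfl⟩ := hsurj (i 0) x
    have := hcod01 _ _ ((hmem _ _ rfl y).1 hi)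
    rw [Set.mem_Icc] at this
    rw [hfc]
    constructor <;> nlinarith
  have hdig : ∀ x i j, i ∈ codings f x → j ∈ codings f x → i 0 ≠ j 0 →
      (i 0 = 1 ∧ j 0 = 2) ∨ (i 0 = 2 ∧ j 0 = 1) := by
    intro x i j hi hj
    have h1 := hrange x i hi
    have h2 := hrange x j hj
    have hfin : ∀ d : Fin 4, d = 0 ∨ d = 1 ∨ d = 2 ∨ d = 3 := by decide
    intro hne
    rcases hfin (i 0) with h | h | h | h <;> rcases hfin (j 0) with h' | h' | h' | h' <;>
      rw [h] at h1 hne <;> rw [h'] at h2 hne <;> rw [h, h'] <;>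
      first
      | exact absurd rfl hne
      | exact Or.inl ⟨rfl, rfl⟩
      | exact Or.inr ⟨rfl, rfl⟩
      | (exfalso
         simp only [c0, c1, c2, c3] at h1 h2
         nlinarith)
  have hmemU : ∀ k : ℕ, k ≠ 0 → ∀ x, x ∈ U k ↔ (codings f x).encard = (k : ℕ∞) := by
    intro k hk x
    rw [hU]
    refine ⟨fun h => h.2, fun h => ⟨?_, h⟩⟩
    have : (codings f x).Nonempty := by
      rw [← Set.encard_ne_zero, h]
      exact_mod_cast hk
    obtain ⟨i, hi⟩ := this
    exact hcodK x i hi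
  have hU1 : ∀ x, x ∈ U 1 ↔ ∃ i, codings f x = {i} := by
    intro x
    rw [hmemU 1 one_ne_zero, Nat.cast_one, Set.encard_eq_one]
  have hU2 : ∀ x, x ∈ U 2 ↔ ∃ i j, i ≠ j ∧ codings f x = {i, j} := by
    intro x
    rw [hmemU 2 two_ne_zero, Nat.cast_ofNat, Set.encard_eq_two]
  set A := U 1 ∩ (fun u => u + (1 - lam)) '' U 1 with hA
  have hshift : ∀ b, f 1 (b + (1 - lam)) = f 2 b := by
    intro b
    rw [hfc, hfc, c1, c2]
    ring
  -- first difference at 0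
  have hbase : ∀ x i j, codings f x = {i, j} → i 0 = 1 → j 0 = 2 → x ∈ f 1 '' A := by
    intro x i j hx hi hj
    obtain ⟨a, rfl⟩ := hsurj 1 x
    obtain ⟨b, hb⟩ := hsurj 2 (f 1 a)
    have hab : a = b + (1 - lam) := by
      rw [← hshift, hfc, hfc] at hb
      have : lam * (b + (1 - lam)) = lam * a := by linarith
      exact (mul_left_cancel₀ hl.ne' this).symm
    have hia : codTail i ∈ codings f a := (hmem 1 i hi a).1 (by rw [hx]; simp)
    have hjb : codTail j ∈ codings f b := (hmem 2 j hj b).1 (by rw [hb, hx]; simp)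
    have ha1 : a ∈ U 1 := by
      rw [hU1]
      refine ⟨codTail i, Set.eq_singleton_iff_unique_mem.2 ⟨hia, fun k hk => ?_⟩⟩
      have := hcons 1 a k hk
      rw [hx] at this
      rcases this with h | h
      · rw [← h, codTail_cons]
      · have h3 := congrFun h 0
        rw [hj] at h3
        exact absurd h3 (by simp [codCons])
    have hb1 : b ∈ U 1 := by
      rw [hU1]
      refine ⟨codTail j, Set.eq_singleton_iff_unique_mem.2 ⟨hjb, fun k hk => ?_⟩⟩
      have := hcons 2 b k hk
      rw [hb, hx] at this
      rcases this with h | h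
      · have h3 := congrFun h 0
        rw [hi] at h3
        exact absurd h3 (by simp [codCons])
      · rw [← Set.mem_singleton_iff.1 h, codTail_cons]
    exact ⟨a, ⟨ha1, b, hb1, hab.symm⟩, rfl⟩
  have hcover : ∀ n x i j, codings f x = {i, j} → (∀ k < n, i k = j k) → i n ≠ j n →
      x ∈ coverSet f A n := by
    intro n
    induction n with
    | zero =>
      intro x i j hx _ hne
      rcases hdig x i j (by rw [hx]; simp) (by rw [hx]; simp) hne with ⟨h, h'⟩ | ⟨h, h'⟩
      · exact hbase x i j hx h h'
      · exact hbase x j i (by rw [hx, Set.pair_comm]) h' h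
    | succ n ih =>
      intro x i j hx heq hne
      have h0 := heq 0 (Nat.succ_pos n)
      obtain ⟨y, rfl⟩ := hsurj (i 0) x
      refine Set.mem_iUnion.2 ⟨i 0, y, ?_, rfl⟩
      refine ih y (codTail i) (codTail j) ?_ (fun k hk => heq (k + 1) (by omega)) hne
      apply Set.Subset.antisymm
      · intro k hk
        have := hcons (i 0) y k hk
        rw [hx] at this
        rcases this with h | h
        · left
          rw [← h, codTail_cons]
        · right
          rw [Set.mem_singleton_iff, ← Set.mem_singleton_iff.1 h, codTail_cons]
      · rintro k (h | h)
        · rw [h]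
          exact (hmem (i 0) i rfl y).1 (by rw [hx]; simp)
        · rw [Set.mem_singleton_iff.1 h]
          exact (hmem (i 0) j h0.symm y).1 (by rw [hx]; simp)
  apply le_antisymm
  · have hsub : U 2 ⊆ ⋃ n, coverSet f A n := by
      intro x hx
      obtain ⟨i, j, hij, hx⟩ := (hU2 x).1 hx
      have hex : ∃ n, i n ≠ j n := by
        by_contra! h
        exact hij (funext h)
      classical
      refine Set.mem_iUnion.2 ⟨Nat.find hex, hcover _ x i j hx (fun k hk => ?_) (Nat.find_spec hex)⟩
      exact not_not.1 (Nat.find_min hex hk)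
    refine (dimH_mono hsub).trans ?_
    rw [dimH_iUnion]
    exact iSup_le fun n => dimH_coverSet lam f c hfc A n
  · have hsub : f 1 '' A ⊆ U 2 := by
      rintro _ ⟨a, ⟨ha, b, hb, hab⟩, rfl⟩
      simp only at hab
      obtain ⟨p, hp⟩ := (hU1 a).1 ha
      obtain ⟨q, hq⟩ := (hU1 b).1 hb
      have hfe : f 1 a = f 2 b := by rw [← hab, hshift]
      have h1 : codCons 1 p ∈ codings f (f 1 a) := hcons 1 a p (by rw [hp]; simp)
      have h2 : codCons 2 q ∈ codings f (f 1 a) := by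
        rw [hfe]
        exact hcons 2 b q (by rw [hq]; simp)
      rw [hU2]
      refine ⟨codCons 1 p, codCons 2 q, fun h => ?_, ?_⟩
      · have h3 := congrFun h 0
        exact absurd h3 (by simp [codCons])
      · apply Set.Subset.antisymm
        · intro k hk
          by_cases hk1 : k 0 = 1
          · left
            have := (hmem 1 k hk1 a).1 hk
            rw [hp] at this
            exact cod_ext hk1 this
          · right
            have hk2 : k 0 = 2 := by
              rcases hdig _ k _ hk h1 hk1 with ⟨h, -⟩ | ⟨h, -⟩
              · exact absurd h hk1
              · exact h
            rw [hfe] at hk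
            have := (hmem 2 k hk2 b).1 hk
            rw [hq] at this
            exact cod_ext hk2 this
        · rintro k (h | h)
          · rw [h]; exact h1
          · rw [Set.mem_singleton_iff.1 h]; exact h2
    refine le_trans ?_ (dimH_mono hsub)
    have hanti : AntilipschitzWith (Real.nnabs lam⁻¹) (f 1) := by
      refine AntilipschitzWith.of_le_mul_dist fun x y => ?_
      rw [hfc, hfc, Real.dist_eq, Real.dist_eq, Real.coe_nnabs, ← abs_mul]
      apply le_of_eq
      congr 1
      field_simp
      ring
    exact hanti.le_dimH_image A
end

section
/- The set U_1 ∩ (U_1 + (1 − λ)) equals the set of univoque points lying in f_4(K), i.e. U_1 ∩ (U_1 + (1 − λ)) = U_1 ∩ f_4(K), and these are exactly the points of K whose unique coding begins with the digit 4. Moreover dim_H(U_2) = dim_H(U_1 ∩ (U_1 + (1 − λ))) = dim_H(U_1). -/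
open Filter Topology

noncomputable def T10 (l : ℝ) : Fin 4 → ℝ := ![0, 2 * l, 3 * l - l ^ 2, 1 - l]

noncomputable def G10 (l : ℝ) (d : Fin 4) (x : ℝ) : ℝ := l * x + T10 l d

def cons10 (d : Fin 4) (i : ℕ → Fin 4) : ℕ → Fin 4
  | 0 => d
  | n + 1 => i n

def shift10 (i : ℕ → Fin 4) : ℕ → Fin 4 := fun k => i (k + 1)

lemma cons_shift10 (i : ℕ → Fin 4) : cons10 (i 0) (shift10 i) = i := by
  funext n; cases n <;> rfl

lemma shift_cons10 (d : Fin 4) (i : ℕ → Fin 4) : shift10 (cons10 d i) = i := rfl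

lemma cons_inj10 (d : Fin 4) : Function.Injective (cons10 d) := fun i j h => by
  have := congrArg shift10 h
  simpa [shift_cons10] using this

lemma cases10 {P : Fin 4 → Prop} (h0 : P 0) (h1 : P 1) (h2 : P 2) (h3 : P 3) : ∀ d, P d := by
  intro d; fin_cases d <;> assumption

lemma bound10 {l : ℝ} (h0 : 0 < l) (h : l < (5 - Real.sqrt 21) / 2) :
    0 < l ^ 2 - 5 * l + 1 ∧ l < 1 / 4 := by
  have h4 : (4.5 : ℝ) < Real.sqrt 21 := by
    apply Real.lt_sqrt_of_sq_lt; norm_num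
  have hs : Real.sqrt 21 ^ 2 = 21 := Real.sq_sqrt (by norm_num)
  constructor
  · nlinarith
  · linarith

section
variable {l : ℝ}

lemma mem_cod10 (h0 : 0 < l) (i : ℕ → Fin 4) (y : ℝ) :
    i ∈ codings (G10 l) (G10 l (i 0) y) ↔ shift10 i ∈ codings (G10 l) y := by
  unfold codings
  simp only [Set.mem_setOf_eq]
  rw [← tendsto_add_atTop_iff_nat 1]
  have e : (fun n => codingApprox (G10 l) i (n + 1)) =
      fun n => l * codingApprox (G10 l) (shift10 i) n + T10 l (i 0) := by
    funext n; rfl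
  rw [e]
  constructor
  · intro h
    have := (h.sub_const (T10 l (i 0))).const_mul l⁻¹
    have e2 : l⁻¹ * (G10 l (i 0) y - T10 l (i 0)) = y := by
      unfold G10; field_simp; ring
    rw [e2] at this
    refine this.congr fun n => ?_
    field_simp; ring
  · intro h
    exact (h.const_mul l).add_const _

lemma mem_cons10 (h0 : 0 < l) (d : Fin 4) (i : ℕ → Fin 4) (y : ℝ) :
    cons10 d i ∈ codings (G10 l) (G10 l d y) ↔ i ∈ codings (G10 l) y :=
  mem_cod10 h0 (cons10 d i) y

lemma exists_pre10 (h0 : 0 < l) (d : Fin 4) (x : ℝ) : ∃ y, x = G10 l d y :=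
  ⟨l⁻¹ * (x - T10 l d), by unfold G10; field_simp; ring⟩

lemma G_inj10 (h0 : 0 < l) (d : Fin 4) : Function.Injective (G10 l d) := by
  intro x y h
  unfold G10 at h
  have : l * x = l * y := by linarith
  exact mul_left_cancel₀ h0.ne' this

lemma T_bd10 (h0 : 0 < l) (hq : 0 < l ^ 2 - 5 * l + 1) (h4 : l < 1 / 4) :
    ∀ d, 0 ≤ T10 l d ∧ T10 l d ≤ 1 - l := by
  refine cases10 ?_ ?_ ?_ ?_ <;> simp [T10] <;> (try constructor) <;> nlinarith

lemma approx_bd10 (h0 : 0 < l) (hq : 0 < l ^ 2 - 5 * l + 1) (h4 : l < 1 / 4) (n : ℕ) :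
    ∀ i, 0 ≤ codingApprox (G10 l) i n ∧ codingApprox (G10 l) i n ≤ 1 := by
  induction n with
  | zero => intro i; simp [codingApprox]
  | succ n ih =>
    intro i
    have := ih (fun k => i (k + 1))
    have ht := T_bd10 h0 hq h4 (i 0)
    simp only [codingApprox, G10]
    constructor
    · have := mul_nonneg h0.le this.1
      linarith [ht.1]
    · nlinarith [ht.2]

lemma cod_bd10 (h0 : 0 < l) (hq : 0 < l ^ 2 - 5 * l + 1) (h4 : l < 1 / 4) {x : ℝ}
    {i : ℕ → Fin 4} (hi : i ∈ codings (G10 l) x) : 0 ≤ x ∧ x ≤ 1 :=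
  ⟨ge_of_tendsto' hi fun n => (approx_bd10 h0 hq h4 n i).1,
    le_of_tendsto' hi fun n => (approx_bd10 h0 hq h4 n i).2⟩

/-- Any coding decomposes. -/
lemma cod_dec10 (h0 : 0 < l) (hq : 0 < l ^ 2 - 5 * l + 1) (h4 : l < 1 / 4) {x : ℝ}
    {i : ℕ → Fin 4} (hi : i ∈ codings (G10 l) x) :
    ∃ y, x = G10 l (i 0) y ∧ shift10 i ∈ codings (G10 l) y ∧ 0 ≤ y ∧ y ≤ 1 := by
  obtain ⟨y, hy⟩ := exists_pre10 h0 (i 0) x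
  have h := hi
  rw [hy, mem_cod10 h0] at h
  exact ⟨y, hy, h, cod_bd10 h0 hq h4 h⟩

lemma digit3_10 (h0 : 0 < l) (hq : 0 < l ^ 2 - 5 * l + 1) (h4 : l < 1 / 4) :
    ∀ d y, 0 ≤ y → y ≤ 1 → 1 - l ≤ G10 l d y → d = 3 := by
  refine cases10 ?_ ?_ ?_ ?_ <;> intro y hy0 hy1 h <;> simp [G10, T10] at h ⊢ <;> nlinarith

lemma digit0_10 (h0 : 0 < l) (hq : 0 < l ^ 2 - 5 * l + 1) (h4 : l < 1 / 4) :
    ∀ d y, 0 ≤ y → y ≤ 1 → G10 l d y ≤ l → d = 0 := by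
  refine cases10 ?_ ?_ ?_ ?_ <;> intro y hy0 hy1 h <;> simp [G10, T10] at h ⊢ <;> nlinarith

lemma cod3_10 (h0 : 0 < l) (hq : 0 < l ^ 2 - 5 * l + 1) (h4 : l < 1 / 4) {y : ℝ}
    (hy : 0 ≤ y) : codings (G10 l) (G10 l 3 y) = cons10 3 '' codings (G10 l) y := by
  ext i
  constructor
  · intro hi
    obtain ⟨z, hz, hs, hz0, hz1⟩ := cod_dec10 h0 hq h4 hi
    have hd : i 0 = 3 := by
      apply digit3_10 h0 hq h4 _ z hz0 hz1
      rw [← hz]; simp [G10, T10]; positivity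
    rw [hd] at hz
    rw [G_inj10 h0 3 hz]
    exact ⟨shift10 i, hs, by rw [← hd, cons_shift10]⟩
  · rintro ⟨j, hj, rfl⟩
    exact (mem_cons10 h0 3 j y).2 hj

lemma cod0_10 (h0 : 0 < l) (hq : 0 < l ^ 2 - 5 * l + 1) (h4 : l < 1 / 4) {y : ℝ}
    (hy : y ≤ 1) : codings (G10 l) (G10 l 0 y) = cons10 0 '' codings (G10 l) y := by
  ext i
  constructor
  · intro hi
    obtain ⟨z, hz, hs, hz0, hz1⟩ := cod_dec10 h0 hq h4 hi
    have hd : i 0 = 0 := by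
      apply digit0_10 h0 hq h4 _ z hz0 hz1
      rw [← hz]; simp [G10, T10]; nlinarith
    rw [hd] at hz
    rw [G_inj10 h0 0 hz]
    exact ⟨shift10 i, hs, by rw [← hd, cons_shift10]⟩
  · rintro ⟨j, hj, rfl⟩
    exact (mem_cons10 h0 0 j y).2 hj

lemma swap10 (w : ℝ) : G10 l 1 (G10 l 3 w) = G10 l 2 (G10 l 0 w) := by
  simp [G10, T10]; ring

lemma digit12_10 (h0 : 0 < l) (hq : 0 < l ^ 2 - 5 * l + 1) (h4 : l < 1 / 4) {w : ℝ}
    (hw0 : 0 ≤ w) (hw1 : w ≤ 1) :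
    ∀ d y, 0 ≤ y → y ≤ 1 → G10 l d y = G10 l 1 (G10 l 3 w) → d = 1 ∨ d = 2 := by
  have : 0 ≤ l * (l * w) := by positivity
  have : l * (l * w) ≤ l * l := by nlinarith [mul_pos h0 h0]
  refine cases10 ?_ ?_ ?_ ?_ <;> intro y hy0 hy1 h <;> simp [G10, T10] at h ⊢ <;> nlinarith

lemma cod12_10 (h0 : 0 < l) (hq : 0 < l ^ 2 - 5 * l + 1) (h4 : l < 1 / 4) {w : ℝ}
    (hw0 : 0 ≤ w) (hw1 : w ≤ 1) : codings (G10 l) (G10 l 1 (G10 l 3 w)) =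
      cons10 1 '' (cons10 3 '' codings (G10 l) w) ∪ cons10 2 '' (cons10 0 '' codings (G10 l) w) := by
  rw [← cod3_10 h0 hq h4 hw0, ← cod0_10 h0 hq h4 hw1]
  ext i
  constructor
  · intro hi
    obtain ⟨z, hz, hs, hz0, hz1⟩ := cod_dec10 h0 hq h4 hi
    rcases digit12_10 h0 hq h4 hw0 hw1 _ z hz0 hz1 hz.symm with hd | hd
    · left
      rw [hd] at hz
      rw [G_inj10 h0 1 hz]
      exact ⟨shift10 i, hs, by rw [← hd, cons_shift10]⟩
    · right
      rw [hd, swap10] at hz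
      rw [G_inj10 h0 2 hz]
      exact ⟨shift10 i, hs, by rw [← hd, cons_shift10]⟩
  · rintro (⟨j, hj, rfl⟩ | ⟨j, hj, rfl⟩)
    · exact (mem_cons10 h0 1 j _).2 hj
    · rw [swap10]
      exact (mem_cons10 h0 2 j _).2 hj

lemma enc12_10 (h0 : 0 < l) (hq : 0 < l ^ 2 - 5 * l + 1) (h4 : l < 1 / 4) {w : ℝ}
    (hw0 : 0 ≤ w) (hw1 : w ≤ 1) : (codings (G10 l) (G10 l 1 (G10 l 3 w))).encard =
      (codings (G10 l) w).encard + (codings (G10 l) w).encard := by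
  rw [cod12_10 h0 hq h4 hw0 hw1, Set.encard_union_eq]
  · simp only [(cons_inj10 _).encard_image]
  · rw [Set.disjoint_left]
    rintro _ ⟨j, hj, rfl⟩ ⟨k, hk, h⟩
    have := congrFun h 0
    simp [cons10] at this

/-- univoque points, described by codings only -/
def V10 (l : ℝ) : Set ℝ := {x | (codings (G10 l) x).encard = 1}

lemma overlap10 (h0 : 0 < l) (hq : 0 < l ^ 2 - 5 * l + 1) (h4 : l < 1 / 4) :
    ∀ d e : Fin 4, ∀ y z : ℝ, d ≠ e → 0 ≤ y → y ≤ 1 → 0 ≤ z → z ≤ 1 → G10 l d y = G10 l e z →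
      (d = 1 ∧ e = 2 ∧ 1 - l ≤ y) ∨ (d = 2 ∧ e = 1 ∧ 1 - l ≤ z) := by
  have key : ∀ y z : ℝ, 0 ≤ z → l * y + 2 * l = l * z + (3 * l - l ^ 2) → 1 - l ≤ y := by
    intro y z hz h
    have : l * y = l * (z + 1 - l) := by linarith
    have := mul_left_cancel₀ h0.ne' this
    linarith
  refine cases10 ?_ ?_ ?_ ?_ <;> refine cases10 ?_ ?_ ?_ ?_ <;>
    intro y z hne hy0 hy1 hz0 hz1 h <;> simp [G10, T10] at h hne ⊢
  all_goals first
    | exact key y z hz0 h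
    | exact key z y hy0 h.symm
    | nlinarith

lemma first_diff10 (h0 : 0 < l) (hq : 0 < l ^ 2 - 5 * l + 1) (h4 : l < 1 / 4) {x : ℝ}
    {i j : ℕ → Fin 4} (hi : i ∈ codings (G10 l) x) (hj : j ∈ codings (G10 l) x)
    (hne : i 0 ≠ j 0) : ∃ w, x = G10 l 1 (G10 l 3 w) ∧ (codings (G10 l) w).Nonempty := by
  obtain ⟨y, hy, hsy, hy0, hy1⟩ := cod_dec10 h0 hq h4 hi
  obtain ⟨z, hz, hsz, hz0, hz1⟩ := cod_dec10 h0 hq h4 hj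
  have main : ∀ y (k : ℕ → Fin 4), x = G10 l 1 y → k ∈ codings (G10 l) y → 1 - l ≤ y →
      ∃ w, x = G10 l 1 (G10 l 3 w) ∧ (codings (G10 l) w).Nonempty := by
    intro y k hx hk hy
    obtain ⟨w, hw, hsw, hw0, hw1⟩ := cod_dec10 h0 hq h4 hk
    have hd := digit3_10 h0 hq h4 _ w hw0 hw1 (hw ▸ hy)
    exact ⟨w, by rw [hx, hw, hd], _, hsw⟩
  rcases overlap10 h0 hq h4 _ _ y z hne hy0 hy1 hz0 hz1 (hy ▸ hz) with ⟨hd, he, h⟩ | ⟨hd, he, h⟩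
  · exact main y _ (hd ▸ hy) hsy h
  · exact main z _ (he ▸ hz) hsz h

lemma two10 (h0 : 0 < l) (hq : 0 < l ^ 2 - 5 * l + 1) (h4 : l < 1 / 4) (n : ℕ) :
    ∀ (x : ℝ) (i j : ℕ → Fin 4), i ∈ codings (G10 l) x → j ∈ codings (G10 l) x →
      (codings (G10 l) x).encard ≤ 2 → i n ≠ j n →
      ∃ v : List (Fin 4), ∃ w ∈ V10 l, x = v.foldr (G10 l) w := by
  have base : ∀ (x : ℝ) (i j : ℕ → Fin 4), i ∈ codings (G10 l) x → j ∈ codings (G10 l) x →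
      (codings (G10 l) x).encard ≤ 2 → i 0 ≠ j 0 →
      ∃ v : List (Fin 4), ∃ w ∈ V10 l, x = v.foldr (G10 l) w := by
    intro x i j hi hj hc hne
    obtain ⟨w, hw, k, hk⟩ := first_diff10 h0 hq h4 hi hj hne
    obtain ⟨hw0, hw1⟩ := cod_bd10 h0 hq h4 hk
    refine ⟨[1, 3], w, ?_, hw⟩
    rw [hw, enc12_10 h0 hq h4 hw0 hw1] at hc
    have h1 : 1 ≤ (codings (G10 l) w).encard := Set.one_le_encard_iff_nonempty.2 ⟨k, hk⟩
    show (codings (G10 l) w).encard = 1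
    generalize (codings (G10 l) w).encard = m at hc h1
    cases m with
    | top => simp at hc
    | coe m =>
      norm_cast at hc h1 ⊢
      omega
  induction n with
  | zero => exact base
  | succ n ih =>
    intro x i j hi hj hc hne
    by_cases h : i 0 = j 0
    · obtain ⟨y, hy, hsy, -, -⟩ := cod_dec10 h0 hq h4 hi
      have hsj : shift10 j ∈ codings (G10 l) y := by
        rw [← mem_cod10 h0, ← h, ← hy]; exact hj
      have hle : (codings (G10 l) y).encard ≤ 2 := by
        refine le_trans ?_ hc
        rw [← (cons_inj10 (i 0)).encard_image]
        apply Set.encard_le_encard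
        rintro _ ⟨k, hk, rfl⟩
        rw [hy]
        exact (mem_cons10 h0 _ k y).2 hk
      obtain ⟨v, w, hw, e⟩ := ih y _ _ hsy hsj hle hne
      exact ⟨i 0 :: v, w, hw, by rw [hy, e]; rfl⟩
    · exact base x i j hi hj hc h

lemma dim_le10 (d : Fin 4) (s : Set ℝ) : dimH (G10 l d '' s) ≤ dimH s := by
  have : LipschitzWith ‖l‖₊ (G10 l d) := by
    apply LipschitzWith.of_dist_le_mul
    intro x y
    simp only [G10, Real.dist_eq, coe_nnnorm, Real.norm_eq_abs]
    rw [← abs_mul]; apply le_of_eq; congr 1; ring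
  exact this.dimH_image_le s

lemma dim_eq10 (h0 : 0 < l) (d : Fin 4) (s : Set ℝ) : dimH (G10 l d '' s) = dimH s := by
  apply le_antisymm (dim_le10 d s)
  have : LipschitzWith ‖l⁻¹‖₊ (fun x => l⁻¹ * (x - T10 l d)) := by
    apply LipschitzWith.of_dist_le_mul
    intro x y
    simp only [Real.dist_eq, coe_nnnorm, Real.norm_eq_abs]
    rw [← abs_mul]; apply le_of_eq; congr 1; ring
  have h := this.dimH_image_le (G10 l d '' s)
  rw [Set.image_image] at h
  have e : (fun x => l⁻¹ * (G10 l d x - T10 l d)) = fun x => x := by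
    funext x; unfold G10; field_simp; ring
  rw [e, Set.image_id'] at h
  exact h

lemma dim_fold10 (v : List (Fin 4)) (s : Set ℝ) :
    dimH ((fun w => v.foldr (G10 l) w) '' s) ≤ dimH s := by
  induction v with
  | nil => simp
  | cons a v ih =>
    have : (fun w => (a :: v).foldr (G10 l) w) '' s =
        G10 l a '' ((fun w => v.foldr (G10 l) w) '' s) := by
      rw [Set.image_image]; rfl
    rw [this]
    exact (dim_le10 a _).trans ih

lemma K_sub10 (h0 : 0 < l) (h4 : l < 1 / 4) {K : Set ℝ} (hKcpt : IsCompact K)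
    (hK : ∀ x, x ∈ K ↔ ∃ d, ∃ y ∈ K, x = G10 l d y) {x : ℝ} (hx : x ∈ K) :
    (codings (G10 l) x).Nonempty := by
  obtain ⟨M, hM⟩ := hKcpt.isBounded.exists_norm_le
  have h1 : ∀ y : K, ∃ d, ∃ z : K, (y : ℝ) = G10 l d z := by
    rintro ⟨y, hy⟩
    obtain ⟨d, z, hz, e⟩ := (hK y).1 hy
    exact ⟨d, ⟨z, hz⟩, e⟩
  choose D S hS using h1
  have hb : ∀ n (y : K), |(y : ℝ) - codingApprox (G10 l) (fun k => D (S^[k] y)) n| ≤ l ^ n * M := by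
    intro n
    induction n with
    | zero => intro y; simpa [codingApprox] using hM y y.2
    | succ n ih =>
      intro y
      have := ih (S y)
      simp only [codingApprox]
      have e : (y : ℝ) - G10 l (D y) (codingApprox (G10 l) (fun k => D (S^[k + 1] y)) n) =
          l * ((S y : ℝ) - codingApprox (G10 l) (fun k => D (S^[k] (S y))) n) := by
        conv_lhs => rw [hS y]
        simp only [G10, Function.iterate_succ, Function.comp]; ring
      simp only [Function.iterate_zero, id]
      rw [e, abs_mul, abs_of_pos h0, pow_succ']
      nlinarith
  refine ⟨fun k => D (S^[k] ⟨x, hx⟩), ?_⟩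
  show Tendsto _ _ _
  rw [tendsto_iff_dist_tendsto_zero]
  have ht : Tendsto (fun n : ℕ => l ^ n * M) atTop (𝓝 0) := by
    simpa using (tendsto_pow_atTop_nhds_zero_of_lt_one h0.le (by linarith)).mul_const M
  refine squeeze_zero (fun _ => dist_nonneg) (fun n => ?_) ht
  rw [dist_comm, Real.dist_eq]
  exact hb n ⟨x, hx⟩

lemma K_sup10 (h0 : 0 < l) (h4 : l < 1 / 4) {K : Set ℝ} (hKne : K.Nonempty) (hKcpt : IsCompact K)
    (hK : ∀ x, x ∈ K ↔ ∃ d, ∃ y ∈ K, x = G10 l d y) {x : ℝ}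
    (hx : (codings (G10 l) x).Nonempty) : x ∈ K := by
  obtain ⟨i, hi⟩ := hx
  obtain ⟨k, hk⟩ := hKne
  have hb : ∀ n (i : ℕ → Fin 4), codingApprox (G10 l) i n + l ^ n * k ∈ K := by
    intro n
    induction n with
    | zero => intro i; simpa [codingApprox] using hk
    | succ n ih =>
      intro i
      rw [hK]
      refine ⟨i 0, _, ih (fun k => i (k + 1)), ?_⟩
      simp only [codingApprox, G10]; ring
  have ht : Tendsto (fun n : ℕ => l ^ n * k) atTop (𝓝 0) := by
    simpa using (tendsto_pow_atTop_nhds_zero_of_lt_one h0.le (by linarith)).mul_const k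
  have := Tendsto.add hi ht
  rw [add_zero] at this
  exact hKcpt.isClosed.mem_of_tendsto this (Eventually.of_forall fun n => hb n i)

end

/-- `U_1 ∩ (U_1 + (1 - λ)) = U_1 ∩ f_4(K)`, this set consists exactly of
the points whose unique coding begins with the digit `4`, and
`dim_H (U_2) = dim_H (U_1 ∩ (U_1 + (1 - λ))) = dim_H (U_1)`. -/
theorem statement10
    (lam : ℝ) (hlam : 0 < lam ∧ lam < (5 - Real.sqrt 21) / 2)
    (f : Fin 4 → ℝ → ℝ)
    (hf : f = ![fun x => lam * x, fun x => lam * x + 2 * lam,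
      fun x => lam * x + 3 * lam - lam ^ 2, fun x => lam * x + 1 - lam])
    (K : Set ℝ) (hKne : K.Nonempty) (hKcpt : IsCompact K)
    (hK : K = f 0 '' K ∪ f 1 '' K ∪ f 2 '' K ∪ f 3 '' K)
    (U : ℕ → Set ℝ)
    (hU : ∀ k : ℕ, U k = {x ∈ K | (codings f x).encard = (k : ℕ∞)})
    :
    U 1 ∩ (fun u => u + (1 - lam)) '' U 1 = U 1 ∩ f 3 '' K ∧
    U 1 ∩ (fun u => u + (1 - lam)) '' U 1 =
      {x | ∃ i : ℕ → Fin 4, codings f x = {i} ∧ i 0 = 3} ∧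
    dimH (U 2) = dimH (U 1 ∩ (fun u => u + (1 - lam)) '' U 1) ∧
    dimH (U 2) = dimH (U 1) := by
  obtain ⟨h0, hl⟩ := hlam
  obtain ⟨hq, h4⟩ := bound10 h0 hl
  have hfG : f = G10 lam := by
    rw [hf]; funext d x
    revert d
    refine cases10 ?_ ?_ ?_ ?_ <;> simp [G10, T10] <;> ring
  clear hf
  subst hfG
  have hK' : ∀ x, x ∈ K ↔ ∃ d, ∃ y ∈ K, x = G10 lam d y := by
    intro x
    constructor
    · intro hx
      rw [hK] at hx
      rcases hx with ((⟨y, hy, e⟩ | ⟨y, hy, e⟩) | ⟨y, hy, e⟩) | ⟨y, hy, e⟩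
      · exact ⟨0, y, hy, e.symm⟩
      · exact ⟨1, y, hy, e.symm⟩
      · exact ⟨2, y, hy, e.symm⟩
      · exact ⟨3, y, hy, e.symm⟩
    · rintro ⟨d, y, hy, e⟩
      rw [hK]
      revert d
      refine cases10 ?_ ?_ ?_ ?_ <;> intro e
      · exact Or.inl (Or.inl (Or.inl ⟨y, hy, e.symm⟩))
      · exact Or.inl (Or.inl (Or.inr ⟨y, hy, e.symm⟩))
      · exact Or.inl (Or.inr ⟨y, hy, e.symm⟩)
      · exact Or.inr ⟨y, hy, e.symm⟩
  have hKc : ∀ x, x ∈ K ↔ (codings (G10 lam) x).Nonempty := fun x =>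
    ⟨K_sub10 h0 h4 hKcpt hK', K_sup10 h0 h4 hKne hKcpt hK'⟩
  have hKb : ∀ x ∈ K, 0 ≤ x ∧ x ≤ 1 := fun x hx => by
    obtain ⟨i, hi⟩ := (hKc x).1 hx
    exact cod_bd10 h0 hq h4 hi
  have hU1 : U 1 = V10 lam := by
    rw [hU]
    ext x
    simp only [V10, Set.mem_setOf_eq, Nat.cast_one]
    refine ⟨fun h => h.2, fun h => ⟨(hKc x).2 ?_, h⟩⟩
    rw [← Set.one_le_encard_iff_nonempty, h]
  have hVb : ∀ x ∈ V10 lam, x ∈ K := fun x hx => by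
    rw [hKc, ← Set.one_le_encard_iff_nonempty, hx]
  rw [hU1]
  have h3 : ∀ y ∈ K, (G10 lam 3 y ∈ V10 lam ↔ y ∈ V10 lam) := fun y hy => by
    show _ = _ ↔ _ = _
    rw [cod3_10 h0 hq h4 (hKb y hy).1, (cons_inj10 3).encard_image]
  have hz : ∀ y ∈ K, (G10 lam 0 y ∈ V10 lam ↔ y ∈ V10 lam) := fun y hy => by
    show _ = _ ↔ _ = _
    rw [cod0_10 h0 hq h4 (hKb y hy).2, (cons_inj10 0).encard_image]
  have hA : V10 lam ∩ G10 lam 3 '' K = G10 lam 3 '' V10 lam := by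
    ext x
    constructor
    · rintro ⟨hx, y, hy, rfl⟩
      exact ⟨y, (h3 y hy).1 hx, rfl⟩
    · rintro ⟨y, hy, rfl⟩
      exact ⟨(h3 y (hVb y hy)).2 hy, y, hVb y hy, rfl⟩
  have hB : V10 lam ∩ (fun u => u + (1 - lam)) '' V10 lam = V10 lam ∩ G10 lam 3 '' K := by
    ext x
    constructor
    · rintro ⟨hx, u, hu, rfl⟩
      refine ⟨hx, ?_⟩
      obtain ⟨d, y, hy, e⟩ := (hK' _).1 (hVb _ hx)
      have hd : d = 3 := by
        apply digit3_10 h0 hq h4 d y (hKb y hy).1 (hKb y hy).2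
        rw [← e]
        have := (hKb u (hVb u hu)).1
        simp only
        linarith
      exact ⟨y, hy, by rw [e, hd]⟩
    · rintro ⟨hx, y, hy, rfl⟩
      refine ⟨hx, G10 lam 0 y, (hz y hy).2 ((h3 y hy).1 hx), ?_⟩
      simp [G10, T10]
  have hdim : dimH (U 2) = dimH (V10 lam) := by
    rw [hU]
    apply le_antisymm
    · have hsub : {x ∈ K | (codings (G10 lam) x).encard = ((2 : ℕ) : ℕ∞)} ⊆
          ⋃ v : List (Fin 4), (fun w => v.foldr (G10 lam) w) '' V10 lam := by
        rintro x ⟨hx, hc⟩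
        have hc' : (codings (G10 lam) x).encard = 2 := by rw [hc]; rfl
        obtain ⟨i, j, hij, e⟩ := Set.encard_eq_two.1 hc'
        obtain ⟨n, hn⟩ := Function.ne_iff.1 hij
        obtain ⟨v, w, hw, e⟩ := two10 h0 hq h4 n x i j (by rw [e]; simp) (by rw [e]; simp)
          hc'.le hn
        exact Set.mem_iUnion.2 ⟨v, w, hw, e.symm⟩
      refine (dimH_mono hsub).trans ?_
      rw [dimH_iUnion]
      exact iSup_le fun v => dim_fold10 v _
    · rw [← dim_eq10 h0 3 (V10 lam), ← dim_eq10 h0 1 (G10 lam 3 '' V10 lam)]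
      apply dimH_mono
      rintro _ ⟨_, ⟨w, hw, rfl⟩, rfl⟩
      have hb := hKb w (hVb w hw)
      refine ⟨(hK' _).2 ⟨1, _, (hK' _).2 ⟨3, w, hVb w hw, rfl⟩, rfl⟩, ?_⟩
      rw [enc12_10 h0 hq h4 hb.1 hb.2, hw]
      norm_num
  refine ⟨hB, ?_, ?_, hdim⟩
  · rw [hB]
    ext x
    constructor
    · rintro ⟨hx, y, hy, rfl⟩
      obtain ⟨k, hk⟩ := Set.encard_eq_one.1 ((h3 y hy).1 hx)
      refine ⟨cons10 3 k, ?_, rfl⟩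
      rw [cod3_10 h0 hq h4 (hKb y hy).1, hk, Set.image_singleton]
    · rintro ⟨i, hi, hi0⟩
      refine ⟨Set.encard_eq_one.2 ⟨i, hi⟩, ?_⟩
      have him : i ∈ codings (G10 lam) x := by rw [hi]; rfl
      obtain ⟨y, hy, hs, -, -⟩ := cod_dec10 h0 hq h4 him
      exact ⟨y, (hKc y).2 ⟨_, hs⟩, by rw [hy, hi0]⟩
  · rw [hB, hA, hdim, dim_eq10 h0]
end

section
/- For every integer k ≥ 1, f_2(f_4(U_{2^k})) ⊆ U_{2^{k+1}}, i.e. if y ∈ K has exactly 2^k codings then f_2(f_4(y)) has exactly 2^{k+1} codings. -/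
open Filter Topology

/-- Prepend two digits to a coding. -/
def pre2 (a b : Fin 4) (j : ℕ → Fin 4) : ℕ → Fin 4
  | 0 => a
  | 1 => b
  | n + 2 => j n

theorem pre2_injective (a b : Fin 4) : Function.Injective (pre2 a b) := by
  intro i j h
  funext n
  exact congrFun h (n + 2)

theorem codings_shift {lam : ℝ} (h0 : lam ≠ 0) {c : Fin 4 → ℝ} {f : Fin 4 → ℝ → ℝ}
    (hf : ∀ a x, f a x = lam * x + c a) (i : ℕ → Fin 4) (z : ℝ) :
    i ∈ codings f (f (i 0) z) ↔ (fun n => i (n + 1)) ∈ codings f z := by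
  unfold codings
  simp only [Set.mem_setOf_eq]
  rw [← tendsto_add_atTop_iff_nat 1]
  have e : (fun n => codingApprox f i (n + 1)) =
      fun n => lam * codingApprox f (fun k => i (k + 1)) n + c (i 0) := by
    funext n
    rw [codingApprox, hf]
  rw [e, hf]
  constructor
  · intro h
    have h2 := (h.sub_const (c (i 0))).const_mul lam⁻¹
    simpa [h0] using h2
  · intro h
    exact (h.const_mul lam).add_const _

theorem codings_bounds {f : Fin 4 → ℝ → ℝ}
    (hf : ∀ a x, 0 ≤ x → x ≤ 1 → 0 ≤ f a x ∧ f a x ≤ 1) {x : ℝ} {i : ℕ → Fin 4}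
    (hi : i ∈ codings f x) : 0 ≤ x ∧ x ≤ 1 := by
  have key : ∀ n, ∀ i, 0 ≤ codingApprox f i n ∧ codingApprox f i n ≤ 1 := by
    intro n
    induction n with
    | zero => intro i; simp [codingApprox]
    | succ n ih =>
      intro i
      rw [codingApprox]
      exact hf _ _ (ih _).1 (ih _).2
  exact ⟨ge_of_tendsto' hi fun n => (key n i).1, le_of_tendsto' hi fun n => (key n i).2⟩

theorem codings_peel {lam : ℝ} (h0 : lam ≠ 0) {c : Fin 4 → ℝ} {f : Fin 4 → ℝ → ℝ}
    (hf : ∀ a x, f a x = lam * x + c a)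
    (hb : ∀ a x, 0 ≤ x → x ≤ 1 → 0 ≤ f a x ∧ f a x ≤ 1) {x : ℝ} {i : ℕ → Fin 4}
    (hi : i ∈ codings f x) :
    ∃ z, x = lam * z + c (i 0) ∧ 0 ≤ z ∧ z ≤ 1 ∧ (fun n => i (n + 1)) ∈ codings f z := by
  have e : x = lam * ((x - c (i 0)) / lam) + c (i 0) := by field_simp; ring
  refine ⟨(x - c (i 0)) / lam, e, ?_⟩
  have h : (fun n => i (n + 1)) ∈ codings f ((x - c (i 0)) / lam) := by
    rw [← codings_shift h0 hf, hf, ← e]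
    exact hi
  exact ⟨(codings_bounds hb h).1, (codings_bounds hb h).2, h⟩

/-- for every `k ≥ 1`, `f_2 (f_4 (U_{2^k})) ⊆ U_{2^{k+1}}`. -/
theorem statement11
    (lam : ℝ) (hlam : 0 < lam ∧ lam < (5 - Real.sqrt 21) / 2)
    (f : Fin 4 → ℝ → ℝ)
    (hf : f = ![fun x => lam * x, fun x => lam * x + 2 * lam,
      fun x => lam * x + 3 * lam - lam ^ 2, fun x => lam * x + 1 - lam])
    (K : Set ℝ) (hKne : K.Nonempty) (hKcpt : IsCompact K)
    (hK : K = f 0 '' K ∪ f 1 '' K ∪ f 2 '' K ∪ f 3 '' K)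
    (U : ℕ → Set ℝ)
    (hU : ∀ k : ℕ, U k = {x ∈ K | (codings f x).encard = (k : ℕ∞)})
    (k : ℕ) (hk : 1 ≤ k) :
    (f 1 ∘ f 3) '' U (2 ^ k) ⊆ U (2 ^ (k + 1)) := by
  obtain ⟨hl0, hl1⟩ := hlam
  have hs : (4.5 : ℝ) < Real.sqrt 21 := by
    apply Real.lt_sqrt_of_sq_lt; norm_num
  have hs2 : Real.sqrt 21 ^ 2 = 21 := Real.sq_sqrt (by norm_num)
  have hl4 : lam < 1 / 4 := by linarith
  have hq : 0 < lam ^ 2 - 5 * lam + 1 := by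
    nlinarith [mul_pos (show 0 < (5 - Real.sqrt 21) / 2 - lam by linarith)
      (show 0 < (5 + Real.sqrt 21) / 2 - lam by linarith)]
  have hsq : 0 < lam ^ 2 := by positivity
  have hsq' : lam ^ 2 < lam / 4 := by nlinarith
  let c : Fin 4 → ℝ := ![0, 2 * lam, 3 * lam - lam ^ 2, 1 - lam]
  have hfc : ∀ a x, f a x = lam * x + c a := by
    intro a x
    subst hf
    fin_cases a <;> simp [c] <;> ring
  have hne : lam ≠ 0 := hl0.ne'
  have hb : ∀ a x, 0 ≤ x → x ≤ 1 → 0 ≤ f a x ∧ f a x ≤ 1 := by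
    intro a x h1 h2
    have h3 : 0 ≤ lam * x := by positivity
    have h4 : lam * x ≤ lam := by nlinarith
    rw [hfc]
    fin_cases a <;> simp [c] <;> constructor <;> linarith
  have c0 : c 0 = 0 := rfl
  have c1 : c 1 = 2 * lam := rfl
  have c2 : c 2 = 3 * lam - lam ^ 2 := rfl
  have c3 : c 3 = 1 - lam := rfl
  have hover : ∀ y, f 1 (f 3 y) = f 2 (f 0 y) := by
    intro y
    simp only [hfc, c0, c1, c2, c3]; ring
  rintro _ ⟨y, hy, rfl⟩
  rw [hU] at hy ⊢
  obtain ⟨hyK, hyc⟩ := hy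
  have hsub : ∀ a, ∀ x ∈ K, f a x ∈ K := by
    intro a x hx
    rw [hK]
    have hm : f a x ∈ f a '' K := ⟨x, hx, rfl⟩
    fin_cases a
    · exact Or.inl (Or.inl (Or.inl hm))
    · exact Or.inl (Or.inl (Or.inr hm))
    · exact Or.inl (Or.inr hm)
    · exact Or.inr hm
  refine ⟨hsub _ _ (hsub _ _ hyK), ?_⟩
  have hyne : (codings f y).Nonempty := by
    rw [← Set.encard_ne_zero, hyc]
    exact_mod_cast (pow_pos (by norm_num : 0 < 2) k).ne'
  obtain ⟨j0, hj0⟩ := hyne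
  obtain ⟨hy0, hy1⟩ := codings_bounds hb hj0
  have hly0 : 0 ≤ lam * y := by positivity
  have hly1 : lam * y ≤ lam := by nlinarith
  have hlly0 : 0 ≤ lam ^ 2 * y := by positivity
  have hlly1 : lam ^ 2 * y ≤ lam ^ 2 := by nlinarith
  have hset : codings f ((f 1 ∘ f 3) y) =
      pre2 1 3 '' codings f y ∪ pre2 2 0 '' codings f y := by
    ext i
    constructor
    · intro hi
      obtain ⟨z, hz, hz0, hz1, hiz⟩ := codings_peel hne hfc hb hi
      obtain ⟨w, hw, hw0, hw1, hiw⟩ := codings_peel hne hfc hb hiz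
      have hz' : lam ^ 2 * y + 3 * lam - lam ^ 2 = lam * z + c (i 0) := by
        rw [← hz]
        simp only [Function.comp, hfc, c1, c3]; ring
      have e1 : 0 ≤ lam * z := by positivity
      have e2 : lam * z ≤ lam := by nlinarith
      have e3 : 0 ≤ lam * w := by positivity
      have e4 : lam * w ≤ lam := by nlinarith
      have hi0 : ∀ a : Fin 4, a = 0 ∨ a = 1 ∨ a = 2 ∨ a = 3 := by decide
      have fin : ∀ a b, i 0 = a → i 1 = b → w = y → i ∈ pre2 a b '' codings f y := by
        intro a b ha hb' hwy
        refine ⟨fun n => i (n + 2), hwy ▸ hiw, ?_⟩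
        funext n
        match n with
        | 0 => exact ha.symm
        | 1 => exact hb'.symm
        | n + 2 => rfl
      change z = lam * w + c (i 1) at hw
      rcases hi0 (i 0) with h | h | h | h
      · rw [h, c0] at hz'
        exfalso; linarith
      · left
        rw [h, c1] at hz'
        have hzz : z = lam * y + 1 - lam := by
          apply mul_left_cancel₀ hne; linarith
        rcases hi0 (i 1) with g | g | g | g
        · rw [g, c0] at hw; exfalso; linarith
        · rw [g, c1] at hw; exfalso; linarith
        · rw [g, c2] at hw; exfalso; linarith
        · rw [g, c3] at hw
          exact fin 1 3 h g (by apply mul_left_cancel₀ hne; linarith)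
      · right
        rw [h, c2] at hz'
        have hzz : z = lam * y := by
          apply mul_left_cancel₀ hne; linarith
        rcases hi0 (i 1) with g | g | g | g
        · rw [g, c0] at hw
          exact fin 2 0 h g (by apply mul_left_cancel₀ hne; linarith)
        · rw [g, c1] at hw; exfalso; linarith
        · rw [g, c2] at hw; exfalso; linarith
        · rw [g, c3] at hw; exfalso; linarith
      · rw [h, c3] at hz'
        exfalso; linarith
    · have back : ∀ a b, ∀ j ∈ codings f y, pre2 a b j ∈ codings f (f a (f b y)) := by
        intro a b j hj
        refine (codings_shift hne hfc (pre2 a b j) (f b y)).2 ?_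
        exact (codings_shift hne hfc (fun n => pre2 a b j (n + 1)) y).2 hj
      rintro (⟨j, hj, rfl⟩ | ⟨j, hj, rfl⟩)
      · exact back 1 3 j hj
      · change _ ∈ codings f (f 1 (f 3 y))
        rw [hover]
        exact back 2 0 j hj
  rw [hset, Set.encard_union_eq, (pre2_injective 1 3).encard_image,
    (pre2_injective 2 0).encard_image, hyc]
  · rw [← Nat.cast_add, pow_succ, mul_two]
  · rw [Set.disjoint_left]
    rintro _ ⟨j, hj, rfl⟩ ⟨j', hj', h⟩
    have := congrFun h 0
    simp [pre2] at this
end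

section
/- For every integer i ≥ 1, U_{2i+1} = ∅, i.e. no point of K has exactly 2i+1 distinct codings. -/
open Filter Topology

/-- Prepend a digit to a sequence. -/
def cns (a : Fin 4) (j : ℕ → Fin 4) : ℕ → Fin 4
  | 0 => a
  | n + 1 => j n

theorem cns_inj (a : Fin 4) : Function.Injective (cns a) := by
  intro i j h
  funext n
  exact congrFun h (n + 1)

theorem cns_eta (i : ℕ → Fin 4) : cns (i 0) (fun n => i (n + 1)) = i := by
  funext n
  cases n <;> rfl

section

variable {lam : ℝ} {c : Fin 4 → ℝ} {f : Fin 4 → ℝ → ℝ}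

theorem mem_cns_iff (h0 : 0 < lam) (hf : ∀ a x, f a x = lam * x + c a) (a : Fin 4)
    (j : ℕ → Fin 4) (y : ℝ) : cns a j ∈ codings f (lam * y + c a) ↔ j ∈ codings f y := by
  unfold codings
  simp only [Set.mem_setOf_eq]
  rw [← tendsto_add_atTop_iff_nat 1]
  have e : (fun n => codingApprox f (cns a j) (n + 1))
      = fun n => lam * codingApprox f j n + c a := by
    funext n
    show f a (codingApprox f j n) = _
    rw [hf]
  rw [e]
  constructor
  · intro h
    have h2 := (h.sub_const (c a)).const_mul lam⁻¹
    simpa [h0.ne'] using h2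
  · intro h
    exact (h.const_mul lam).add_const (c a)

theorem exists_tail (h0 : 0 < lam) (hf : ∀ a x, f a x = lam * x + c a)
    {i : ℕ → Fin 4} {x : ℝ} (hi : i ∈ codings f x) :
    ∃ y, x = lam * y + c (i 0) ∧ (fun n => i (n + 1)) ∈ codings f y := by
  refine ⟨(x - c (i 0)) / lam, by field_simp; ring, ?_⟩
  rw [← mem_cns_iff h0 hf (i 0), cns_eta]
  convert hi using 2
  field_simp
  ring

theorem mem_unit (h0 : 0 < lam) (hf : ∀ a x, f a x = lam * x + c a)
    (hc0 : ∀ a, 0 ≤ c a) (hc1 : ∀ a, c a ≤ 1 - lam)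
    {i : ℕ → Fin 4} {x : ℝ} (hi : i ∈ codings f x) : 0 ≤ x ∧ x ≤ 1 := by
  have key : ∀ n, ∀ i : ℕ → Fin 4, codingApprox f i n ∈ Set.Icc (0 : ℝ) 1 := by
    intro n
    induction n with
    | zero => intro i; simp [codingApprox]
    | succ n ih =>
      intro i
      obtain ⟨h1, h2⟩ := ih (fun k => i (k + 1))
      simp only [codingApprox, hf]
      have := hc0 (i 0)
      have := hc1 (i 0)
      constructor
      · positivity
      · nlinarith
  exact isClosed_Icc.mem_of_tendsto hi (Eventually.of_forall fun n => key n i)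

theorem double (h0 : 0 < lam) (h1 : 0 < 1 - 5 * lam + lam ^ 2) (h2 : lam < 1 / 4)
    (hf : ∀ a x, f a x = lam * x + c a)
    (c0 : c 0 = 0) (c1 : c 1 = 2 * lam) (c2 : c 2 = 3 * lam - lam ^ 2) (c3 : c 3 = 1 - lam)
    {i j : ℕ → Fin 4} {x : ℝ} (hi : i ∈ codings f x) (hj : j ∈ codings f x)
    (hij : i 0 ≠ j 0) : ∃ w, (codings f x).encard = 2 * (codings f w).encard := by
  have hc0 : ∀ a, 0 ≤ c a := by
    intro a; fin_cases a <;> simp [c0, c1, c2, c3] <;> nlinarith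
  have hc1 : ∀ a, c a ≤ 1 - lam := by
    intro a; fin_cases a <;> simp [c0, c1, c2, c3] <;> nlinarith
  have unit := fun {i : ℕ → Fin 4} {x : ℝ} (h : i ∈ codings f x) => mem_unit h0 hf hc0 hc1 h
  have bd : ∀ {k : ℕ → Fin 4} {x : ℝ}, k ∈ codings f x → c (k 0) ≤ x ∧ x ≤ c (k 0) + lam := by
    intro k x hk
    obtain ⟨y, hy, hy'⟩ := exists_tail h0 hf hk
    obtain ⟨a, b⟩ := unit hy'
    constructor <;> nlinarith
  -- the point lies in the overlap
  have hx : 3 * lam - lam ^ 2 ≤ x ∧ x ≤ 3 * lam := by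
    have a := bd hi
    have b := bd hj
    generalize i 0 = p at *
    generalize j 0 = q at *
    fin_cases p <;> fin_cases q <;> simp [c0, c1, c2, c3] at a b hij <;> constructor <;> nlinarith
  have hd : ∀ k ∈ codings f x, k 0 = 1 ∨ k 0 = 2 := by
    intro k hk
    have a := bd hk
    generalize k 0 = p at *
    fin_cases p <;> simp [c0, c1, c2, c3] at a ⊢ <;> nlinarith
  have hxw : ∃ w, x = lam ^ 2 * w + 3 * lam - lam ^ 2 :=
    ⟨(x - (3 * lam - lam ^ 2)) / lam ^ 2, by field_simp; ring⟩
  obtain ⟨w, hw⟩ := hxw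
  refine ⟨w, ?_⟩
  have e1 : x = lam * (lam * w + c 3) + c 1 := by rw [hw, c3, c1]; ring
  have e2 : x = lam * (lam * w + c 0) + c 2 := by rw [hw, c0, c2]; ring
  have hset : codings f x = ((fun k => cns 1 (cns 3 k)) '' codings f w) ∪
      ((fun k => cns 2 (cns 0 k)) '' codings f w) := by
    ext k
    constructor
    · intro hk
      obtain ⟨y, hy, hy'⟩ := exists_tail h0 hf hk
      have b := bd hy'
      simp only [zero_add] at b
      have ek := cns_eta k
      have ek1 := cns_eta (fun n => k (n + 1))
      simp only [zero_add] at ek1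
      rcases hd k hk with h | h
      · left
        rw [h] at hy ek
        have hyw : y = lam * w + c 3 := by
          have : lam * y = lam * (lam * w + c 3) := by linarith
          exact mul_left_cancel₀ h0.ne' this
        have hw0 : 0 ≤ lam * (lam * w) := by nlinarith
        have hw1 : 0 ≤ lam * w := nonneg_of_mul_nonneg_right hw0 h0
        have h3 : k 1 = 3 := by
          generalize k 1 = p at *
          fin_cases p <;> simp [c0, c1, c2, c3] at b hyw ⊢ <;> nlinarith
        rw [h3] at ek1
        refine ⟨fun n => k (n + 1 + 1), ?_, ?_⟩
        · rw [← mem_cns_iff h0 hf 3, ek1, ← hyw]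
          exact hy'
        · simp only [ek1, ek]
      · right
        rw [h] at hy ek
        have hyw : y = lam * w + c 0 := by
          have : lam * y = lam * (lam * w + c 0) := by linarith
          exact mul_left_cancel₀ h0.ne' this
        have hw0 : 0 ≤ lam * (lam - y) := by nlinarith
        have hw1 : 0 ≤ lam - y := nonneg_of_mul_nonneg_right hw0 h0
        have h3 : k 1 = 0 := by
          generalize k 1 = p at *
          fin_cases p <;> simp [c0, c1, c2, c3] at b hyw ⊢ <;> nlinarith
        rw [h3] at ek1
        refine ⟨fun n => k (n + 1 + 1), ?_, ?_⟩
        · rw [← mem_cns_iff h0 hf 0, ek1, ← hyw]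
          exact hy'
        · simp only [ek1, ek]
    · rintro (⟨l, hl, rfl⟩ | ⟨l, hl, rfl⟩)
      · rw [e1]
        exact (mem_cns_iff h0 hf _ _ _).2 ((mem_cns_iff h0 hf _ _ _).2 hl)
      · rw [e2]
        exact (mem_cns_iff h0 hf _ _ _).2 ((mem_cns_iff h0 hf _ _ _).2 hl)
  have hdisj : Disjoint ((fun k => cns 1 (cns 3 k)) '' codings f w)
      ((fun k => cns 2 (cns 0 k)) '' codings f w) := by
    rw [Set.disjoint_left]
    rintro _ ⟨l, _, rfl⟩ ⟨m, _, hm⟩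
    have : (2 : Fin 4) = 1 := congrFun hm 0
    exact absurd this (by decide)
  have i1 : Function.Injective (fun k => cns 1 (cns 3 k)) := (cns_inj 1).comp (cns_inj 3)
  have i2 : Function.Injective (fun k => cns 2 (cns 0 k)) := (cns_inj 2).comp (cns_inj 0)
  rw [hset, Set.encard_union_eq hdisj, i1.encard_image, i2.encard_image, two_mul]

end

/-- for every `i ≥ 1`, no point of `K` has exactly `2i + 1` codings. -/
theorem statement12
    (lam : ℝ) (hlam : 0 < lam ∧ lam < (5 - Real.sqrt 21) / 2)
    (f : Fin 4 → ℝ → ℝ)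
    (hf : f = ![fun x => lam * x, fun x => lam * x + 2 * lam,
      fun x => lam * x + 3 * lam - lam ^ 2, fun x => lam * x + 1 - lam])
    (K : Set ℝ) (hKne : K.Nonempty) (hKcpt : IsCompact K)
    (hK : K = f 0 '' K ∪ f 1 '' K ∪ f 2 '' K ∪ f 3 '' K)
    (U : ℕ → Set ℝ)
    (hU : ∀ k : ℕ, U k = {x ∈ K | (codings f x).encard = (k : ℕ∞)})
    (i : ℕ) (hi : 1 ≤ i) :
    U (2 * i + 1) = ∅ := by
  obtain ⟨h0, hl⟩ := hlam
  have hs := Real.sq_sqrt (show (0 : ℝ) ≤ 21 by norm_num)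
  have hs0 := Real.sqrt_nonneg 21
  have h1 : 0 < 1 - 5 * lam + lam ^ 2 := by nlinarith
  have h2 : lam < 1 / 4 := by
    have : (4.5 : ℝ) < Real.sqrt 21 := Real.lt_sqrt_of_sq_lt (by norm_num)
    linarith
  obtain ⟨c, hc⟩ : ∃ c : Fin 4 → ℝ, c = ![0, 2 * lam, 3 * lam - lam ^ 2, 1 - lam] := ⟨_, rfl⟩
  have hf' : ∀ a x, f a x = lam * x + c a := by
    intro a x
    fin_cases a <;> simp [hf, hc] <;> ring
  have c0 : c 0 = 0 := by simp [hc]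
  have c1 : c 1 = 2 * lam := by simp [hc]
  have c2 : c 2 = 3 * lam - lam ^ 2 := by simp [hc]
  have c3 : c 3 = 1 - lam := by simp [hc]
  have first : ∀ x, (codings f x).encard = ((2 * i + 1 : ℕ) : ℕ∞) →
      ∀ p ∈ codings f x, ∀ q ∈ codings f x, p 0 = q 0 := by
    intro x hx p hp q hq
    by_contra hne
    obtain ⟨w, hw⟩ := double h0 h1 h2 hf' c0 c1 c2 c3 hp hq hne
    rw [hx] at hw
    rcases h : (codings f w).encard with _ | m
    · rw [h] at hw
      exact absurd hw (by
        change ((2 * i + 1 : ℕ) : ℕ∞) ≠ 2 * ⊤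
        rw [ENat.mul_top (by norm_num)]
        exact ENat.coe_ne_top _)
    · rw [h] at hw
      change ((2 * i + 1 : ℕ) : ℕ∞) = 2 * (m : ℕ∞) at hw
      have : 2 * i + 1 = 2 * m := by exact_mod_cast hw
      omega
  have all : ∀ n, ∀ x, (codings f x).encard = ((2 * i + 1 : ℕ) : ℕ∞) →
      ∀ p ∈ codings f x, ∀ q ∈ codings f x, p n = q n := by
    intro n
    induction n with
    | zero => exact first
    | succ n ih =>
      intro x hx p hp q hq
      obtain ⟨y, hy, hpy⟩ := exists_tail h0 hf' hp
      have himg : codings f x = cns (p 0) '' codings f y := by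
        ext k
        constructor
        · intro hk
          refine ⟨fun n => k (n + 1), ?_, ?_⟩
          · rw [← mem_cns_iff h0 hf' (p 0), ← hy, first x hx p hp k hk, cns_eta]
            exact hk
          · rw [first x hx p hp k hk, cns_eta]
        · rintro ⟨l, hl, rfl⟩
          rw [hy]
          exact (mem_cns_iff h0 hf' _ _ _).2 hl
      have hycard : (codings f y).encard = ((2 * i + 1 : ℕ) : ℕ∞) := by
        rw [← hx, himg, (cns_inj (p 0)).encard_image]
      rw [himg] at hq
      obtain ⟨l, hl, rfl⟩ := hq
      exact ih y hycard _ hpy l hl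
  rw [hU, Set.eq_empty_iff_forall_notMem]
  rintro x ⟨-, hx⟩
  have hle : (codings f x).encard ≤ 1 := by
    rw [Set.encard_le_one_iff]
    intro p q hp hq
    funext n
    exact all n x hx p hp q hq
  rw [hx] at hle
  have : 2 * i + 1 ≤ 1 := by exact_mod_cast hle
  omega
end

section
/- If m is an even positive integer that is not a power of 2 (i.e. m = 2^ℓ(2j+1) with ℓ ≥ 1 and j ≥ 1), then U_m = ∅, i.e. no point of K has exactly m distinct codings. -/
open Filter Topology

/-- Translation parts of the four maps. -/
noncomputable def bb (lam : ℝ) : Fin 4 → ℝ :=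
  ![0, 2 * lam, 3 * lam - lam ^ 2, 1 - lam]

/-- The iterated function system, in the form `lam * x + b`. -/
noncomputable def ff (lam : ℝ) : Fin 4 → ℝ → ℝ := fun a x => lam * x + bb lam a

/-- Prepend a digit. -/
def pre (a : Fin 4) (i : ℕ → Fin 4) : ℕ → Fin 4
  | 0 => a
  | n + 1 => i n

lemma pre_inj (a : Fin 4) : Function.Injective (pre a) := by
  intro i i' h
  funext n
  exact congrFun h (n + 1)

lemma pre_tail (i : ℕ → Fin 4) : pre (i 0) (fun k => i (k + 1)) = i := by
  funext n
  cases n <;> rfl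

lemma lam_facts {lam : ℝ} (hlam : 0 < lam ∧ lam < (5 - Real.sqrt 21) / 2) :
    0 < lam ∧ 4 * lam < 1 ∧ 4 * lam - lam ^ 2 < 1 - lam := by
  obtain ⟨h0, h1⟩ := hlam
  have hs : Real.sqrt 21 ^ 2 = 21 := Real.sq_sqrt (by norm_num)
  have hp : 0 ≤ Real.sqrt 21 := Real.sqrt_nonneg _
  have h4 : 4.5 < Real.sqrt 21 := by
    apply Real.lt_sqrt_of_sq_lt; norm_num
  refine ⟨h0, by linarith, by nlinarith⟩

lemma bb_bounds {lam : ℝ} (h0 : 0 < lam) (h1 : 4 * lam < 1)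
    (a : Fin 4) : 0 ≤ bb lam a ∧ bb lam a + lam ≤ 1 := by
  fin_cases a <;> simp [bb] <;> (try constructor) <;> nlinarith

lemma approx_mem {lam : ℝ} (h0 : 0 < lam) (h1 : 4 * lam < 1) (n : ℕ) :
    ∀ i : ℕ → Fin 4, 0 ≤ codingApprox (ff lam) i n ∧ codingApprox (ff lam) i n ≤ 1 := by
  induction n with
  | zero => intro i; simp [codingApprox]
  | succ n ih =>
    intro i
    obtain ⟨ha, hb⟩ := ih (fun k => i (k + 1))
    obtain ⟨hc, hd⟩ := bb_bounds h0 h1 (i 0)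
    simp only [codingApprox, ff] at *
    constructor <;> nlinarith

lemma coding_mem {lam : ℝ} (h0 : 0 < lam) (h1 : 4 * lam < 1) {x : ℝ} {i : ℕ → Fin 4}
    (hi : i ∈ codings (ff lam) x) : 0 ≤ x ∧ x ≤ 1 :=
  ⟨ge_of_tendsto' hi fun n => (approx_mem h0 h1 n i).1,
    le_of_tendsto' hi fun n => (approx_mem h0 h1 n i).2⟩

lemma pre_mem {lam : ℝ} (h0 : 0 < lam) (a : Fin 4) (i : ℕ → Fin 4) (x : ℝ) :
    pre a i ∈ codings (ff lam) x ↔ i ∈ codings (ff lam) ((x - bb lam a) / lam) := by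
  have key : ∀ n, codingApprox (ff lam) (pre a i) (n + 1)
      = lam * codingApprox (ff lam) i n + bb lam a := fun n => rfl
  unfold codings
  simp only [Set.mem_ofPred_eq]
  rw [← tendsto_add_atTop_iff_nat (f := codingApprox (ff lam) (pre a i)) 1]
  simp only [key]
  constructor
  · intro h
    have h2 := (h.sub_const (bb lam a)).div_const lam
    refine h2.congr fun n => ?_
    field_simp
    ring
  · intro h
    have h2 := (h.const_mul lam).add_const (bb lam a)
    convert h2 using 2
    field_simp
    ring

lemma digit_mem {lam : ℝ} (h0 : 0 < lam) (h1 : 4 * lam < 1) {x : ℝ} {i : ℕ → Fin 4}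
    (hi : i ∈ codings (ff lam) x) : bb lam (i 0) ≤ x ∧ x ≤ bb lam (i 0) + lam := by
  rw [← pre_tail i, pre_mem h0] at hi
  obtain ⟨ha, hb⟩ := coding_mem h0 h1 hi
  rw [le_div_iff₀ h0] at ha
  rw [div_le_iff₀ h0] at hb
  constructor <;> linarith

lemma digit_three {lam : ℝ} (h0 : 0 < lam) (h1 : 4 * lam < 1)
    (h2 : 4 * lam - lam ^ 2 < 1 - lam) {x : ℝ} {i : ℕ → Fin 4}
    (hi : i ∈ codings (ff lam) x) (hx : 1 - lam ≤ x) : i 0 = 3 := by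
  have h := digit_mem h0 h1 hi
  generalize i 0 = a at h
  fin_cases a <;> simp [bb] at h ⊢ <;> nlinarith

lemma digit_zero {lam : ℝ} (h0 : 0 < lam) (h1 : 4 * lam < 1) {x : ℝ} {i : ℕ → Fin 4}
    (hi : i ∈ codings (ff lam) x) (hx : x ≤ lam) : i 0 = 0 := by
  have h := digit_mem h0 h1 hi
  generalize i 0 = a at h
  fin_cases a <;> simp [bb] at h ⊢ <;> nlinarith

lemma overlap {lam : ℝ} (h0 : 0 < lam) (h1 : 4 * lam < 1)
    (h2 : 4 * lam - lam ^ 2 < 1 - lam) {x : ℝ} {i i' : ℕ → Fin 4}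
    (hi : i ∈ codings (ff lam) x) (hi' : i' ∈ codings (ff lam) x) (hne : i 0 ≠ i' 0) :
    3 * lam - lam ^ 2 ≤ x ∧ x ≤ 3 * lam := by
  have h := digit_mem h0 h1 hi
  have h' := digit_mem h0 h1 hi'
  generalize i 0 = a at h hne
  generalize i' 0 = a' at h' hne
  fin_cases a <;> fin_cases a' <;> simp [bb] at h h' hne ⊢ <;>
    first | (exfalso; nlinarith) | (constructor <;> nlinarith)

lemma overlap_digit {lam : ℝ} (h0 : 0 < lam) (h1 : 4 * lam < 1)
    (h2 : 4 * lam - lam ^ 2 < 1 - lam) {x : ℝ} {i : ℕ → Fin 4}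
    (hi : i ∈ codings (ff lam) x) (hx : 3 * lam - lam ^ 2 ≤ x) (hx' : x ≤ 3 * lam) :
    i 0 = 1 ∨ i 0 = 2 := by
  have h := digit_mem h0 h1 hi
  generalize i 0 = a at h
  fin_cases a <;> simp [bb] at h ⊢ <;> nlinarith

lemma codings_overlap {lam : ℝ} (h0 : 0 < lam) (h1 : 4 * lam < 1)
    (h2 : 4 * lam - lam ^ 2 < 1 - lam) {x : ℝ}
    (hx : 3 * lam - lam ^ 2 ≤ x) (hx' : x ≤ 3 * lam) :
    (codings (ff lam) x).encard =
      2 * (codings (ff lam) ((x - (3 * lam - lam ^ 2)) / lam ^ 2)).encard := by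
  set C := codings (ff lam) ((x - (3 * lam - lam ^ 2)) / lam ^ 2) with hC
  have e1 : ((x - bb lam 1) / lam - bb lam 3) / lam = (x - (3 * lam - lam ^ 2)) / lam ^ 2 := by
    simp [bb]; field_simp; ring
  have e2 : ((x - bb lam 2) / lam - bb lam 0) / lam = (x - (3 * lam - lam ^ 2)) / lam ^ 2 := by
    simp [bb]; field_simp
  have hset : codings (ff lam) x =
      (fun i => pre 1 (pre 3 i)) '' C ∪ (fun i => pre 2 (pre 0 i)) '' C := by
    ext i
    constructor
    · intro hi
      have hd := overlap_digit h0 h1 h2 hi hx hx'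
      rw [← pre_tail i, pre_mem h0] at hi
      rcases hd with hd | hd
      · left
        rw [hd] at hi
        have h3 := digit_three h0 h1 h2 hi (by rw [le_div_iff₀ h0]; simp [bb]; nlinarith)
        rw [← pre_tail (fun k => i (k + 1)), h3, pre_mem h0, e1] at hi
        refine ⟨_, hi, ?_⟩
        conv_rhs => rw [← pre_tail i, ← pre_tail (fun k => i (k + 1)), h3, hd]
      · right
        rw [hd] at hi
        have h3 := digit_zero h0 h1 hi (by rw [div_le_iff₀ h0]; simp [bb]; nlinarith)
        rw [← pre_tail (fun k => i (k + 1)), h3, pre_mem h0, e2] at hi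
        refine ⟨_, hi, ?_⟩
        conv_rhs => rw [← pre_tail i, ← pre_tail (fun k => i (k + 1)), h3, hd]
    · rintro (⟨j, hj, rfl⟩ | ⟨j, hj, rfl⟩)
      · simp only [pre_mem h0]
        rw [e1]; exact hj
      · simp only [pre_mem h0]
        rw [e2]; exact hj
  have hdisj : Disjoint ((fun i => pre 1 (pre 3 i)) '' C) ((fun i => pre 2 (pre 0 i)) '' C) := by
    rw [Set.disjoint_left]
    rintro _ ⟨j, hj, rfl⟩ ⟨j', hj', h⟩
    have := congrFun h 0
    simp [pre] at this
  rw [hset, Set.encard_union_eq hdisj,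
    Function.Injective.encard_image (f := fun i => pre 1 (pre 3 i))
      ((pre_inj 1).comp (pre_inj 3)),
    Function.Injective.encard_image (f := fun i => pre 2 (pre 0 i))
      ((pre_inj 2).comp (pre_inj 0)), two_mul]

lemma pow_two_of_card {lam : ℝ} (h0 : 0 < lam) (h1 : 4 * lam < 1)
    (h2 : 4 * lam - lam ^ 2 < 1 - lam) (m : ℕ) (hm : 1 ≤ m) :
    ∀ x, (codings (ff lam) x).encard = (m : ℕ∞) → ∃ k : ℕ, m = 2 ^ k := by
  induction m using Nat.strong_induction_on with
  | _ m IH =>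
  have inner : ∀ n : ℕ, ∀ x, (codings (ff lam) x).encard = (m : ℕ∞) →
      ∀ i ∈ codings (ff lam) x, ∀ i' ∈ codings (ff lam) x, i n ≠ i' n → ∃ k : ℕ, m = 2 ^ k := by
    have branch : ∀ x, (codings (ff lam) x).encard = (m : ℕ∞) →
        ∀ i ∈ codings (ff lam) x, ∀ i' ∈ codings (ff lam) x, i 0 ≠ i' 0 →
        ∃ k : ℕ, m = 2 ^ k := by
      intro x hx i hi i' hi' hne
      obtain ⟨ha, hb⟩ := overlap h0 h1 h2 hi hi' hne
      have hc := codings_overlap h0 h1 h2 ha hb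
      rw [hx] at hc
      generalize hz : (x - (3 * lam - lam ^ 2)) / lam ^ 2 = z at hc
      cases he : (codings (ff lam) z).encard with
      | top => rw [he] at hc; simp at hc
      | coe p =>
        rw [he] at hc
        have hmp : m = 2 * p := by exact_mod_cast hc
        obtain ⟨k, hk⟩ := IH p (by omega) (by omega) z he
        exact ⟨k + 1, by rw [hmp, hk, pow_succ]; ring⟩
    intro n
    induction n with
    | zero => exact branch
    | succ n ih =>
      intro x hx i hi i' hi' hne
      by_cases hall : ∀ t ∈ codings (ff lam) x, t 0 = i 0
      · have hset : codings (ff lam) x =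
            pre (i 0) '' codings (ff lam) ((x - bb lam (i 0)) / lam) := by
          ext t
          constructor
          · intro ht
            have hd := hall t ht
            refine ⟨fun k => t (k + 1), ?_, ?_⟩
            · rw [← pre_mem h0, ← hd, pre_tail]; exact ht
            · rw [← hd, pre_tail]
          · rintro ⟨s, hs, rfl⟩
            rwa [pre_mem h0]
        have hcard := hx
        rw [hset, (pre_inj (i 0)).encard_image] at hcard
        refine ih _ hcard (fun k => i (k + 1)) ?_ (fun k => i' (k + 1)) ?_ hne
        · rw [← pre_mem h0, pre_tail]; exact hi
        · rw [← pre_mem h0, ← hall i' hi', pre_tail]; exact hi'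
      · push Not at hall
        obtain ⟨t, ht, hti⟩ := hall
        exact branch x hx t ht i hi hti
  intro x hx
  by_cases hm1 : m = 1
  · exact ⟨0, by simpa using hm1⟩
  · have hlt : 1 < (codings (ff lam) x).encard := by
      rw [hx]; exact_mod_cast (by omega : 1 < m)
    obtain ⟨i, i', hi, hi', hne⟩ := Set.one_lt_encard_iff.1 hlt
    obtain ⟨n, hn⟩ := Function.ne_iff.1 hne
    exact inner n x hx i hi i' hi' hn

/-- if `m = 2^l * (2j + 1)` with `l ≥ 1`, `j ≥ 1` (an even number that is
not a power of two), then `U_m = ∅`. -/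
theorem statement13
    (lam : ℝ) (hlam : 0 < lam ∧ lam < (5 - Real.sqrt 21) / 2)
    (f : Fin 4 → ℝ → ℝ)
    (hf : f = ![fun x => lam * x, fun x => lam * x + 2 * lam,
      fun x => lam * x + 3 * lam - lam ^ 2, fun x => lam * x + 1 - lam])
    (K : Set ℝ) (hKne : K.Nonempty) (hKcpt : IsCompact K)
    (hK : K = f 0 '' K ∪ f 1 '' K ∪ f 2 '' K ∪ f 3 '' K)
    (U : ℕ → Set ℝ)
    (hU : ∀ k : ℕ, U k = {x ∈ K | (codings f x).encard = (k : ℕ∞)})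
    (m l j : ℕ) (hl : 1 ≤ l) (hj : 1 ≤ j) (hm : m = 2 ^ l * (2 * j + 1)) :
    U m = ∅ := by
  obtain ⟨h0, h1, h2⟩ := lam_facts hlam
  have hff : f = ff lam := by
    rw [hf]
    funext a x
    fin_cases a <;> simp [ff, bb] <;> ring
  subst hff
  rw [hU]
  ext x
  simp only [Set.mem_ofPred_eq, Set.mem_empty_iff_false, iff_false, not_and]
  intro _ hx
  have hpos : 1 ≤ m := by rw [hm]; exact Nat.mul_pos (by positivity) (by omega)
  obtain ⟨k, hk⟩ := pow_two_of_card h0 h1 h2 m hpos x hx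
  have hdvd : (2 * j + 1) ∣ 2 ^ k := by rw [← hk, hm]; exact Dvd.intro_left _ rfl
  obtain ⟨e, _, he⟩ := (Nat.dvd_prime_pow Nat.prime_two).1 hdvd
  cases e with
  | zero => simp at he; omega
  | succ e => rw [pow_succ] at he; omega
end

section
/- No point of K has countably infinitely many codings: if x ∈ K and the set of codings of x is infinite, then the set of codings of x is uncountable. -/
open Filter Topology

namespace S14

/-- translation parts of the maps -/
noncomputable def dg (l : ℝ) : Fin 4 → ℝ := ![0, 2 * l, 3 * l - l ^ 2, 1 - l]

/-- the value of a coding -/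
noncomputable def val (l : ℝ) (i : ℕ → Fin 4) : ℝ := ∑' n, l ^ n * dg l (i n)

/-- positions at which the coding can be flipped -/
def pos (i : ℕ → Fin 4) : Set ℕ :=
  {n | (i n = 1 ∧ i (n + 1) = 3) ∨ (i n = 2 ∧ i (n + 1) = 0)}

open Classical in
/-- flip the coding at the positions in `T` -/
noncomputable def flip (i : ℕ → Fin 4) (T : Set ℕ) (n : ℕ) : Fin 4 :=
  if n ∈ T ∨ (∃ m ∈ T, m + 1 = n) then (i n).rev else i n

section
variable {l : ℝ} (h0 : 0 < l) (h1 : l < 1 / 4) (h2 : 0 < l ^ 2 - 5 * l + 1)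

lemma dg_bd (h0 : 0 < l) (h1 : l < 1 / 4) (h2 : 0 < l ^ 2 - 5 * l + 1) (k : Fin 4) :
    0 ≤ dg l k ∧ dg l k ≤ 1 - l := by
  fin_cases k <;> simp [dg] <;> (try constructor) <;> nlinarith

lemma summ (h0 : 0 < l) (h1 : l < 1 / 4) (h2 : 0 < l ^ 2 - 5 * l + 1) (i : ℕ → Fin 4) :
    Summable fun n => l ^ n * dg l (i n) := by
  have hg : Summable fun n : ℕ => l ^ n * (1 - l) :=
    (summable_geometric_of_lt_one h0.le (by linarith)).mul_right _
  refine Summable.of_nonneg_of_le (fun n => ?_) (fun n => ?_) hg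
  · exact mul_nonneg (by positivity) (dg_bd h0 h1 h2 _).1
  · exact mul_le_mul_of_nonneg_left (dg_bd h0 h1 h2 _).2 (by positivity)

lemma val_bd (h0 : 0 < l) (h1 : l < 1 / 4) (h2 : 0 < l ^ 2 - 5 * l + 1) (i : ℕ → Fin 4) :
    0 ≤ val l i ∧ val l i ≤ 1 := by
  constructor
  · exact tsum_nonneg fun n => mul_nonneg (by positivity) (dg_bd h0 h1 h2 _).1
  · have hl : l < 1 := by linarith
    have hg : HasSum (fun n : ℕ => l ^ n * (1 - l)) ((1 - l)⁻¹ * (1 - l)) :=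
      (hasSum_geometric_of_lt_one h0.le hl).mul_right _
    rw [inv_mul_cancel₀ (by linarith)] at hg
    exact hasSum_le (fun n => mul_le_mul_of_nonneg_left (dg_bd h0 h1 h2 _).2 (by positivity))
      (summ h0 h1 h2 i).hasSum hg

lemma val_succ (h0 : 0 < l) (h1 : l < 1 / 4) (h2 : 0 < l ^ 2 - 5 * l + 1) (i : ℕ → Fin 4) :
    val l i = dg l (i 0) + l * val l (fun k => i (k + 1)) := by
  unfold val
  rw [(summ h0 h1 h2 i).tsum_eq_zero_add, ← tsum_mul_left]
  simp [pow_succ', mul_assoc]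

lemma approx_eq (f : Fin 4 → ℝ → ℝ) (hf : ∀ k x, f k x = l * x + dg l k) (n : ℕ) :
    ∀ i : ℕ → Fin 4, codingApprox f i n = ∑ k ∈ Finset.range n, l ^ k * dg l (i k) := by
  induction n with
  | zero => intro i; simp [codingApprox]
  | succ n ih =>
    intro i
    rw [codingApprox, hf, ih, Finset.sum_range_succ', Finset.mul_sum]
    simp [pow_succ', mul_assoc]

lemma mem_codings (h0 : 0 < l) (h1 : l < 1 / 4) (h2 : 0 < l ^ 2 - 5 * l + 1)
    (f : Fin 4 → ℝ → ℝ) (hf : ∀ k x, f k x = l * x + dg l k) (i : ℕ → Fin 4) (x : ℝ) :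
    i ∈ codings f x ↔ val l i = x := by
  have ht : Tendsto (codingApprox f i) atTop (𝓝 (val l i)) := by
    rw [show codingApprox f i = fun n => ∑ k ∈ Finset.range n, l ^ k * dg l (i k) from
      funext fun n => approx_eq f hf n i]
    exact (summ h0 h1 h2 i).hasSum.tendsto_sum_nat
  constructor
  · intro h
    exact tendsto_nhds_unique ht h
  · rintro rfl
    exact ht

lemma step_aux (h0 : 0 < l) (h1 : l < 1 / 4) (h2 : 0 < l ^ 2 - 5 * l + 1)
    {p q : Fin 4} {a b : ℝ} (ha : 0 ≤ a ∧ a ≤ 1) (hb : 0 ≤ b ∧ b ≤ 1)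
    (h : dg l p + l * a = dg l q + l * b) :
    (p = q ∧ a = b) ∨ (p = 1 ∧ q = 2 ∧ a = 1 - l + b) ∨ (p = 2 ∧ q = 1 ∧ b = 1 - l + a) := by
  have e1 : 0 ≤ l * a := mul_nonneg h0.le ha.1
  have e2 : 0 ≤ l * b := mul_nonneg h0.le hb.1
  have e3 : l * a ≤ l := by nlinarith
  have e4 : l * b ≤ l := by nlinarith
  have e5 : l ^ 2 < l := by nlinarith
  by_cases hpq : p = q
  · subst hpq
    left
    refine ⟨rfl, ?_⟩
    exact mul_left_cancel₀ h0.ne' (by linarith)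
  right
  fin_cases p <;> fin_cases q <;> simp [dg] at h hpq ⊢ <;> first
    | (exfalso; linarith)
    | exact mul_left_cancel₀ h0.ne' (by linarith)

lemma top_aux (h0 : 0 < l) (h1 : l < 1 / 4) (h2 : 0 < l ^ 2 - 5 * l + 1)
    {p q : Fin 4} {a b : ℝ} (ha : 0 ≤ a ∧ a ≤ 1) (hb : 0 ≤ b ∧ b ≤ 1)
    (h : dg l p + l * a = 1 - l + (dg l q + l * b)) :
    p = 3 ∧ q = 0 ∧ a = b := by
  have e1 : 0 ≤ l * a := mul_nonneg h0.le ha.1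
  have e2 : 0 ≤ l * b := mul_nonneg h0.le hb.1
  have e3 : l * a ≤ l := by nlinarith
  have e4 : l * b ≤ l := by nlinarith
  have e5 : l ^ 2 < l := by nlinarith
  have hab : dg l p = 1 - l + dg l q → a = b := fun h' =>
    mul_left_cancel₀ h0.ne' (by linarith)
  fin_cases p <;> fin_cases q <;> simp [dg] at h hab ⊢ <;> first
    | (exfalso; linarith)
    | exact hab

lemma sh (i : ℕ → Fin 4) (n : ℕ) :
    (fun k => (fun m => i (m + n)) (k + 1)) = fun m => i (m + (n + 1)) := by
  funext k; simp only []; congr 1; omega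

lemma val_sh (h0 : 0 < l) (h1 : l < 1 / 4) (h2 : 0 < l ^ 2 - 5 * l + 1) (i : ℕ → Fin 4)
    (n : ℕ) : val l (fun m => i (m + n)) = dg l (i n) + l * val l (fun m => i (m + (n + 1))) := by
  rw [val_succ h0 h1 h2, sh, Nat.zero_add]

lemma track (h0 : 0 < l) (h1 : l < 1 / 4) (h2 : 0 < l ^ 2 - 5 * l + 1) (i j : ℕ → Fin 4)
    (hij : val l i = val l j) (n : ℕ) :
    val l (fun m => i (m + n)) = val l (fun m => j (m + n)) ∨
      ((∃ m ∈ pos i, m + 1 = n) ∧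
        val l (fun m => i (m + (n + 1))) = val l (fun m => j (m + (n + 1)))) := by
  induction n with
  | zero => left; simpa using hij
  | succ n ih =>
    rcases ih with h | h
    · rw [val_sh h0 h1 h2 i, val_sh h0 h1 h2 j] at h
      rcases step_aux h0 h1 h2 (val_bd h0 h1 h2 _) (val_bd h0 h1 h2 _) h with
        h | ⟨hp, hq, h⟩ | ⟨hp, hq, h⟩
      · exact Or.inl h.2
      · right
        rw [val_sh h0 h1 h2 i, val_sh h0 h1 h2 j] at h
        obtain ⟨h3, h4, h5⟩ := top_aux h0 h1 h2 (val_bd h0 h1 h2 _) (val_bd h0 h1 h2 _) h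
        exact ⟨⟨n, Or.inl ⟨hp, h3⟩, rfl⟩, h5⟩
      · right
        rw [val_sh h0 h1 h2 i, val_sh h0 h1 h2 j] at h
        obtain ⟨h3, h4, h5⟩ := top_aux h0 h1 h2 (val_bd h0 h1 h2 _) (val_bd h0 h1 h2 _) h
        exact ⟨⟨n, Or.inr ⟨hp, h4⟩, rfl⟩, h5.symm⟩
    · exact Or.inl h.2

lemma differ (h0 : 0 < l) (h1 : l < 1 / 4) (h2 : 0 < l ^ 2 - 5 * l + 1) (i j : ℕ → Fin 4)
    (hij : val l i = val l j) (n : ℕ) (hn : i n ≠ j n) :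
    n ∈ pos i ∨ ∃ m ∈ pos i, m + 1 = n := by
  rcases track h0 h1 h2 i j hij n with h | h
  · left
    rw [val_sh h0 h1 h2 i, val_sh h0 h1 h2 j] at h
    rcases step_aux h0 h1 h2 (val_bd h0 h1 h2 _) (val_bd h0 h1 h2 _) h with
        h | ⟨hp, hq, h⟩ | ⟨hp, hq, h⟩
    · exact absurd h.1 hn
    · rw [val_sh h0 h1 h2 i, val_sh h0 h1 h2 j] at h
      obtain ⟨h3, h4, h5⟩ := top_aux h0 h1 h2 (val_bd h0 h1 h2 _) (val_bd h0 h1 h2 _) h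
      exact Or.inl ⟨hp, h3⟩
    · rw [val_sh h0 h1 h2 i, val_sh h0 h1 h2 j] at h
      obtain ⟨h3, h4, h5⟩ := top_aux h0 h1 h2 (val_bd h0 h1 h2 _) (val_bd h0 h1 h2 _) h
      exact Or.inr ⟨hp, h4⟩
  · exact Or.inr h.1

/-- if there are finitely many flip positions, there are finitely many codings -/
lemma fin_of_fin (h0 : 0 < l) (h1 : l < 1 / 4) (h2 : 0 < l ^ 2 - 5 * l + 1) (i : ℕ → Fin 4)
    (hS : (pos i).Finite) : {j | val l j = val l i}.Finite := by
  obtain ⟨N, hN⟩ := hS.bddAbove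
  have key : ∀ j, val l j = val l i → ∀ n, N + 2 ≤ n → i n = j n := by
    intro j hj n hn
    by_contra hne
    rcases differ h0 h1 h2 i j hj.symm n hne with h | ⟨m, hm, h⟩
    · have := hN h; omega
    · have := hN hm; omega
  refine Set.Finite.of_finite_image
    (f := fun (j : ℕ → Fin 4) (k : Fin (N + 2)) => j k) (Set.toFinite _) ?_
  intro j hj j' hj' h
  funext n
  by_cases hn : n < N + 2
  · exact congrFun h ⟨n, hn⟩
  · rw [← key j hj n (by omega), ← key j' hj' n (by omega)]

open Classical in
lemma val_flip (h0 : 0 < l) (h1 : l < 1 / 4) (h2 : 0 < l ^ 2 - 5 * l + 1) (i : ℕ → Fin 4)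
    (T : Set ℕ) (hT : T ⊆ pos i) : val l (flip i T) = val l i := by
  set s : ℕ → ℝ := fun n => if n ∈ T then (if i n = 1 then 1 else -1) else 0 with hs
  have hsum : ∀ n, ∑ k ∈ Finset.range (n + 1), (l ^ k * dg l (flip i T k) - l ^ k * dg l (i k))
      = l ^ (n + 1) * (1 - l) * s n := by
    intro n
    induction n with
    | zero =>
      by_cases h : 0 ∈ T
      · rcases hT h with ⟨ha, hb⟩ | ⟨ha, hb⟩ <;> simp [hs, flip, h, ha, dg, Fin.rev] <;> ring
      · simp [hs, flip, h]
    | succ n ih =>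
      rw [Finset.sum_range_succ, ih]
      by_cases h : n ∈ T
      · have hn : n + 1 ∉ T := by
          intro h'
          rcases hT h with ⟨ha, hb⟩ | ⟨ha, hb⟩ <;> rcases hT h' with ⟨hc, hd⟩ | ⟨hc, hd⟩ <;>
            simp_all
        rcases hT h with ⟨ha, hb⟩ | ⟨ha, hb⟩ <;> simp [hs, flip, h, hn, ha, hb, dg, Fin.rev]
      · by_cases hn : n + 1 ∈ T
        · rcases hT hn with ⟨ha, hb⟩ | ⟨ha, hb⟩ <;> simp [hs, flip, h, hn, ha, dg, Fin.rev] <;>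
            ring
        · simp [hs, flip, h, hn]
  have hd := ((summ h0 h1 h2 (flip i T)).hasSum.sub (summ h0 h1 h2 i).hasSum).tendsto_sum_nat
  have hd' := hd.comp (tendsto_add_atTop_nat 1)
  have hz : Tendsto (fun n : ℕ => l ^ (n + 1) * (1 - l) * s n) atTop (𝓝 0) := by
    have hp : Tendsto (fun n : ℕ => l ^ n) atTop (𝓝 0) :=
      tendsto_pow_atTop_nhds_zero_of_lt_one h0.le (by linarith)
    refine squeeze_zero_norm (fun n => ?_) hp
    have hs1 : |s n| ≤ 1 := by
      simp only [hs]; split_ifs <;> simp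
    have hl : |l ^ (n + 1) * (1 - l)| ≤ l ^ n := by
      rw [abs_of_nonneg (mul_nonneg (by positivity) (by linarith)), pow_succ, mul_assoc]
      exact mul_le_of_le_one_right (by positivity) (by nlinarith)
    rw [Real.norm_eq_abs, abs_mul]
    calc _ ≤ l ^ n * 1 := mul_le_mul hl hs1 (abs_nonneg _) (by positivity)
      _ = _ := mul_one _
  have : (∑' n, l ^ n * dg l (flip i T n)) - (∑' n, l ^ n * dg l (i n)) = 0 := by
    refine tendsto_nhds_unique hd' (hz.congr fun n => ?_)
    rw [← hsum]; rfl
  unfold val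
  linarith

lemma flip_ne (i : ℕ → Fin 4) (T : Set ℕ) (hT : T ⊆ pos i) (n : ℕ) (hn : n ∈ pos i) :
    flip i T n ≠ i n ↔ n ∈ T := by
  have hm : ¬ ∃ m ∈ T, m + 1 = n := by
    rintro ⟨m, hm, rfl⟩
    rcases hT hm with ⟨ha, hb⟩ | ⟨ha, hb⟩ <;> rcases hn with ⟨hc, hd⟩ | ⟨hc, hd⟩ <;> simp_all
  by_cases h : n ∈ T
  · rcases hn with ⟨hc, hd⟩ | ⟨hc, hd⟩ <;> simp [flip, h, hc, Fin.rev]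
  · simp only [flip, h, hm]; simp

lemma unc_of_inf (h0 : 0 < l) (h1 : l < 1 / 4) (h2 : 0 < l ^ 2 - 5 * l + 1) (i : ℕ → Fin 4)
    (hS : (pos i).Infinite) : ¬ {j | val l j = val l i}.Countable := by
  intro hc
  have e := hS.natEmbedding
  let T : Set ℕ → Set ℕ := fun A => (fun k => (e k : ℕ)) '' A
  have hT : ∀ A, T A ⊆ pos i := by
    rintro A _ ⟨k, -, rfl⟩
    exact (e k).2
  have hinj : Function.Injective fun A => flip i (T A) := by
    intro A B hAB
    have hmem : ∀ A k, k ∈ A ↔ flip i (T A) (e k) ≠ i (e k) := by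
      intro A k
      rw [flip_ne i _ (hT A) _ (e k).2]
      constructor
      · intro h; exact ⟨k, h, rfl⟩
      · rintro ⟨k', h, h'⟩
        rwa [← e.injective (Subtype.ext h')]
    ext k
    rw [hmem A, hmem B, show flip i (T A) = flip i (T B) from hAB]
  have hpre := hc.preimage hinj
  have : (Set.univ : Set (Set ℕ)).Countable :=
    hpre.mono fun A _ => val_flip h0 h1 h2 i _ (hT A)
  have hcs : Countable (Set ℕ) := Set.countable_univ_iff.1 this
  obtain ⟨g, hg⟩ := hcs.exists_injective_nat
  exact Function.cantor_injective g hg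

end

end S14

/-- no point of `K` has countably infinitely many codings: if the set of
codings of `x ∈ K` is infinite, then it is uncountable. -/
theorem statement14
    (lam : ℝ) (hlam : 0 < lam ∧ lam < (5 - Real.sqrt 21) / 2)
    (f : Fin 4 → ℝ → ℝ)
    (hf : f = ![fun x => lam * x, fun x => lam * x + 2 * lam,
      fun x => lam * x + 3 * lam - lam ^ 2, fun x => lam * x + 1 - lam])
    (K : Set ℝ) (hKne : K.Nonempty) (hKcpt : IsCompact K)
    (hK : K = f 0 '' K ∪ f 1 '' K ∪ f 2 '' K ∪ f 3 '' K)
    (U : ℕ → Set ℝ)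
    (hU : ∀ k : ℕ, U k = {x ∈ K | (codings f x).encard = (k : ℕ∞)})
    (x : ℝ) (hx : x ∈ K) (hinf : (codings f x).Infinite) :
    ¬ (codings f x).Countable := by
  obtain ⟨h0, hl⟩ := hlam
  have hs : (4 : ℝ) < Real.sqrt 21 := Real.lt_sqrt_of_sq_lt (by norm_num)
  have hsq : Real.sqrt 21 ^ 2 = 21 := Real.sq_sqrt (by norm_num)
  have hs' : (4.5 : ℝ) < Real.sqrt 21 := Real.lt_sqrt_of_sq_lt (by norm_num)
  have h1 : lam < 1 / 4 := by linarith
  have h2 : 0 < lam ^ 2 - 5 * lam + 1 := by nlinarith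
  have hfd : ∀ k y, f k y = lam * y + S14.dg lam k := by
    intro k y
    subst hf
    fin_cases k <;> simp [S14.dg] <;> ring
  obtain ⟨i, hi⟩ := hinf.nonempty
  have hix := (S14.mem_codings h0 h1 h2 f hfd i x).1 hi
  have hset : codings f x = {j | S14.val lam j = S14.val lam i} := by
    ext j
    rw [S14.mem_codings h0 h1 h2 f hfd, hix]
    rfl
  rw [hset] at hinf ⊢
  apply S14.unc_of_inf h0 h1 h2
  intro hfin
  exact hinf (S14.fin_of_fin h0 h1 h2 i hfin)
end

section
/- If the quasi-greedy orbit of 1 hits the point 1/(β(β−1)) for the first time, then the greedy expansion of 1 is finite (1 has a β-expansion ending in 0^∞), and there exists n₀ ≥ 1 such that the quasi-greedy expansion (η_n) of 1 satisfies η_{n+n₀} = 1 − η_n for all n ≥ 1; in particular (η_n) has the periodic form (a_1⋯a_{n₀} \overline{a_1⋯a_{n₀}})^∞, where overline denotes digit-wise reflection a ↦ 1−a. -/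
/-- The quasi-greedy orbit `Q` of `1` hits the point `c` for the first time: `Q k = c`
for some `k ≥ 1` while `Q i ∈ [0, 1/β) ∪ (1/(β(β-1)), 1/(β-1)]` for `1 ≤ i ≤ k - 1`. -/
def HitsFirst (β : ℝ) (Q : ℕ → ℝ) (c : ℝ) : Prop :=
  ∃ k ≥ 1, Q k = c ∧ ∀ i, 1 ≤ i → i ≤ k - 1 →
    Q i ∈ Set.Ico 0 (1 / β) ∪ Set.Ioc (1 / (β * (β - 1))) (1 / (β - 1))

lemma bv_summable {β : ℝ} (hβ : 1 < β) {a : ℕ → ℕ} (ha : ∀ n, a n ≤ 1) :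
    Summable (fun n : ℕ => (a n : ℝ) / β ^ (n + 1)) := by
  have h0 : 0 < β := by linarith
  have hs : Summable (fun n : ℕ => (β⁻¹) ^ n) :=
    summable_geometric_of_lt_one (by positivity) (inv_lt_one_of_one_lt₀ hβ)
  have hs' : Summable (fun n : ℕ => (β⁻¹) ^ (n+1)) := (summable_nat_add_iff 1).2 hs
  refine Summable.of_nonneg_of_le (fun n => by positivity) (fun n => ?_) hs'
  rw [inv_pow, ← one_div]
  have : (a n : ℝ) ≤ 1 := by exact_mod_cast ha n
  gcongr

lemma bv_step {β : ℝ} (hβ : 1 < β) {a : ℕ → ℕ} (ha : ∀ n, a n ≤ 1) :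
    betaVal β (fun k => a (k + 1)) = β * betaVal β a - a 0 := by
  have h0 : 0 < β := by linarith
  unfold betaVal
  rw [(bv_summable hβ ha).tsum_eq_zero_add, mul_add, ← tsum_mul_left]
  have : ∀ n : ℕ, β * ((a (n+1) : ℝ) / β ^ (n + 1 + 1)) = (a (n+1) : ℝ) / β ^ (n+1) := by
    intro n
    rw [pow_succ β (n+1)]
    field_simp
  simp only [this]
  field_simp
  ring

lemma bv_nonneg {β : ℝ} (hβ : 1 < β) (a : ℕ → ℕ) : 0 ≤ betaVal β a := by
  have h0 : 0 < β := by linarith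
  exact tsum_nonneg (fun n => by positivity)

lemma bv_pos {β : ℝ} (hβ : 1 < β) {a : ℕ → ℕ} (ha : ∀ n, a n ≤ 1) (h : ∃ n, a n = 1) :
    0 < betaVal β a := by
  have h0 : 0 < β := by linarith
  obtain ⟨n, hn⟩ := h
  refine (bv_summable hβ ha).tsum_pos (fun n => by positivity) n ?_
  rw [hn]; positivity

lemma bv_congr {β : ℝ} (hβ : 1 < β) (n : ℕ) : ∀ (a b : ℕ → ℕ), (∀ n, a n ≤ 1) → (∀ n, b n ≤ 1) →
    (∀ k < n, a k = b k) → betaVal β (fun k => a (n + k)) = betaVal β (fun k => b (n + k)) →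
    betaVal β a = betaVal β b := by
  have h0 : 0 < β := by linarith
  induction n with
  | zero => intro a b _ _ _ h; simpa using h
  | succ n ih =>
    intro a b ha hb hab h
    have h1 := ih (fun k => a (k+1)) (fun k => b (k+1)) (fun k => ha _) (fun k => hb _)
      (fun k hk => hab _ (by omega)) (by
        have e : ∀ k, n + k + 1 = n + 1 + k := by intro k; omega
        simpa only [e] using h)
    rw [bv_step hβ ha, bv_step hβ hb, hab 0 (by omega)] at h1
    exact mul_left_cancel₀ h0.ne' (by linarith)

/-- The quasi-greedy map. -/
noncomputable def qgT (β x : ℝ) : ℝ := if 1 < β * x then β * x - 1 else β * x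

/-- The quasi-greedy digit. -/
noncomputable def qgD (β x : ℝ) : ℕ := if 1 < β * x then 1 else 0

lemma qg_exists {β : ℝ} (hβ : 1 < β) (hβ2 : β < 2) {x : ℝ} (hx : 0 < x) (hx1 : x ≤ 1) :
    ∃ a : ℕ → ℕ, (∀ n, a n ≤ 1) ∧ (∀ N, ∃ n ≥ N, a n = 1) ∧ betaVal β a = x := by
  have h0 : 0 < β := by linarith
  have hO : ∀ n, 0 < (qgT β)^[n] x ∧ (qgT β)^[n] x ≤ 1 := by
    intro n
    induction n with
    | zero => exact ⟨hx, hx1⟩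
    | succ n ih =>
      rw [Function.iterate_succ_apply']
      set y := (qgT β)^[n] x
      unfold qgT
      split_ifs with h
      · exact ⟨by linarith, by nlinarith⟩
      · exact ⟨mul_pos h0 ih.1, by linarith⟩
  have hD : ∀ y, qgT β y = β * y - qgD β y := by
    intro y; unfold qgT qgD; split_ifs <;> simp
  have ha : ∀ n, qgD β ((qgT β)^[n] x) ≤ 1 := by
    intro n; unfold qgD; split_ifs <;> simp
  refine ⟨fun n => qgD β ((qgT β)^[n] x), ha, ?_, ?_⟩
  · intro N
    by_contra! hc
    have hz : ∀ m, (qgT β)^[N + m] x = β ^ m * (qgT β)^[N] x := by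
      intro m
      induction m with
      | zero => simp
      | succ m ih =>
        have h1 := hc (N+m) (by omega)
        have h2 := ha (N+m)
        have h3 : qgD β ((qgT β)^[N+m] x) = 0 := by omega
        rw [← add_assoc, Function.iterate_succ_apply', hD, h3, ih, pow_succ]
        push_cast; ring
    obtain ⟨m, hm⟩ := pow_unbounded_of_one_lt (1 / (qgT β)^[N] x) hβ
    have h1 := (hO (N+m)).2
    rw [hz, ← le_div_iff₀ (hO N).1] at h1
    linarith
  · unfold betaVal
    refine HasSum.tsum_eq ?_
    rw [hasSum_iff_tendsto_nat_of_nonneg (fun n => by positivity)]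
    have hp : ∀ n, ∑ i ∈ Finset.range n, (qgD β ((qgT β)^[i] x) : ℝ) / β ^ (i+1)
        = x - (qgT β)^[n] x * (β⁻¹) ^ n := by
      intro n
      induction n with
      | zero => simp
      | succ n ih =>
        rw [Finset.sum_range_succ, ih, Function.iterate_succ_apply', hD, inv_pow, inv_pow, pow_succ]
        field_simp
        ring
    simp only [hp]
    have ht : Filter.Tendsto (fun n : ℕ => (β⁻¹) ^ n) Filter.atTop (nhds 0) :=
      tendsto_pow_atTop_nhds_zero_of_lt_one (by positivity) (inv_lt_one_of_one_lt₀ hβ)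
    have h2 : Filter.Tendsto (fun n : ℕ => (qgT β)^[n] x * (β⁻¹) ^ n) Filter.atTop (nhds 0) := by
      refine squeeze_zero (fun n => ?_) (fun n => ?_) ht
      · exact mul_nonneg (hO n).1.le (by positivity)
      · exact mul_le_of_le_one_left (by positivity) (hO n).2
    simpa using h2.const_sub x

lemma lexLt_asymm {a b : ℕ → ℕ} (h : LexLt a b) (h' : LexLt b a) : False := by
  obtain ⟨n, h1, h2⟩ := h
  obtain ⟨m, h3, h4⟩ := h'
  rcases lt_trichotomy n m with h | h | h
  · have := h3 n h; omega
  · subst h; omega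
  · have := h1 m h; omega

theorem statement15 (β : ℝ) (hβ : β ∈ Set.Ioo (1 : ℝ) 2)
    (η : ℕ → ℕ) (hη : QuasiGreedy β η)
    (Q : ℕ → ℝ) (hQ : ∀ n, Q n = betaVal β (fun k => η (n + k)))
    (g : ℕ → ℕ) (hg01 : ∀ n, g n ≤ 1) (hgval : betaVal β g = 1)
    (hgmax : ∀ b : ℕ → ℕ, (∀ n, b n ≤ 1) → betaVal β b = 1 → b ≠ g → LexLt b g)
    (hhit : HitsFirst β Q (1 / (β * (β - 1)))) :
    (∃ N, ∀ n ≥ N, g n = 0) ∧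
      ∃ n₀ ≥ 1, (∀ n, η (n + n₀) = 1 - η n) ∧ (∀ n, η (n + 2 * n₀) = η n) := by
  obtain ⟨hβ1, hβ2⟩ := hβ
  obtain ⟨hη01, hηinf, hηval, hηmax⟩ := hη
  have h0 : 0 < β := by linarith
  have hb1 : 0 < β - 1 := by linarith
  have hQ0 : Q 0 = 1 := by rw [hQ]; simpa using hηval
  have hstep : ∀ n, Q (n+1) = β * Q n - η n := by
    intro n
    rw [hQ, hQ]
    have := bv_step hβ1 (a := fun k => η (n + k)) (fun k => hη01 _)
    simp only [add_zero] at this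
    rw [← this]
    congr 1; funext k; congr 1; omega
  have hpos : ∀ n, 0 < Q n := by
    intro n
    rw [hQ]
    refine bv_pos hβ1 (fun k => hη01 _) ?_
    obtain ⟨m, hm, h⟩ := hηinf n
    exact ⟨m - n, by rw [← h]; congr 1; omega⟩
  have hd01 : ∀ n, η n = 0 ∨ η n = 1 := fun n => by have := hη01 n; omega
  have hle : ∀ n, Q n ≤ 1 := by
    intro n
    induction n with
    | zero => exact hQ0.le
    | succ n ih =>
      rcases hd01 n with h | h
      · by_contra! hc
        have hs := hstep n
        rw [h] at hs
        push_cast at hs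
        obtain ⟨a, ha, hainf, haval⟩ := qg_exists hβ1 hβ2 (x := β * Q n - 1)
          (by linarith) (by nlinarith)
        let ζ : ℕ → ℕ := fun m => if m < n then η m else if m = n then 1 else a (m - n - 1)
        have hζ : ∀ m, ζ m ≤ 1 := by
          intro m; simp only [ζ]; split_ifs
          · exact hη01 _
          · exact le_rfl
          · exact ha _
        have hζlt : ∀ k < n, ζ k = η k := fun k hk => by simp [ζ, hk]
        have hζn : ζ n = 1 := by simp [ζ]
        have hζt : (fun k => ζ (n + (k + 1))) = a := by
          funext k
          have e : n + (k+1) - n - 1 = k := by omega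
          simp only [ζ]
          rw [if_neg (by omega), if_neg (by omega), e]
        have hv : betaVal β ζ = 1 := by
          rw [← hηval]
          refine bv_congr hβ1 n ζ η hζ hη01 hζlt ?_
          have h1 := bv_step hβ1 (a := fun k => ζ (n + k)) (fun k => hζ _)
          simp only [add_zero] at h1
          rw [hζt, haval, hζn] at h1
          rw [← hQ]
          push_cast at h1
          exact mul_left_cancel₀ h0.ne' (by linarith)
        have hinf : ∀ N, ∃ m ≥ N, ζ m = 1 := by
          intro N
          obtain ⟨m, hm, hm1⟩ := hainf N
          refine ⟨n + (m + 1), by omega, ?_⟩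
          exact (congrFun hζt m).trans hm1
        have hne : ζ ≠ η := by
          intro e; rw [e] at hζn; omega
        exact lexLt_asymm (hηmax ζ hζ hinf hv hne)
          ⟨n, fun k hk => (hζlt k hk).symm, by omega⟩
      · rw [hstep, h]; push_cast; nlinarith
  -- digit rules
  have hdig1 : ∀ n, 1 < β * Q n → η n = 1 := by
    intro n hn
    rcases hd01 n with h | h
    · have := hle (n+1); rw [hstep, h] at this; push_cast at this; linarith
    · exact h
  have hdig0 : ∀ n, β * Q n ≤ 1 → η n = 0 := by
    intro n hn
    rcases hd01 n with h | h
    · exact h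
    · have := hpos (n+1); rw [hstep, h] at this; push_cast at this; linarith
  obtain ⟨k, hk1, hkc, hkr⟩ := hhit
  set c := 1 / (β * (β - 1)) with hc
  have hcβ : β * c = 1 / (β - 1) := by rw [hc]; field_simp
  set r := 1 / (β - 1) with hr
  have hrr : r * (β - 1) = 1 := by rw [hr]; field_simp
  have hr1 : 1 < r := by nlinarith
  have hcr : β * (r - c) = 1 := by nlinarith
  -- `c < 1`
  have hc1 : c < 1 := by
    have hcle : c ≤ 1 := hkc ▸ hle k
    refine lt_of_le_of_ne hcle ?_
    intro he
    have hQ1 : Q 1 = β - 1 := by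
      have h1 := hstep 0
      rw [hdig1 0 (by rw [hQ0]; linarith), hQ0] at h1
      push_cast at h1; linarith
    rw [he] at hkc hcβ
    by_cases hk : k = 1
    · rw [hk] at hkc; linarith
    · rcases hkr 1 le_rfl (by omega) with h | h
      · have h2 := h.2
        rw [lt_div_iff₀ h0, hQ1] at h2
        nlinarith
      · have h2 := h.1
        have := hle 1
        linarith
  have hkd : η k = 1 := hdig1 k (by rw [hkc]; linarith)
  have hQk1 : Q (k+1) = r - 1 := by
    rw [hstep, hkd, hkc]; push_cast; linarith
  have hcond : ∀ i < k, β * Q i < 1 ∨ c < Q i := by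
    intro i hi
    rcases Nat.eq_zero_or_pos i with h | h
    · right; rw [h, hQ0]; exact hc1
    · rcases hkr i h (by omega) with h | h
      · left; have h2 := h.2; rw [lt_div_iff₀ h0] at h2; linarith
      · right; exact h.1
  have hdigref : ∀ i < k, Q (k+1+i) = r - Q i → η (k+1+i) = 1 - η i := by
    intro i hi hq
    rcases hcond i hi with h | h
    · rw [hdig0 i h.le, hdig1 (k+1+i)]
      rw [hq]; nlinarith
    · rw [hdig1 i (by nlinarith), hdig0 (k+1+i)]
      rw [hq]; nlinarith
  have href : ∀ i ≤ k, Q (k+1+i) = r - Q i := by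
    intro i
    induction i with
    | zero => intro _; rw [hQ0]; exact hQk1
    | succ i ih =>
      intro hi
      have hq := ih (by omega)
      have hd := hdigref i (by omega) hq
      rw [← add_assoc, hstep, hstep, hd, hq, Nat.cast_sub (hη01 i)]
      push_cast
      linarith
  have hQe : β * Q (k+1+k) = 1 := by rw [href k le_rfl, hkc]; exact hcr
  have hde : η (k+1+k) = 0 := hdig0 _ hQe.le
  have hQp : Q (k+1+k+1) = 1 := by rw [hstep, hde, hQe]; simp
  have hper : ∀ n, Q (n + 2 * (k+1)) = Q n ∧ η (n + 2 * (k+1)) = η n := by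
    have hdd : ∀ m n, Q m = Q n → η m = η n := by
      intro m n h
      by_cases hh : 1 < β * Q n
      · rw [hdig1 n hh, hdig1 m (by rw [h]; exact hh)]
      · rw [hdig0 n (not_lt.1 hh), hdig0 m (by rw [h]; exact not_lt.1 hh)]
    have hqq : ∀ n, Q (n + 2 * (k+1)) = Q n := by
      intro n
      induction n with
      | zero =>
        rw [hQ0, ← hQp]; congr 1; omega
      | succ n ih =>
        have e : n + 1 + 2 * (k+1) = n + 2 * (k+1) + 1 := by omega
        rw [e, hstep, hstep, ih, hdd _ _ ih]
    exact fun n => ⟨hqq n, hdd _ _ (hqq n)⟩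
  refine ⟨?_, k+1, by omega, ?_, fun n => (hper n).2⟩
  · -- finiteness of the greedy expansion
    by_contra! hgi
    have hginf : ∀ N, ∃ n ≥ N, g n = 1 := by
      intro N
      obtain ⟨n, hn, hn0⟩ := hgi N
      exact ⟨n, hn, by have := hg01 n; omega⟩
    have hgη : g = η := by
      by_contra hne
      exact lexLt_asymm (hηmax g hg01 hginf hgval hne) (hgmax η hη01 hηval (Ne.symm hne))
    set M := k+1+k with hM
    let b : ℕ → ℕ := fun m => if m < M then η m else if m = M then 1 else 0
    have hb : ∀ m, b m ≤ 1 := by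
      intro m; simp only [b]; split_ifs
      · exact hη01 _
      · exact le_rfl
      · exact Nat.zero_le _
    have hblt : ∀ j < M, b j = η j := fun j hj => by simp [b, hj]
    have hbM : b M = 1 := by simp [b]
    have hbt : (fun j => b (M + (j + 1))) = fun _ => 0 := by
      funext j
      simp only [b]
      rw [if_neg (by omega), if_neg (by omega)]
    have hbv : betaVal β b = 1 := by
      rw [← hηval]
      refine bv_congr hβ1 M b η hb hη01 hblt ?_
      have h1 := bv_step hβ1 (a := fun j => b (M + j)) (fun j => hb _)
      simp only [add_zero] at h1
      have hz : betaVal β (fun _ => 0) = 0 := by simp [betaVal]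
      rw [hbt, hz, hbM] at h1
      rw [← hQ]
      push_cast at h1
      exact mul_left_cancel₀ h0.ne' (by linarith)
    have hne : b ≠ g := by
      intro e; rw [e, hgη] at hbM; omega
    have hlt := hgmax b hb hbv hne
    rw [hgη] at hlt
    exact lexLt_asymm hlt ⟨M, fun j hj => (hblt j hj).symm, by omega⟩
  · intro n
    induction n using Nat.strong_induction_on with
    | _ n ih =>
      rcases lt_trichotomy n k with h | h | h
      · rw [add_comm]; exact hdigref n h (href n h.le)
      · subst h
        have e : n + (n + 1) = n + 1 + n := by omega
        rw [e, hde, hkd]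
      · obtain ⟨m, rfl⟩ : ∃ m, n = m + (k+1) := ⟨n - (k+1), by omega⟩
        have h1 := ih m (by omega)
        have h2 := (hper m).2
        have e : m + (k+1) + (k+1) = m + 2 * (k+1) := by omega
        have h3 := hη01 m
        rw [e, h2, h1]; omega
end

section
/- If the quasi-greedy orbit of 1 hits the point 1/(β(β−1)) for the first time, then the set of unique expansions Ũ_β is a subshift of finite type. -/
/-- shift of a sequence -/
def shf (n : ℕ) (x : ℕ → ℕ) : ℕ → ℕ := fun i => x (n + i)

/-- complement of a sequence -/
def cpl (x : ℕ → ℕ) : ℕ → ℕ := fun i => 1 - x i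

lemma shf_shf (m n : ℕ) (x : ℕ → ℕ) : shf m (shf n x) = shf (n + m) x := by
  funext i; simp [shf, add_assoc]

lemma shf_le {x : ℕ → ℕ} (h : ∀ n, x n ≤ 1) (n : ℕ) : ∀ i, shf n x i ≤ 1 := fun i => h _

lemma cpl_le (x : ℕ → ℕ) : ∀ i, cpl x i ≤ 1 := fun i => Nat.sub_le _ _

lemma cpl_cpl {x : ℕ → ℕ} (h : ∀ n, x n ≤ 1) : cpl (cpl x) = x := by
  funext i; have := h i; simp only [cpl]; omega

lemma geom_hasSum {β : ℝ} (hβ : 1 < β) : HasSum (fun n : ℕ => 1 / β ^ (n + 1)) (1 / (β - 1)) := by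
  have h0 : 0 < β := by linarith
  have h := (hasSum_geometric_of_lt_one (inv_nonneg.2 h0.le) (inv_lt_one_of_one_lt₀ hβ)).mul_left β⁻¹
  have e1 : (fun n : ℕ => 1 / β ^ (n + 1)) = fun n : ℕ => β⁻¹ * β⁻¹ ^ n := by
    funext n; rw [← pow_succ', inv_pow, one_div]
  have e2 : 1 / (β - 1) = β⁻¹ * (1 - β⁻¹)⁻¹ := by
    have : β - 1 ≠ 0 := by linarith
    have : 1 - β⁻¹ ≠ 0 := by
      have := inv_lt_one_of_one_lt₀ hβ
      linarith
    field_simp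
  rw [e1, e2]; exact h

lemma term_le {β : ℝ} (hβ : 1 < β) {x : ℕ → ℕ} (h : ∀ n, x n ≤ 1) (n : ℕ) :
    (x n : ℝ) / β ^ (n + 1) ≤ 1 / β ^ (n + 1) := by
  have h0 : 0 < β := by linarith
  have : (x n : ℝ) ≤ 1 := by exact_mod_cast h n
  gcongr

lemma term_nonneg {β : ℝ} (hβ : 1 < β) (x : ℕ → ℕ) (n : ℕ) :
    0 ≤ (x n : ℝ) / β ^ (n + 1) := by
  have h0 : 0 < β := by linarith
  positivity

lemma sm {β : ℝ} (hβ : 1 < β) {x : ℕ → ℕ} (h : ∀ n, x n ≤ 1) :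
    Summable (fun n : ℕ => (x n : ℝ) / β ^ (n + 1)) :=
  Summable.of_nonneg_of_le (term_nonneg hβ x) (term_le hβ h) (geom_hasSum hβ).summable

lemma V_nonneg {β : ℝ} (hβ : 1 < β) (x : ℕ → ℕ) : 0 ≤ betaVal β x :=
  tsum_nonneg (term_nonneg hβ x)

lemma V_le {β : ℝ} (hβ : 1 < β) {x : ℕ → ℕ} (h : ∀ n, x n ≤ 1) : betaVal β x ≤ 1 / (β - 1) := by
  rw [← (geom_hasSum hβ).tsum_eq]
  exact (sm hβ h).tsum_le_tsum (term_le hβ h) (geom_hasSum hβ).summable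

lemma V_lt {β : ℝ} (hβ : 1 < β) {x : ℕ → ℕ} (h : ∀ n, x n ≤ 1) (i : ℕ) (hi : x i = 0) :
    betaVal β x < 1 / (β - 1) := by
  rw [← (geom_hasSum hβ).tsum_eq]
  refine (sm hβ h).tsum_lt_tsum (term_le hβ h) (i := i) ?_ (geom_hasSum hβ).summable
  have h0 : 0 < β := by linarith
  rw [hi]; simp; positivity

lemma V_cpl {β : ℝ} (hβ : 1 < β) {x : ℕ → ℕ} (h : ∀ n, x n ≤ 1) :
    betaVal β (cpl x) = 1 / (β - 1) - betaVal β x := by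
  have := (geom_hasSum hβ).sub (sm hβ h).hasSum
  rw [betaVal, betaVal, ← this.tsum_eq]
  congr 1; funext n
  simp only [cpl]; rw [Nat.cast_sub (h n)]; push_cast; ring

lemma V_step {β : ℝ} (hβ : 1 < β) {x : ℕ → ℕ} (h : ∀ n, x n ≤ 1) :
    betaVal β x = (x 0 + betaVal β (shf 1 x)) / β := by
  have h0 : 0 < β := by linarith
  rw [betaVal, (sm hβ h).tsum_eq_zero_add, betaVal, add_div, ← tsum_div_const]
  congr 1
  · simp
  · congr 1; funext n; simp only [shf]; rw [add_comm 1 n, div_div, ← pow_succ]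

lemma V_step' {β : ℝ} (hβ : 1 < β) {x : ℕ → ℕ} (h : ∀ n, x n ≤ 1) (n : ℕ) :
    betaVal β (shf n x) = (x n + betaVal β (shf (n + 1) x)) / β := by
  rw [V_step hβ (shf_le h n), shf_shf]; simp [shf]

lemma V_prefix {β : ℝ} (hβ : 1 < β) {x y : ℕ → ℕ} (hx : ∀ n, x n ≤ 1) (hy : ∀ n, y n ≤ 1)
    (n : ℕ) (h : ∀ i < n, x i = y i) :
    betaVal β x - betaVal β y = (betaVal β (shf n x) - betaVal β (shf n y)) / β ^ n := by
  have h0 : 0 < β := by linarith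
  induction n with
  | zero => 
    have : ∀ z, shf 0 z = z := fun z => by funext i; simp [shf]
    simp [this]
  | succ n ih =>
    rw [ih (fun i hi => h i (by omega)), V_step' hβ hx n, V_step' hβ hy n, h n (by omega), pow_succ]
    field_simp
    ring

/-- remainders of the greedy algorithm -/
noncomputable def gr (β y : ℝ) : ℕ → ℝ
  | 0 => y
  | n + 1 => β * gr β y n - (if 1 ≤ β * gr β y n then 1 else 0)

/-- greedy digits -/
noncomputable def gd (β y : ℝ) (n : ℕ) : ℕ := if 1 ≤ β * gr β y n then 1 else 0

lemma gd_le (β y : ℝ) (n : ℕ) : gd β y n ≤ 1 := by unfold gd; split_ifs <;> simp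

lemma gr_succ (β y : ℝ) (n : ℕ) : gr β y (n + 1) = β * gr β y n - gd β y n := by
  simp [gr, gd]

lemma gr_mem {β y : ℝ} (hβ : 1 < β) (hβ2 : β < 2) (h0 : 0 ≤ y) (h1 : y ≤ 1 / (β - 1)) (n : ℕ) :
    0 ≤ gr β y n ∧ gr β y n ≤ 1 / (β - 1) := by
  have hb : 0 < β - 1 := by linarith
  induction n with
  | zero => exact ⟨h0, h1⟩
  | succ n ih =>
    obtain ⟨a, b⟩ := ih
    have e : β * (1 / (β - 1)) - 1 = 1 / (β - 1) := by field_simp; ring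
    have f : 1 ≤ 1 / (β - 1) := by rw [le_div_iff₀ hb]; linarith
    have g : β * gr β y n ≤ β * (1 / (β - 1)) := by gcongr
    have g0 : 0 ≤ β * gr β y n := by positivity
    simp only [gr]
    split_ifs with h
    · constructor <;> linarith
    · constructor <;> linarith

lemma exists_exp {β y : ℝ} (hβ : 1 < β) (hβ2 : β < 2) (h0 : 0 ≤ y) (h1 : y ≤ 1 / (β - 1)) :
    ∃ b : ℕ → ℕ, (∀ n, b n ≤ 1) ∧ betaVal β b = y := by
  have hb : 0 < β := by linarith
  refine ⟨gd β y, gd_le β y, ?_⟩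
  have key : ∀ n, ∑ i ∈ Finset.range n, (gd β y i : ℝ) / β ^ (i + 1) = y - gr β y n / β ^ n := by
    intro n
    induction n with
    | zero => simp [gr]
    | succ n ih =>
      rw [Finset.sum_range_succ, ih, gr_succ, pow_succ]
      field_simp
      ring
  have t1 := (sm hβ (gd_le β y)).hasSum.tendsto_sum_nat
  have t2 : Filter.Tendsto (fun n => y - gr β y n / β ^ n) Filter.atTop (nhds y) := by
    have t3 : Filter.Tendsto (fun n => gr β y n / β ^ n) Filter.atTop (nhds 0) := by
      have t4 : Filter.Tendsto (fun n : ℕ => (1 / (β - 1)) * (β⁻¹) ^ n) Filter.atTop (nhds 0) := by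
        simpa using (tendsto_pow_atTop_nhds_zero_of_lt_one (inv_nonneg.2 hb.le)
          (inv_lt_one_of_one_lt₀ hβ)).const_mul (1 / (β - 1))
      refine squeeze_zero (fun n => div_nonneg (gr_mem hβ hβ2 h0 h1 n).1 (by positivity)) (fun n => ?_) t4
      rw [inv_pow, ← div_eq_mul_inv]
      have := (gr_mem hβ hβ2 h0 h1 n).2
      gcongr
    simpa using t3.const_sub y
  simp only [key] at t1
  exact tendsto_nhds_unique t1 t2

lemma cpl_mem {β : ℝ} (hβ : 1 < β) {x : ℕ → ℕ} (h : x ∈ UTilde β) : cpl x ∈ UTilde β := by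
  refine ⟨cpl_le x, fun b hb e => ?_⟩
  have := h.2 (cpl b) (cpl_le b) (by rw [V_cpl hβ hb, e, V_cpl hβ h.1]; ring)
  rw [← this, cpl_cpl hb]

lemma U_zero {β : ℝ} (hβ : 1 < β) (hβ2 : β < 2) {x : ℕ → ℕ} (h : x ∈ UTilde β) (n : ℕ)
    (hn : x n = 0) : betaVal β (shf (n + 1) x) < 1 := by
  by_contra! hc
  have hle := V_le hβ (shf_le h.1 (n + 1))
  obtain ⟨b, hb, hv⟩ := exists_exp (y := betaVal β (shf (n + 1) x) - 1) hβ hβ2 (by linarith) (by linarith)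
  set c : ℕ → ℕ := fun i => if i < n then x i else if i = n then 1 else b (i - (n + 1)) with hc'
  have hc1 : ∀ i, c i ≤ 1 := by
    intro i; simp only [c]; split_ifs
    · exact h.1 i
    · exact le_rfl
    · exact hb _
  have hs : shf (n + 1) c = b := by
    funext i; simp only [shf, c]
    rw [if_neg (by omega), if_neg (by omega)]; congr 1; omega
  have hcn : c n = 1 := by simp [c]
  have hp := V_prefix hβ hc1 h.1 n (fun i hi => by simp [c, hi])
  rw [V_step' hβ hc1 n, V_step' hβ h.1 n, hs, hv, hcn, hn] at hp
  have := h.2 c hc1 (by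
    have : betaVal β c - betaVal β x = 0 := by rw [hp]; simp
    linarith)
  rw [this, hn] at hcn
  omega

lemma shf_cpl (n : ℕ) (x : ℕ → ℕ) : shf n (cpl x) = cpl (shf n x) := rfl

lemma U_iff {β : ℝ} (hβ : 1 < β) (hβ2 : β < 2) (x : ℕ → ℕ) (hx : ∀ n, x n ≤ 1) : x ∈ UTilde β ↔
    ∀ n, (x n = 0 → betaVal β (shf (n + 1) x) < 1) ∧
      (x n = 1 → betaVal β (cpl (shf (n + 1) x)) < 1) := by
  constructor
  · intro h n
    refine ⟨U_zero hβ hβ2 h n, fun hn => ?_⟩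
    have := U_zero hβ hβ2 (cpl_mem hβ h) n (by simp [cpl, hn])
    rwa [shf_cpl] at this
  · intro h
    refine ⟨hx, fun b hb e => ?_⟩
    by_contra hne
    have hex : ∃ n, b n ≠ x n := by
      by_contra! hh; exact hne (funext hh)
    classical
    let n := Nat.find hex
    have hn : b n ≠ x n := Nat.find_spec hex
    have hlt : ∀ i < n, b i = x i := fun i hi => by
      have := Nat.find_min hex hi; push Not at this; exact this
    have hp := V_prefix hβ hb hx n hlt
    have hb0 : 0 < β := by linarith
    rw [e, sub_self, eq_comm, div_eq_zero_iff, V_step' hβ hb n, V_step' hβ hx n] at hp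
    have hp := hp.resolve_right (by positivity)
    rw [← sub_div, div_eq_zero_iff] at hp
    have hp := hp.resolve_right (by positivity)
    have h1 := V_nonneg hβ (shf (n + 1) b)
    have h2 := V_le hβ (shf_le hb (n + 1))
    have c1 := hb n
    have c2 := hx n
    obtain ⟨a0, a1⟩ := h n
    rcases Nat.eq_zero_or_pos (x n) with hz | hz
    · have hb1 : b n = 1 := by omega
      have := a0 hz
      rw [hz, hb1] at hp; push_cast at hp; linarith
    · have hx1 : x n = 1 := by omega
      have hb1 : b n = 0 := by omega
      have := a1 hx1
      rw [V_cpl hβ (shf_le hx _)] at this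
      rw [hx1, hb1] at hp; push_cast at hp; linarith

/-- `t` is lexicographically smaller than `p 0 ... p k` on its first `k+1` digits. -/
def LessP (k : ℕ) (p t : ℕ → ℕ) : Prop := ∃ j ≤ k, (∀ i < j, t i = p i) ∧ t j < p j

/-- local condition -/
def LocP (k : ℕ) (p x : ℕ → ℕ) : Prop :=
  (x 0 = 0 → LessP k p (shf 1 x)) ∧ (x 0 = 1 → LessP k p (cpl (shf 1 x)))

lemma sft_of_local (L : ℕ) (P : (ℕ → ℕ) → Prop)
    (hP : ∀ x y : ℕ → ℕ, (∀ i < L, x i = y i) → P x → P y) :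
    IsSFT01 {x | (∀ n, x n ≤ 1) ∧ ∀ n, P (shf n x)} := by
  refine ⟨{l | ∃ x : ℕ → ℕ, (∀ n, x n ≤ 1) ∧ ¬ P x ∧ l = List.ofFn (fun i : Fin L => x i)}, ?_, ?_⟩
  · refine (Set.finite_range (fun f : Fin L → Fin 2 => List.ofFn (fun i => (f i : ℕ)))).subset ?_
    rintro l ⟨x, hx, -, rfl⟩
    exact ⟨fun i => ⟨x i, by have := hx i; omega⟩, rfl⟩
  · ext a
    simp only [Set.mem_ofPred_eq]
    refine and_congr_right fun ha => ?_
    constructor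
    · rintro h w ⟨x, hx, hnP, rfl⟩ n ho
      refine hnP (hP _ _ (fun i hi => ?_) (h n))
      have := ho ⟨i, by simpa using hi⟩
      simpa [shf] using this
    · intro h n
      by_contra hc
      refine h _ ⟨shf n a, shf_le ha n, hc, rfl⟩ n ?_
      intro i
      rw [List.get_ofFn]
      rfl

lemma LessP_congr {k : ℕ} {p x y : ℕ → ℕ} (h : ∀ i ≤ k, x i = y i) (hx : LessP k p x) :
    LessP k p y := by
  obtain ⟨j, hj, h1, h2⟩ := hx
  exact ⟨j, hj, fun i hi => by rw [← h i (by omega)]; exact h1 i hi, by rw [← h j hj]; exact h2⟩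

lemma LocP_congr {k : ℕ} {p : ℕ → ℕ} (x y : ℕ → ℕ) (h : ∀ i < k + 2, x i = y i)
    (hx : LocP k p x) : LocP k p y := by
  have h0 := h 0 (by omega)
  have hs : ∀ i ≤ k, shf 1 x i = shf 1 y i := fun i hi => h (1 + i) (by omega)
  refine ⟨fun e => LessP_congr hs (hx.1 (h0.trans e)), fun e => LessP_congr ?_ (hx.2 (h0.trans e))⟩
  intro i hi; simp only [cpl]; rw [hs i hi]

/-- if `t` is not smaller than `p` and `1` is only followed by large tails, the value is at least 1 -/
lemma big {β : ℝ} (hβ : 1 < β) {η t : ℕ → ℕ} (hη : ∀ n, η n ≤ 1) (h1 : betaVal β η = 1) (k : ℕ)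
    (hk : betaVal β (shf k η) = 1 / (β * (β - 1))) (ht : ∀ n, t n ≤ 1)
    (hcond : ∀ n, t n = 1 → betaVal β (cpl (shf (n + 1) t)) < 1) (hval : betaVal β t < 1) :
    LessP k (fun i => if i < k then η i else 1) t := by
  have hb0 : 0 < β := by linarith
  have hb1 : 0 < β - 1 := by linarith
  set p : ℕ → ℕ := fun i => if i < k then η i else 1 with hp
  have hpk : p k = 1 := by simp [p]
  have hpi : ∀ i < k, p i = η i := fun i hi => by simp [p, hi]
  by_contra hc
  -- find first difference
  have hne : ∀ n ≤ k + 1, ∀ i < n, t i = p i := by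
    intro n
    induction n with
    | zero => intro _ i hi; omega
    | succ n ih =>
      intro hn i hi
      have ih' := ih (by omega)
      by_cases hin : i < n
      · exact ih' i hin
      have : i = n := by omega
      subst this
      by_contra hd
      have hge : ¬ t i < p i := fun hlt => hc ⟨i, by omega, ih', hlt⟩
      have hti := ht i
      have htp : t i = 1 := by omega
      have hp0 : p i = 0 := by omega
      have hik : i < k := by
        by_contra hh
        have : i = k := by omega
        subst this; omega
      have hηi : η i = 0 := by rw [← hpi i hik]; exact hp0
      have hpre := V_prefix hβ ht hη i (fun j hj => by rw [ih' j hj, hpi j (by omega)])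
      have hcc := hcond i htp
      rw [V_cpl hβ (shf_le ht _)] at hcc
      have hle := V_le hβ (shf_le hη (i + 1))
      rw [V_step' hβ ht i, V_step' hβ hη i, htp, hηi, h1, ← sub_div] at hpre
      have : 0 ≤ betaVal β t - 1 := by
        rw [hpre]; push_cast
        refine div_nonneg (div_nonneg ?_ hb0.le) (by positivity)
        linarith
      linarith
  have hall := hne (k + 1) le_rfl
  have htk : t k = 1 := by rw [hall k (by omega), hpk]
  have hpre := V_prefix hβ ht hη k (fun j hj => by rw [hall j (by omega), hpi j hj])
  have hcc := hcond k htk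
  rw [V_cpl hβ (shf_le ht _)] at hcc
  have e : 1 / (β * (β - 1)) = 1 / (β - 1) / β := by field_simp
  rw [V_step' hβ ht k, hk, htk, h1, e, ← sub_div] at hpre
  have : 0 ≤ betaVal β t - 1 := by
    rw [hpre]; push_cast
    refine div_nonneg (div_nonneg ?_ hb0.le) (by positivity)
    linarith
  linarith

/-- avoiding sequences have small tails after each 0 -/
lemma small {β : ℝ} (hβ : 1 < β) {η x : ℕ → ℕ} (hη : ∀ n, η n ≤ 1) (h1 : betaVal β η = 1) (k : ℕ)
    (hk : betaVal β (shf k η) = 1 / (β * (β - 1))) (hx : ∀ n, x n ≤ 1)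
    (hpos : ∀ n, 0 < betaVal β (shf n η))
    (hcond : ∀ n, x n = 0 → LessP k (fun i => if i < k then η i else 1) (shf (n + 1) x)) (n : ℕ)
    (hn : x n = 0) : betaVal β (shf (n + 1) x) < 1 := by
  have hb0 : 0 < β := by linarith
  have hb1 : 0 < β - 1 := by linarith
  have e : 1 / (β * (β - 1)) = 1 / (β - 1) / β := by field_simp
  -- every tail after a zero has a zero
  have hzero : ∀ n, x n = 0 → ∃ i, shf (n + 1) x i = 0 := by
    intro n hn
    obtain ⟨j, hj, -, h2⟩ := hcond n hn
    refine ⟨j, ?_⟩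
    have : (if j < k then η j else 1) ≤ 1 := by split_ifs; exact hη j; exact le_rfl
    simp only at h2
    omega
  -- one step
  have step : ∀ n, x n = 0 → betaVal β (shf (n + 1) x) < 1 ∨
      ∃ m j, x m = 0 ∧ betaVal β (shf (n + 1) x) - 1
        = (betaVal β (shf (m + 1) x) - 1 - betaVal β (shf (j + 1) η)) / β ^ (j + 1) := by
    intro n hn
    obtain ⟨j, hj, hpre, h2⟩ := hcond n hn
    have ht := shf_le hx (n + 1)
    have hp := V_prefix hβ ht hη j (fun i hi => by have := hpre i hi; simpa [show i < k by omega] using this)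
    rw [h1] at hp
    rcases Nat.lt_or_ge j k with hjk | hjk
    · right
      simp only [hjk, if_true] at h2
      have := hη j
      have hηj : η j = 1 := by omega
      have htj : shf (n + 1) x j = 0 := by omega
      refine ⟨n + 1 + j, j, htj, ?_⟩
      rw [hp, V_step' hβ ht j, V_step' hβ hη j, htj, hηj, shf_shf, pow_succ,
        add_assoc (n + 1) j 1]
      push_cast
      field_simp
      ring
    · left
      have hjk' : j = k := by omega
      subst hjk'
      simp only [lt_irrefl, if_false] at h2
      have htj : shf (n + 1) x j = 0 := by omega
      obtain ⟨i, hi⟩ := hzero (n + 1 + j) htj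
      have hlt := V_lt hβ (shf_le hx _) i hi
      rw [V_step' hβ ht j, htj, hk, shf_shf, ← add_assoc, e, ← sub_div] at hp
      have : betaVal β (shf (n + 1) x) - 1 < 0 := by
        rw [hp]; push_cast
        refine div_neg_of_neg_of_pos (div_neg_of_neg_of_pos ?_ hb0) (by positivity)
        linarith
      linarith
  have bound : ∀ N n, x n = 0 → betaVal β (shf (n + 1) x) - 1 ≤ 1 / (β - 1) / β ^ N := by
    intro N
    induction N with
    | zero => intro n _; have := V_le hβ (shf_le hx (n + 1)); simp; simp at this; linarith
    | succ N ih =>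
      intro n hn
      rcases step n hn with h | ⟨m, j, hm, he⟩
      · have : 0 ≤ 1 / (β - 1) / β ^ (N + 1) := by positivity
        linarith
      · have h3 := ih m hm
        have h4 := V_nonneg hβ (shf (j + 1) η)
        rw [he]
        calc _ ≤ (1 / (β - 1) / β ^ N) / β ^ (j + 1) := by gcongr; linarith
          _ ≤ (1 / (β - 1) / β ^ N) / β := by
            gcongr; exact le_self_pow₀ hβ.le (by omega)
          _ = _ := by rw [pow_succ, div_div]
  have le1 : ∀ n, x n = 0 → betaVal β (shf (n + 1) x) ≤ 1 := by
    intro n hn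
    have t4 : Filter.Tendsto (fun n : ℕ => (1 / (β - 1)) * (β⁻¹) ^ n) Filter.atTop (nhds 0) := by
      simpa using (tendsto_pow_atTop_nhds_zero_of_lt_one (inv_nonneg.2 hb0.le)
        (inv_lt_one_of_one_lt₀ hβ)).const_mul (1 / (β - 1))
    have := ge_of_tendsto' t4 (fun N => by
      rw [inv_pow, ← div_eq_mul_inv]; exact bound N n hn)
    linarith
  rcases step n hn with h | ⟨m, j, hm, he⟩
  · exact h
  · have h3 := le1 m hm
    have h4 := hpos (j + 1)
    have : betaVal β (shf (n + 1) x) - 1 < 0 := by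
      rw [he]
      exact div_neg_of_neg_of_pos (by linarith) (by positivity)
    linarith

/-- if the quasi-greedy orbit of `1` hits `1/(β(β-1))` for the first time,
then `Ũ_β` is a subshift of finite type. -/
theorem statement16 (β : ℝ) (hβ : β ∈ Set.Ioo (1 : ℝ) 2)
    (η : ℕ → ℕ) (hη : QuasiGreedy β η)
    (Q : ℕ → ℝ) (hQ : ∀ n, Q n = betaVal β (fun k => η (n + k)))
    (hhit : HitsFirst β Q (1 / (β * (β - 1)))) :
    IsSFT01 (UTilde β) := by
  obtain ⟨hβ1, hβ2⟩ := hβ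
  obtain ⟨h01, hinf, hval, -⟩ := hη
  obtain ⟨k, -, hk, -⟩ := hhit
  rw [hQ k] at hk
  change betaVal β (shf k η) = _ at hk
  have hpos : ∀ n, 0 < betaVal β (shf n η) := by
    intro n
    obtain ⟨m, hm, h1⟩ := hinf n
    have := V_lt hβ1 (cpl_le (shf n η)) (m - n) (by
      simp only [cpl, shf]; rw [Nat.add_sub_cancel' hm, h1])
    rw [V_cpl hβ1 (shf_le h01 n)] at this
    linarith
  have hmain := sft_of_local (k + 2) (LocP k (fun i => if i < k then η i else 1)) LocP_congr
  convert hmain using 1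
  ext x
  simp only [Set.mem_ofPred_eq]
  constructor
  · intro hx
    have hx1 := hx.1
    have hU := (U_iff hβ1 hβ2 x hx1).1 hx
    have hU' := (U_iff hβ1 hβ2 (cpl x) (cpl_le x)).1 (cpl_mem hβ1 hx)
    refine ⟨hx1, fun n => ⟨fun h0 => ?_, fun h1 => ?_⟩⟩
    · rw [shf_shf]
      refine big hβ1 h01 hval k hk (shf_le hx1 _) (fun i hi => ?_) ((hU n).1 h0)
      rw [shf_shf]
      exact (hU (n + 1 + i)).2 hi
    · rw [shf_shf]
      refine big hβ1 h01 hval k hk (cpl_le _) (fun i hi => ?_) ((hU n).2 h1)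
      rw [← shf_cpl (n + 1), shf_shf]
      exact (hU' (n + 1 + i)).2 hi
  · rintro ⟨hx1, hx⟩
    rw [U_iff hβ1 hβ2 x hx1]
    intro n
    refine ⟨fun h0 => small hβ1 h01 hval k hk hx1 hpos (fun m hm => ?_) n h0, fun h1 => ?_⟩
    · have := (hx m).1 hm
      rwa [shf_shf] at this
    · refine small (x := cpl x) hβ1 h01 hval k hk (cpl_le x) hpos (fun m hm => ?_) n (by simp [cpl, h1])
      have hm1 : x m = 1 := by
        have := hx1 m
        simp only [cpl] at hm
        omega
      have := (hx m).2 hm1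
      rwa [shf_shf] at this
end
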